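/- There exist absolute constants c > 0 and C > 0 such that the following holds for all sufficiently large N. Let A ⊆ [N] be a set with no non-zero square differences and density α = |A|/N with 0 < α ≤ e^{−e}, and set ν = exp(−c·log(1/α)/log log(1/α)). Then either (1) log(1/α) ≥ c·(log N)/(log log N), or (2) there exists an integer N' ≥ c·α^C·N and a set A' ⊆ [N'] with no non-zero square differences whose density α' = |A'|/N' satisfies α' ≥ (1 + ν/20)·α. -/

import Mathlib

/-- `A` has no non-zero square differences. -/
def NoSquareDiff (A : Finset ℕ) : Prop :=
  ∀ a ∈ A, ∀ b ∈ A, ∀ n : ℕ, 0 < n → a ≠ b + n ^ 2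

/-! Let `A ⊆ [N]` have density `α` and no square differences. If no long progression whose common
difference is a square carries a density increment, the absence of square differences makes the
correlation of the balanced function `1_A - α 1_[N]` along the squares about `-α²`. The quadratic
Weyl sum is only large near fractions with small denominator `q`, where its size is `q^(-1/2)`, so
by the circle method the Fourier mass of some reflected window of `A` at such fractions, weighted by
`q^(-1/2)`, is large, and it is concentrated on a dyadic block `Q ≤ q < 2Q` of denominators.

Following Bloom and Maynard, this is contradicted by high moments of the projections of the window
to the frequencies of denominator `q`. A product of such projections only has a non-zero mean when
each denominator divides the least common multiple of the others; a Finner-type inequality bounds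
the mean of each such product and divisor moments bound their number. With `L = log (1 / α)`, a
moment of bounded order forces `Q ≤ exp (κ L)` for a small constant `κ`, and a moment of order a
small multiple of `log L` then excludes the remaining `Q`. -/

open Finset

/-! ### Moments of the divisor function -/

theorem card_divisors_mul_le (m n : ℕ) :
    (m * n).divisors.card ≤ m.divisors.card * n.divisors.card := by
  rw [Nat.divisors_mul]
  exact card_mul_le

theorem sum_Icc_sum_divisorsAntidiagonal_le {f : ℕ → ℝ} (hf : ∀ n, 0 ≤ f n) (X : ℕ) :
    ∑ n ∈ Icc 1 X, ∑ x ∈ n.divisorsAntidiagonal, f x.1 * f x.2 ≤ (∑ n ∈ Icc 1 X, f n) ^ 2 := by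
  calc ∑ n ∈ Icc 1 X, ∑ x ∈ n.divisorsAntidiagonal, f x.1 * f x.2
      = ∑ n ∈ Icc 1 X, ∑ x ∈ (Icc 1 X ×ˢ Icc 1 X).filter (fun x => x.1 * x.2 = n),
          f x.1 * f x.2 := by
        refine sum_congr rfl fun n hn => ?_
        obtain ⟨hn1, hnX⟩ := mem_Icc.1 hn
        rw [Nat.divisorsAntidiagonal_eq_prod_filter_of_le (by lia) hnX]
        rfl
    _ ≤ ∑ x ∈ Icc 1 X ×ˢ Icc 1 X, f x.1 * f x.2 :=
        sum_fiberwise_le_sum_of_sum_fiber_nonneg fun _ _ =>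
          sum_nonneg fun _ _ => mul_nonneg (hf _) (hf _)
    _ = (∑ n ∈ Icc 1 X, f n) ^ 2 := by rw [sq, sum_mul_sum, sum_product]

theorem card_divisors_pow_succ_div_le (j n : ℕ) :
    (n.divisors.card : ℝ) ^ (j + 1) / n ≤ ∑ x ∈ n.divisorsAntidiagonal,
      ((x.1.divisors.card : ℝ) ^ j / x.1) * ((x.2.divisors.card : ℝ) ^ j / x.2) := by
  have hcard : n.divisorsAntidiagonal.card = n.divisors.card := by
    rw [← Nat.map_div_right_divisors, card_map]
  calc (n.divisors.card : ℝ) ^ (j + 1) / n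
      = ∑ _x ∈ n.divisorsAntidiagonal, (n.divisors.card : ℝ) ^ j / n := by
        rw [sum_const, nsmul_eq_mul, hcard]
        ring
    _ ≤ _ := by
        refine sum_le_sum fun x hx => ?_
        rw [div_mul_div_comm, ← mul_pow, ← (Nat.mem_divisorsAntidiagonal.1 hx).1]
        push_cast
        gcongr
        exact_mod_cast card_divisors_mul_le x.1 x.2

theorem sum_card_divisors_pow_div_le (j X : ℕ) :
    ∑ n ∈ Icc 1 X, (n.divisors.card : ℝ) ^ j / n ≤ (1 + Real.log X) ^ 2 ^ j := by
  induction j with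
  | zero =>
    have h := harmonic_le_one_add_log X
    rw [harmonic_eq_sum_Icc] at h
    push_cast at h
    simpa using h
  | succ j ih =>
    have h0 : 0 ≤ ∑ n ∈ Icc 1 X, (n.divisors.card : ℝ) ^ j / n :=
      sum_nonneg fun n _ => by positivity
    calc ∑ n ∈ Icc 1 X, (n.divisors.card : ℝ) ^ (j + 1) / n
        ≤ ∑ n ∈ Icc 1 X, ∑ x ∈ n.divisorsAntidiagonal,
            ((x.1.divisors.card : ℝ) ^ j / x.1) * ((x.2.divisors.card : ℝ) ^ j / x.2) :=
          sum_le_sum fun n _ => card_divisors_pow_succ_div_le j n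
      _ ≤ (∑ n ∈ Icc 1 X, (n.divisors.card : ℝ) ^ j / n) ^ 2 :=
          sum_Icc_sum_divisorsAntidiagonal_le (f := fun n => (n.divisors.card : ℝ) ^ j / n)
            (fun n => by positivity) X
      _ ≤ ((1 + Real.log X) ^ 2 ^ j) ^ 2 := pow_le_pow_left₀ h0 ih 2
      _ = (1 + Real.log X) ^ 2 ^ (j + 1) := by rw [← pow_mul, pow_succ]

theorem card_divisors_pow_le (j : ℕ) {n : ℕ} (hn : 1 ≤ n) :
    (n.divisors.card : ℝ) ^ j ≤ n * (1 + Real.log n) ^ 2 ^ j := by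
  rw [← div_le_iff₀' (by exact_mod_cast hn)]
  exact (single_le_sum (f := fun m : ℕ => (m.divisors.card : ℝ) ^ j / m)
    (fun m _ => by positivity) (mem_Icc.2 ⟨hn, le_rfl⟩)).trans (sum_card_divisors_pow_div_le j n)

/-! ### A Finner inequality for periodic functions -/

theorem sum_range_mul_eq {M : Type*} [AddCommMonoid M] (p l : ℕ) (F : ℕ → M) :
    ∑ x ∈ range (p * l), F x = ∑ y ∈ range l, ∑ j ∈ range p, F (y + l * j) := by
  induction p with
  | zero => simp
  | succ p ih =>
    rw [Nat.succ_mul, sum_range_add, ih]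
    simp only [sum_range_succ, sum_add_distrib, mul_comm p l, add_comm (l * p)]

theorem sum_range_mul_of_coprime {M : Type*} [AddCommMonoid M] {p u : ℕ} (hp : 0 < p)
    (hu : u.Coprime p) {G : ℕ → M} (hG : Function.Periodic G p) :
    ∑ j ∈ range p, G (u * j) = ∑ j ∈ range p, G j := by
  have hmaps : Set.MapsTo (fun j => u * j % p) (range p : Set ℕ) (range p : Set ℕ) :=
    fun j _ => mem_coe.2 (mem_range.2 (Nat.mod_lt _ hp))
  have hinj : Set.InjOn (fun j => u * j % p) (range p : Set ℕ) := fun a ha b hb hab =>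
    (Nat.ModEq.cancel_left_of_coprime hu.symm hab).eq_of_lt_of_lt
      (mem_range.1 (mem_coe.1 ha)) (mem_range.1 (mem_coe.1 hb))
  exact sum_nbij _ hmaps hinj (surjOn_of_injOn_of_card_le _ hmaps hinj le_rfl)
    fun j _ => (hG.map_mod_nat _).symm

theorem periodic_of_dvd {M : Type*} {F : ℕ → M} {q l : ℕ} (hF : Function.Periodic F q)
    (h : q ∣ l) : Function.Periodic F l := by
  obtain ⟨u, rfl⟩ := h
  rw [mul_comm]
  exact hF.nat_mul u

/-- The `ℓ²` norm of `h` along the progression `y, y + l, …, y + (p - 1) l`, as a function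
of `y`. -/
noncomputable def fiberNorm (p l : ℕ) (h : ℕ → ℝ) (y : ℕ) : ℝ :=
  √(∑ j ∈ range p, h (y + l * j) ^ 2)

theorem fiberNorm_nonneg (p l : ℕ) (h : ℕ → ℝ) (y : ℕ) : 0 ≤ fiberNorm p l h y :=
  Real.sqrt_nonneg _

theorem fiberNorm_periodic {p l : ℕ} {h : ℕ → ℝ} (hh : Function.Periodic h (p * l)) :
    Function.Periodic (fiberNorm p l h) l := by
  intro y
  have hshift : ∑ j ∈ range p, h (y + l + l * j) ^ 2 + h y ^ 2 =
      ∑ j ∈ range p, h (y + l * j) ^ 2 + h y ^ 2 := by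
    calc ∑ j ∈ range p, h (y + l + l * j) ^ 2 + h y ^ 2
        = ∑ j ∈ range (p + 1), h (y + l * j) ^ 2 := by
          rw [sum_range_succ']
          refine congr_arg₂ _ (sum_congr rfl fun j _ => ?_) (by rw [mul_zero, add_zero])
          rw [add_assoc, mul_add_one, add_comm l]
      _ = _ := by rw [sum_range_succ, mul_comm l p, hh y]
  rw [fiberNorm, fiberNorm, add_right_cancel hshift]

theorem sum_range_fiberNorm_sq (p l : ℕ) (h : ℕ → ℝ) :
    ∑ y ∈ range l, fiberNorm p l h y ^ 2 = ∑ x ∈ range (p * l), h x ^ 2 := by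
  rw [sum_range_mul_eq]
  exact sum_congr rfl fun y _ => Real.sq_sqrt (sum_nonneg fun j _ => sq_nonneg _)

theorem fiberNorm_mul_of_coprime {p l u : ℕ} (hp : 0 < p) (hu : u.Coprime p) {h : ℕ → ℝ}
    (hh : Function.Periodic h (p * l)) (y : ℕ) :
    fiberNorm p (l * u) h y = fiberNorm p l h y := by
  have hper : Function.Periodic (fun j => h (y + l * j) ^ 2) p := fun j => by
    simp only [mul_add, ← add_assoc, mul_comm l p, hh _]
  simp only [fiberNorm, mul_assoc, sum_range_mul_of_coprime hp hu hper]

theorem sum_prod_le_prod_sqrt {ι κ : Type*} {S : Finset ι} (hS : S.Nontrivial)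
    (T : Finset κ) {a : ι → κ → ℝ} (ha : ∀ i j, 0 ≤ a i j) :
    ∑ j ∈ T, ∏ i ∈ S, a i j ≤ ∏ i ∈ S, √(∑ j ∈ T, a i j ^ 2) := by
  classical
  obtain ⟨i₀, h₀, i₁, h₁, hne⟩ := hS
  set R := (S.erase i₀).erase i₁
  have hsplit : ∀ f : ι → ℝ, ∏ i ∈ S, f i = f i₀ * f i₁ * ∏ i ∈ R, f i := fun f => by
    rw [← mul_prod_erase S f h₀, ← mul_prod_erase (S.erase i₀) f (mem_erase.2 ⟨hne.symm, h₁⟩),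
      mul_assoc]
  have hle : ∀ i, ∀ j ∈ T, a i j ≤ √(∑ j ∈ T, a i j ^ 2) := fun i j hj =>
    Real.le_sqrt_of_sq_le (single_le_sum (f := fun j => a i j ^ 2) (fun j _ => sq_nonneg _) hj)
  rw [hsplit]
  calc ∑ j ∈ T, ∏ i ∈ S, a i j
      ≤ ∑ j ∈ T, a i₀ j * a i₁ j * ∏ i ∈ R, √(∑ j ∈ T, a i j ^ 2) := by
        refine sum_le_sum fun j hj => ?_
        rw [hsplit]
        exact mul_le_mul_of_nonneg_left (prod_le_prod (fun i _ => ha i j) fun i _ => hle i j hj)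
          (mul_nonneg (ha i₀ j) (ha i₁ j))
    _ = (∑ j ∈ T, a i₀ j * a i₁ j) * ∏ i ∈ R, √(∑ j ∈ T, a i j ^ 2) := by rw [sum_mul]
    _ ≤ _ := by
        gcongr
        exact Real.sum_mul_le_sqrt_mul_sqrt _ _ _

/-- The period left after a factor `p` is removed from a period divisible by `p ^ e`; other
periods are unchanged. -/
def collapsePeriod (p e q : ℕ) : ℕ := if p ^ e ∣ q then q / p else q

/-- The function of period `collapsePeriod p e q` obtained from a function `h` of period `q` by
taking `ℓ²` norms over the fibres of the reduction of the period. -/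
noncomputable def fiberCollapse (p e q : ℕ) (h : ℕ → ℝ) : ℕ → ℝ :=
  if p ^ e ∣ q then fiberNorm p (q / p) h else h

section Collapse

variable {p w m q : ℕ}

theorem dvd_of_not_pow_succ_dvd (hp : p.Prime) (hq : q ∣ p ^ (w + 1) * m)
    (h : ¬ p ^ (w + 1) ∣ q) : q ∣ p ^ w * m := by
  obtain ⟨a, b, ha, hb, rfl⟩ := Nat.dvd_mul.1 hq
  obtain ⟨j, hj, rfl⟩ := (Nat.dvd_prime_pow hp).1 ha
  have hjw : j ≠ w + 1 := by
    rintro rfl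
    exact h (dvd_mul_right _ _)
  exact mul_dvd_mul (pow_dvd_pow p (by lia)) hb

theorem exists_eq_div_mul_coprime (hp : p.Prime) (hpm : ¬ p ∣ m) (hq : q ∣ p ^ (w + 1) * m)
    (h : p ^ (w + 1) ∣ q) : ∃ u, p ^ w * m = q / p * u ∧ u.Coprime p := by
  obtain ⟨b, rfl⟩ := h
  obtain ⟨u, rfl⟩ := Nat.dvd_of_mul_dvd_mul_left (pow_pos hp.pos _) hq
  refine ⟨u, ?_, ((Nat.Prime.coprime_iff_not_dvd hp).2 fun hpu => hpm (hpu.mul_left b)).symm⟩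
  rw [pow_succ', mul_assoc, Nat.mul_div_cancel_left _ hp.pos, mul_assoc]

theorem mul_div_of_pow_succ_dvd (h : p ^ (w + 1) ∣ q) : p * (q / p) = q :=
  Nat.mul_div_cancel' ((dvd_pow_self p w.succ_ne_zero).trans h)

theorem pow_dvd_div_of_pow_dvd (hp : p.Prime) (hpm : ¬ p ∣ m) (h : p ^ (w + 1) ∣ q) {r e : ℕ}
    (hr : r.Prime) (he : r ^ e ∣ p ^ w * m) (hq : r ^ e ∣ q) : r ^ e ∣ q / p := by
  rcases eq_or_ne r p with rfl | hrp
  · have hew : e ≤ w := by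
      by_contra! hcon
      have hdvd : r ^ w * r ∣ r ^ w * m := (pow_succ r w) ▸ (pow_dvd_pow r hcon).trans he
      exact hpm (Nat.dvd_of_mul_dvd_mul_left (pow_pos hp.pos _) hdvd)
    rw [← mul_div_of_pow_succ_dvd h, pow_succ'] at h
    exact (pow_dvd_pow r hew).trans (Nat.dvd_of_mul_dvd_mul_left hp.pos h)
  · rw [← mul_div_of_pow_succ_dvd h] at hq
    exact (((Nat.coprime_primes hr hp).2 hrp).pow_left e).dvd_of_dvd_mul_left hq

theorem collapsePeriod_dvd (hp : p.Prime) (hpm : ¬ p ∣ m) (hq : q ∣ p ^ (w + 1) * m) :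
    collapsePeriod p (w + 1) q ∣ p ^ w * m := by
  unfold collapsePeriod
  split_ifs with h
  · obtain ⟨u, hu, -⟩ := exists_eq_div_mul_coprime hp hpm hq h
    exact ⟨u, hu⟩
  · exact dvd_of_not_pow_succ_dvd hp hq h

theorem pow_dvd_collapsePeriod (hp : p.Prime) (hpm : ¬ p ∣ m) {r e : ℕ} (hr : r.Prime)
    (he : r ^ e ∣ p ^ w * m) (hq : r ^ e ∣ q) : r ^ e ∣ collapsePeriod p (w + 1) q := by
  unfold collapsePeriod
  split_ifs with h
  · exact pow_dvd_div_of_pow_dvd hp hpm h hr he hq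
  · exact hq

variable {h : ℕ → ℝ}

theorem fiberCollapse_nonneg (p e q : ℕ) (h0 : ∀ x, 0 ≤ h x) (y : ℕ) :
    0 ≤ fiberCollapse p e q h y := by
  unfold fiberCollapse
  split_ifs
  · exact fiberNorm_nonneg _ _ _ _
  · exact h0 y

theorem fiberCollapse_periodic (hh : Function.Periodic h q) :
    Function.Periodic (fiberCollapse p (w + 1) q h) (collapsePeriod p (w + 1) q) := by
  unfold fiberCollapse collapsePeriod
  split_ifs with hdvd
  · exact fiberNorm_periodic (by rwa [mul_div_of_pow_succ_dvd hdvd])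
  · exact hh

theorem sum_range_fiberCollapse_sq (p w q : ℕ) (h : ℕ → ℝ) :
    ∑ y ∈ range (collapsePeriod p (w + 1) q), fiberCollapse p (w + 1) q h y ^ 2 =
      ∑ y ∈ range q, h y ^ 2 := by
  unfold fiberCollapse collapsePeriod
  split_ifs with hdvd
  · rw [sum_range_fiberNorm_sq, mul_div_of_pow_succ_dvd hdvd]
  · rfl

theorem sum_prod_le_prod_fiberCollapse {ι : Type*} [Fintype ι] (hp : p.Prime)
    (hpm : ¬ p ∣ m) {q : ι → ℕ} {h : ι → ℕ → ℝ} (hq : ∀ i, q i ∣ p ^ (w + 1) * m)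
    (h0 : ∀ i x, 0 ≤ h i x) (hper : ∀ i, Function.Periodic (h i) (q i))
    (hcov : (univ.filter fun i => p ^ (w + 1) ∣ q i).Nontrivial) (y : ℕ) :
    ∑ j ∈ range p, ∏ i, h i (y + p ^ w * m * j) ≤ ∏ i, fiberCollapse p (w + 1) (q i) (h i) y := by
  classical
  set S := univ.filter fun i => p ^ (w + 1) ∣ q i
  set R := univ.filter fun i => ¬ p ^ (w + 1) ∣ q i
  have hsplit : ∀ f : ι → ℝ, ∏ i, f i = (∏ i ∈ S, f i) * ∏ i ∈ R, f i := fun f =>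
    (prod_filter_mul_prod_filter_not _ _ _).symm
  have hR : ∀ i ∈ R, ∀ j, h i (y + p ^ w * m * j) = fiberCollapse p (w + 1) (q i) (h i) y := by
    intro i hi j
    have hi' := (mem_filter.1 hi).2
    rw [fiberCollapse, if_neg hi']
    exact periodic_of_dvd (hper i) ((dvd_of_not_pow_succ_dvd hp (hq i) hi').mul_right j) y
  have hS : ∀ i ∈ S, √(∑ j ∈ range p, h i (y + p ^ w * m * j) ^ 2) =
      fiberCollapse p (w + 1) (q i) (h i) y := by
    intro i hi
    have hi' := (mem_filter.1 hi).2
    obtain ⟨u, hu, hup⟩ := exists_eq_div_mul_coprime hp hpm (hq i) hi'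
    rw [fiberCollapse, if_pos hi', hu]
    exact fiberNorm_mul_of_coprime hp.pos hup
      (by rw [mul_div_of_pow_succ_dvd hi']; exact hper i) y
  calc ∑ j ∈ range p, ∏ i, h i (y + p ^ w * m * j)
      = (∑ j ∈ range p, ∏ i ∈ S, h i (y + p ^ w * m * j)) *
          ∏ i ∈ R, fiberCollapse p (w + 1) (q i) (h i) y := by
        rw [sum_mul]
        exact sum_congr rfl fun j _ => by rw [hsplit, prod_congr rfl fun i hi => hR i hi j]
    _ ≤ (∏ i ∈ S, √(∑ j ∈ range p, h i (y + p ^ w * m * j) ^ 2)) *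
          ∏ i ∈ R, fiberCollapse p (w + 1) (q i) (h i) y :=
        mul_le_mul_of_nonneg_right (sum_prod_le_prod_sqrt hcov _ fun i j => h0 i _)
          (prod_nonneg fun i _ => fiberCollapse_nonneg _ _ _ (h0 i) y)
    _ = ∏ i, fiberCollapse p (w + 1) (q i) (h i) y := by rw [prod_congr rfl hS, ← hsplit]

end Collapse

theorem sum_prod_le_prod_sqrt_of_periodic {ι : Type*} [Fintype ι] {l : ℕ}
    (hl : l ≠ 0) {q : ι → ℕ} {h : ι → ℕ → ℝ} (hq : ∀ i, q i ∣ l) (h0 : ∀ i x, 0 ≤ h i x)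
    (hper : ∀ i, Function.Periodic (h i) (q i))
    (hcov : ∀ p e : ℕ, p.Prime → 1 ≤ e → p ^ e ∣ l →
      (univ.filter fun i => p ^ e ∣ q i).Nontrivial) :
    ∑ x ∈ range l, ∏ i, h i x ≤ ∏ i, √(∑ y ∈ range (q i), h i y ^ 2) := by
  induction l using Nat.strong_induction_on generalizing q h with
  | _ l ih =>
  rcases eq_or_ne l 1 with rfl | hl1
  · simp only [Nat.dvd_one.1 (hq _), sum_range_one]
    exact prod_le_prod (fun i _ => h0 i 0) fun i _ => (Real.sqrt_sq (h0 i 0)).ge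
  obtain ⟨p, hp, hpl⟩ := Nat.exists_prime_and_dvd hl1
  obtain ⟨v, m, hpm, rfl⟩ := Nat.exists_eq_pow_mul_and_not_dvd hl p hp.ne_one
  obtain ⟨w, rfl⟩ : ∃ w, v = w + 1 := Nat.exists_eq_succ_of_ne_zero <| by
    rintro rfl
    rw [pow_zero, one_mul] at hpl
    exact hpm hpl
  have hlp : p ^ (w + 1) * m = p * (p ^ w * m) := by ring
  have hl' : p ^ w * m ≠ 0 := right_ne_zero_of_mul (hlp ▸ hl)
  have hlt : p ^ w * m < p ^ (w + 1) * m :=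
    hlp ▸ lt_mul_of_one_lt_left (Nat.pos_of_ne_zero hl') hp.one_lt
  calc ∑ x ∈ range (p ^ (w + 1) * m), ∏ i, h i x
      = ∑ y ∈ range (p ^ w * m), ∑ j ∈ range p, ∏ i, h i (y + p ^ w * m * j) := by
        rw [hlp, sum_range_mul_eq]
    _ ≤ ∑ y ∈ range (p ^ w * m), ∏ i, fiberCollapse p (w + 1) (q i) (h i) y :=
        sum_le_sum fun y _ => sum_prod_le_prod_fiberCollapse hp hpm hq h0 hper
          (hcov p (w + 1) hp (Nat.succ_pos w) (dvd_mul_right _ _)) y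
    _ ≤ ∏ i, √(∑ y ∈ range (collapsePeriod p (w + 1) (q i)),
          fiberCollapse p (w + 1) (q i) (h i) y ^ 2) :=
        ih _ hlt hl' (fun i => collapsePeriod_dvd hp hpm (hq i))
          (fun i => fiberCollapse_nonneg _ _ _ (h0 i)) (fun i => fiberCollapse_periodic (hper i))
          fun r e hr he hdvd => (hcov r e hr he (hdvd.trans (hlp ▸ dvd_mul_left _ _))).mono
            (monotone_filter_right _ fun i _ => pow_dvd_collapsePeriod hp hpm hr hdvd)
    _ = ∏ i, √(∑ y ∈ range (q i), h i y ^ 2) := by simp only [sum_range_fiberCollapse_sq]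

/-! ### Admissible tuples -/

theorem pow_dvd_finset_lcm {ι : Type*} {p e : ℕ} (hp : p.Prime) (he : e ≠ 0) {s : Finset ι}
    {f : ι → ℕ} (hf : ∀ i ∈ s, f i ≠ 0) : p ^ e ∣ s.lcm f ↔ ∃ i ∈ s, p ^ e ∣ f i := by
  classical
  refine ⟨fun h => ?_, fun ⟨i, hi, h⟩ => h.trans (dvd_lcm hi)⟩
  induction s using Finset.induction_on with
  | empty => simp [hp.ne_one, he] at h
  | insert a s _ ih =>
    have ha : f a ≠ 0 := hf a (mem_insert_self _ _)
    have hs : ∀ i ∈ s, f i ≠ 0 := fun i hi => hf i (mem_insert_of_mem hi)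
    have hl : s.lcm f ≠ 0 := lcm_ne_zero_iff.2 hs
    rw [lcm_insert] at h
    change p ^ e ∣ Nat.lcm (f a) (s.lcm f) at h
    rw [hp.pow_dvd_iff_le_factorization (Nat.lcm_ne_zero ha hl), Nat.factorization_lcm ha hl,
      Finsupp.sup_apply, le_sup_iff, ← hp.pow_dvd_iff_le_factorization ha,
      ← hp.pow_dvd_iff_le_factorization hl] at h
    rcases h with h | h
    · exact ⟨a, mem_insert_self _ _, h⟩
    · obtain ⟨i, hi, hdvd⟩ := ih hs h
      exact ⟨i, mem_insert_of_mem hi, hdvd⟩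

theorem lcm_le_pow_card {ι : Type*} {s : Finset ι} {t : ι → ℕ} (h0 : ∀ i ∈ s, t i ≠ 0) {Z : ℕ}
    (hZ : ∀ i ∈ s, t i ≤ Z) : s.lcm t ≤ Z ^ #s :=
  (Nat.le_of_dvd (prod_pos fun i hi => Nat.pos_of_ne_zero (h0 i hi)) (lcm_dvd_prod _ _)).trans
    (prod_le_pow_card _ _ _ hZ)

/-- A family of moduli is admissible when each of its entries divides the least common multiple of
the other ones. Only admissible families contribute to the moments of a sum of functions which
are periodic to these moduli and have vanishing sums along nontrivial progressions. -/
def Admissible {ι : Type*} [Fintype ι] [DecidableEq ι] (t : ι → ℕ) : Prop :=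
  ∀ i, t i ∣ (univ.erase i).lcm t

namespace Admissible

variable {ι : Type*} [Fintype ι] [DecidableEq ι] {t : ι → ℕ}

noncomputable instance : DecidablePred (Admissible (ι := ι)) := Classical.decPred _

theorem nontrivial_filter_dvd (ht : Admissible t) (h0 : ∀ i, t i ≠ 0) {p e : ℕ} (hp : p.Prime)
    (he : e ≠ 0) (h : p ^ e ∣ univ.lcm t) : (univ.filter fun i => p ^ e ∣ t i).Nontrivial := by
  obtain ⟨i, -, hi⟩ := (pow_dvd_finset_lcm hp he fun i _ => h0 i).1 h
  obtain ⟨j, hj, hj'⟩ := (pow_dvd_finset_lcm hp he fun i _ => h0 i).1 (hi.trans (ht i))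
  exact ⟨i, by simpa using hi, j, by simpa using hj', (ne_of_mem_erase hj).symm⟩

theorem lcm_sq_dvd_prod (ht : Admissible t) (h0 : ∀ i, t i ≠ 0) : univ.lcm t ^ 2 ∣ ∏ i, t i := by
  have hl : univ.lcm t ≠ 0 := lcm_ne_zero_iff.2 fun i _ => h0 i
  rw [← Nat.factorization_prime_le_iff_dvd (pow_ne_zero 2 hl) (prod_ne_zero_iff.2 fun i _ => h0 i)]
  intro p hp
  rw [Nat.factorization_pow, Nat.factorization_prod fun i _ => h0 i, Finsupp.smul_apply,
    Finset.sum_apply', smul_eq_mul]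
  rcases eq_or_ne ((univ.lcm t).factorization p) 0 with h | h
  · simp [h]
  obtain ⟨i, hi, j, hj, hij⟩ := ht.nontrivial_filter_dvd h0 hp h
    ((hp.pow_dvd_iff_le_factorization hl).2 le_rfl)
  simp only [coe_filter, mem_univ, true_and, Set.mem_ofPred_eq,
    hp.pow_dvd_iff_le_factorization (h0 _)] at hi hj
  have := sum_le_sum_of_subset (f := fun i => (t i).factorization p) (subset_univ {i, j})
  rw [sum_pair hij] at this
  omega

theorem lcm_sq_le_prod (ht : Admissible t) (h0 : ∀ i, t i ≠ 0) : univ.lcm t ^ 2 ≤ ∏ i, t i :=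
  Nat.le_of_dvd (prod_pos fun i _ => Nat.pos_of_ne_zero (h0 i)) (ht.lcm_sq_dvd_prod h0)

theorem lcm_le {k : ℕ} {t : Fin (2 * k) → ℕ} (ht : Admissible t) (h0 : ∀ i, t i ≠ 0) {Z : ℕ}
    (hZ : ∀ i, t i ≤ Z) : univ.lcm t ≤ Z ^ k := by
  refine (Nat.pow_le_pow_iff_left two_ne_zero).1 ((ht.lcm_sq_le_prod h0).trans ?_)
  calc ∏ i, t i ≤ Z ^ (2 * k) := by simpa using prod_le_pow_card univ t Z fun i _ => hZ i
    _ = (Z ^ k) ^ 2 := by rw [← pow_mul, mul_comm k]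

end Admissible

/-- The admissible `n`-tuples with entries in `𝒬`. -/
noncomputable def admissibleTuples (n : ℕ) (𝒬 : Finset ℕ) : Finset (Fin n → ℕ) :=
  (Fintype.piFinset fun _ => 𝒬).filter Admissible

theorem mem_admissibleTuples {n : ℕ} {𝒬 : Finset ℕ} {t : Fin n → ℕ} :
    t ∈ admissibleTuples n 𝒬 ↔ (∀ i, t i ∈ 𝒬) ∧ Admissible t := by
  simp [admissibleTuples]

/-! ### Moments of sums of periodic functions -/

theorem sum_range_add_of_periodic {M : Type*} [AddCommGroup M] {F : ℕ → M} {l : ℕ}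
    (hF : Function.Periodic F l) (a : ℕ) :
    ∑ x ∈ range l, F (x + a) = ∑ x ∈ range l, F x := by
  induction a with
  | zero => simp
  | succ a ih =>
    have hwrap : F (l + a) = F (0 + a) := by rw [add_comm l, hF, zero_add]
    have h := (sum_range_succ' (fun j => F (j + a)) l).symm.trans
      (sum_range_succ (fun j => F (j + a)) l)
    rw [hwrap, add_left_inj] at h
    rw [← ih, ← h]
    exact sum_congr rfl fun j _ => congrArg F (by ring)

theorem sum_range_mul_of_periodic {F : ℕ → ℝ} {l : ℕ} (hF : Function.Periodic F l) (m : ℕ) :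
    ∑ x ∈ range (l * m), F x = m * ∑ x ∈ range l, F x := by
  rw [mul_comm, sum_range_mul_eq, mul_sum]
  refine sum_congr rfl fun y _ => ?_
  rw [sum_congr rfl fun j _ => periodic_of_dvd hF (dvd_mul_right l j) y, sum_const, card_range,
    nsmul_eq_mul]

theorem abs_sum_range_le_of_periodic {F : ℕ → ℝ} {l : ℕ} (hl : 0 < l)
    (hF : Function.Periodic F l) {U : ℝ} (hU : ∀ x, |F x| ≤ U) (X : ℕ) :
    |∑ x ∈ range X, F x| ≤ X / l * |∑ x ∈ range l, F x| + l * U := by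
  have hU0 : 0 ≤ U := (abs_nonneg _).trans (hU 0)
  rw [← Nat.div_add_mod X l, sum_range_add, sum_range_mul_of_periodic hF, Nat.div_add_mod]
  refine (abs_add_le _ _).trans (add_le_add ?_ ?_)
  · rw [abs_mul, Nat.abs_cast]
    exact mul_le_mul_of_nonneg_right Nat.cast_div_le (abs_nonneg _)
  · calc |∑ x ∈ range (X % l), F (l * (X / l) + x)|
        ≤ ∑ _x ∈ range (X % l), U :=
          (abs_sum_le_sum_abs _ _).trans (sum_le_sum fun x _ => hU _)
      _ = (X % l : ℕ) * U := by rw [sum_const, card_range, nsmul_eq_mul]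
      _ ≤ l * U := mul_le_mul_of_nonneg_right (mod_cast (Nat.mod_lt X hl).le) hU0

section Correlations

variable {ι : Type*} {t : ι → ℕ} {h : ι → ℕ → ℝ}

theorem periodic_prod_lcm (s : Finset ι) (hper : ∀ i, Function.Periodic (h i) (t i)) :
    Function.Periodic (fun x => ∏ i ∈ s, h i x) (s.lcm t) := fun x =>
  prod_congr rfl fun i hi => periodic_of_dvd (hper i) (dvd_lcm hi) x

variable [Fintype ι] [DecidableEq ι]

-- Averaging over the shifts by multiples of the lcm `l₁` of the other moduli only affects the
-- factor `h i`, whose sum along the progression of difference `l₁` vanishes.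
theorem sum_prod_eq_zero_of_not_admissible (h0 : ∀ i, t i ≠ 0)
    (hper : ∀ i, Function.Periodic (h i) (t i))
    (hvan : ∀ i d x, ¬ t i ∣ d → ∑ j ∈ range (t i), h i (x + d * j) = 0)
    (ht : ¬ Admissible t) : ∑ x ∈ range (univ.lcm t), ∏ i, h i x = 0 := by
  simp only [Admissible, not_forall] at ht
  obtain ⟨i, hi⟩ := ht
  set l₁ := (univ.erase i).lcm t
  refine (mul_eq_zero_iff_left (Nat.cast_ne_zero.2 (h0 i) : (t i : ℝ) ≠ 0)).1 ?_
  calc (t i : ℝ) * ∑ x ∈ range (univ.lcm t), ∏ i, h i x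
      = ∑ j ∈ range (t i), ∑ x ∈ range (univ.lcm t), ∏ i, h i (x + l₁ * j) := by
        rw [sum_congr rfl fun j _ =>
          sum_range_add_of_periodic (periodic_prod_lcm univ hper) (l₁ * j)]
        simp
    _ = ∑ x ∈ range (univ.lcm t), (∏ i' ∈ univ.erase i, h i' x) *
          ∑ j ∈ range (t i), h i (x + l₁ * j) := by
        rw [sum_comm]
        refine sum_congr rfl fun x _ => ?_
        rw [mul_sum]
        refine sum_congr rfl fun j _ => ?_
        rw [← mul_prod_erase univ _ (mem_univ i), mul_comm]
        exact congrArg (· * _) <|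
          periodic_of_dvd (periodic_prod_lcm (univ.erase i) hper) (dvd_mul_right l₁ j) x
    _ = 0 := sum_eq_zero fun x _ => by rw [hvan i l₁ x hi, mul_zero]

theorem Admissible.abs_sum_prod_le (ht : Admissible t) (h0 : ∀ i, t i ≠ 0)
    (hper : ∀ i, Function.Periodic (h i) (t i)) :
    |∑ x ∈ range (univ.lcm t), ∏ i, h i x| ≤ ∏ i, √(∑ y ∈ range (t i), h i y ^ 2) := by
  have hl : univ.lcm t ≠ 0 := lcm_ne_zero_iff.2 fun i _ => h0 i
  calc |∑ x ∈ range (univ.lcm t), ∏ i, h i x|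
      ≤ ∑ x ∈ range (univ.lcm t), ∏ i, |h i x| := by
        simpa only [abs_prod] using abs_sum_le_sum_abs (fun x => ∏ i, h i x) (range (univ.lcm t))
    _ ≤ ∏ i, √(∑ y ∈ range (t i), |h i y| ^ 2) :=
        sum_prod_le_prod_sqrt_of_periodic hl (fun i => dvd_lcm (mem_univ i))
          (fun i x => abs_nonneg _) (fun i x => by simp only [hper i x])
          fun p e hp he hdvd => ht.nontrivial_filter_dvd h0 hp (Nat.one_le_iff_ne_zero.1 he) hdvd
    _ = ∏ i, √(∑ y ∈ range (t i), h i y ^ 2) := by simp only [sq_abs]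

theorem abs_sum_range_prod_le (h0 : ∀ i, t i ≠ 0) {Z : ℕ} (hZ : ∀ i, t i ≤ Z)
    (hper : ∀ i, Function.Periodic (h i) (t i))
    (hvan : ∀ i d x, ¬ t i ∣ d → ∑ j ∈ range (t i), h i (x + d * j) = 0)
    {U : ℝ} (hU : ∀ i x, |h i x| ≤ U) (X : ℕ) :
    |∑ x ∈ range X, ∏ i, h i x| ≤
      (if Admissible t then (X : ℝ) / (univ.lcm t : ℕ) *
        |∑ x ∈ range (univ.lcm t), ∏ i, h i x| else 0) +
      (Z : ℝ) ^ Fintype.card ι * U ^ Fintype.card ι := by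
  have hl : univ.lcm t ≠ 0 := lcm_ne_zero_iff.2 fun i _ => h0 i
  have hprod : ∀ x, |∏ i, h i x| ≤ U ^ Fintype.card ι := by
    intro x
    rw [abs_prod]
    calc ∏ i, |h i x| ≤ ∏ _i : ι, U := prod_le_prod (fun i _ => abs_nonneg _) fun i _ => hU i x
      _ = U ^ Fintype.card ι := by simp
  refine (abs_sum_range_le_of_periodic (Nat.pos_of_ne_zero hl) (periodic_prod_lcm univ hper) hprod
    X).trans (add_le_add ?_ ?_)
  · split_ifs with hadm
    · exact le_rfl
    · rw [sum_prod_eq_zero_of_not_admissible h0 hper hvan hadm, abs_zero, mul_zero]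
  · exact mul_le_mul_of_nonneg_right
      (mod_cast lcm_le_pow_card (fun i _ => h0 i) fun i _ => hZ i) ((abs_nonneg _).trans (hprod 0))

end Correlations

theorem sum_pow_le_sum_admissible (n X Z : ℕ) (𝒬 : Finset ℕ) (g : ℕ → ℕ → ℝ) (U : ℝ)
    (h𝒬 : 𝒬 ⊆ Icc 1 Z) (hper : ∀ q ∈ 𝒬, Function.Periodic (g q) q)
    (hvan : ∀ q ∈ 𝒬, ∀ d x, ¬ q ∣ d → ∑ j ∈ range q, g q (x + d * j) = 0)
    (hU : ∀ q ∈ 𝒬, ∀ x, |g q x| ≤ U) :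
    ∑ x ∈ range X, (∑ q ∈ 𝒬, g q x) ^ n ≤
      (∑ t ∈ admissibleTuples n 𝒬,
        (X : ℝ) / (univ.lcm t : ℕ) * |∑ x ∈ range (univ.lcm t), ∏ i, g (t i) x|) +
      (#𝒬 : ℝ) ^ n * (Z : ℝ) ^ n * U ^ n := by
  calc ∑ x ∈ range X, (∑ q ∈ 𝒬, g q x) ^ n
      = ∑ t ∈ Fintype.piFinset fun _ : Fin n => 𝒬, ∑ x ∈ range X, ∏ i, g (t i) x := by
        rw [sum_comm]
        exact sum_congr rfl fun x _ => sum_pow' _ _ _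
    _ ≤ ∑ t ∈ Fintype.piFinset fun _ : Fin n => 𝒬,
        ((if Admissible t then (X : ℝ) / (univ.lcm t : ℕ) *
          |∑ x ∈ range (univ.lcm t), ∏ i, g (t i) x| else 0) + (Z : ℝ) ^ n * U ^ n) := by
        refine sum_le_sum fun t ht => (le_abs_self _).trans ?_
        have ht' := Fintype.mem_piFinset.1 ht
        simpa only [Fintype.card_fin] using abs_sum_range_prod_le (h := fun i => g (t i))
          (fun i => Nat.one_le_iff_ne_zero.1 (mem_Icc.1 (h𝒬 (ht' i))).1)
          (fun i => (mem_Icc.1 (h𝒬 (ht' i))).2) (fun i => hper _ (ht' i))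
          (fun i => hvan _ (ht' i)) (fun i => hU _ (ht' i)) X
    _ = _ := by
        rw [sum_add_distrib, ← sum_filter, sum_const, nsmul_eq_mul, Fintype.card_piFinset,
          admissibleTuples]
        simp [mul_assoc]

theorem card_filter_lcm_eq_le (n : ℕ) (S : Finset (Fin n → ℕ)) {l : ℕ} (hl : l ≠ 0) :
    #(S.filter fun t => univ.lcm t = l) ≤ #l.divisors ^ n := by
  calc #(S.filter fun t => univ.lcm t = l)
      ≤ #(Fintype.piFinset fun _ : Fin n => l.divisors) := by
        refine card_le_card fun t ht => Fintype.mem_piFinset.2 fun i => ?_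
        rw [← (mem_filter.1 ht).2] at hl ⊢
        exact Nat.mem_divisors.2 ⟨dvd_lcm (mem_univ i), hl⟩
    _ = #l.divisors ^ n := by simp

theorem sum_admissible_one_div_lcm_le (k : ℕ) {Z : ℕ} {𝒬 : Finset ℕ} (h𝒬 : 𝒬 ⊆ Icc 1 Z) :
    ∑ t ∈ admissibleTuples (2 * k) 𝒬, (1 : ℝ) / (univ.lcm t : ℕ) ≤
      (1 + k * Real.log Z) ^ 4 ^ k := by
  have hmaps : ∀ t ∈ admissibleTuples (2 * k) 𝒬, univ.lcm t ∈ Icc 1 (Z ^ k) := by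
    intro t ht
    obtain ⟨ht𝒬, hadm⟩ := mem_admissibleTuples.1 ht
    have hpos : ∀ i, t i ≠ 0 := fun i => Nat.one_le_iff_ne_zero.1 (mem_Icc.1 (h𝒬 (ht𝒬 i))).1
    exact mem_Icc.2 ⟨Nat.one_le_iff_ne_zero.2 (lcm_ne_zero_iff.2 fun i _ => hpos i),
      hadm.lcm_le hpos fun i => (mem_Icc.1 (h𝒬 (ht𝒬 i))).2⟩
  calc ∑ t ∈ admissibleTuples (2 * k) 𝒬, (1 : ℝ) / (univ.lcm t : ℕ)
      = ∑ l ∈ Icc 1 (Z ^ k),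
          #((admissibleTuples (2 * k) 𝒬).filter fun t => univ.lcm t = l) / (l : ℝ) := by
        rw [← sum_fiberwise_of_maps_to hmaps]
        refine sum_congr rfl fun l _ => ?_
        rw [sum_congr rfl (g := fun _ => (1 : ℝ) / l) fun t ht => by rw [(mem_filter.1 ht).2],
          sum_const, nsmul_eq_mul, mul_one_div]
    _ ≤ ∑ l ∈ Icc 1 (Z ^ k), (#l.divisors : ℝ) ^ (2 * k) / l := by
        refine sum_le_sum fun l hl => div_le_div_of_nonneg_right ?_ l.cast_nonneg
        exact_mod_cast card_filter_lcm_eq_le _ _ (Nat.one_le_iff_ne_zero.1 (mem_Icc.1 hl).1)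
    _ ≤ (1 + Real.log (Z ^ k : ℕ)) ^ 2 ^ (2 * k) := sum_card_divisors_pow_div_le _ _
    _ = (1 + k * Real.log Z) ^ 4 ^ k := by
        rw [pow_mul, Nat.cast_pow, Real.log_pow]
        norm_num

/-! ### Counting admissible tuples -/

/-- A set `R` of positive integers is `s`-spread when at most a proportion `e⁻ˢ` of its elements
are multiples of `e`, for every `e`. -/
def Spread (R : Finset ℕ) (s : ℝ) : Prop :=
  ∀ e : ℕ, 1 ≤ e → (#(R.filter fun r => e ∣ r) : ℝ) * (e : ℝ) ^ s ≤ #R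

theorem Spread.sum_gcd_rpow_le {R : Finset ℕ} {s : ℝ} (hR : Spread R s) {l : ℕ} (hl : l ≠ 0) :
    ∑ r ∈ R, ((r.gcd l : ℕ) : ℝ) ^ s ≤ #l.divisors * #R := by
  calc ∑ r ∈ R, ((r.gcd l : ℕ) : ℝ) ^ s
      ≤ ∑ r ∈ R, ∑ e ∈ l.divisors, if e ∣ r then (e : ℝ) ^ s else 0 := by
        refine sum_le_sum fun r _ => ?_
        have h := single_le_sum (s := l.divisors)
          (f := fun e : ℕ => if e ∣ r then (e : ℝ) ^ s else 0)
          (fun e _ => by split_ifs <;> positivity)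
          (Nat.mem_divisors.2 ⟨Nat.gcd_dvd_right r l, hl⟩)
        simpa [Nat.gcd_dvd_left r l] using h
    _ = ∑ e ∈ l.divisors, (#(R.filter fun r => e ∣ r) : ℝ) * (e : ℝ) ^ s := by
        rw [sum_comm]
        refine sum_congr rfl fun e _ => ?_
        rw [← sum_filter, sum_const, nsmul_eq_mul]
    _ ≤ ∑ _e ∈ l.divisors, (#R : ℝ) := sum_le_sum fun e he => hR e (Nat.pos_of_mem_divisors he)
    _ = _ := by rw [sum_const, nsmul_eq_mul]

theorem card_divisors_lcm_le {ι : Type*} {s : Finset ι} {t : ι → ℕ} (h0 : ∀ i ∈ s, t i ≠ 0)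
    {T : ℕ} (hT : ∀ i ∈ s, #(t i).divisors ≤ T) : #(s.lcm t).divisors ≤ T ^ #s := by
  calc #(s.lcm t).divisors ≤ #(∏ i ∈ s, t i).divisors :=
        card_le_card (Nat.divisors_subset_of_dvd (prod_ne_zero_iff.2 h0) (lcm_dvd_prod _ _))
    _ ≤ ∏ i ∈ s, #(t i).divisors :=
        le_prod_of_submultiplicative (fun n : ℕ => #n.divisors) (by simp) card_divisors_mul_le s t
    _ ≤ T ^ #s := prod_le_pow_card _ _ _ hT

theorem lcm_univ_cons {n : ℕ} (r : ℕ) (t : Fin n → ℕ) :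
    univ.lcm (Fin.cons r t : Fin (n + 1) → ℕ) = r.lcm (univ.lcm t) := by
  refine Nat.dvd_left_injective (funext fun m => propext ?_)
  simp [Finset.lcm_dvd_iff, Nat.lcm_dvd_iff, Fin.forall_fin_succ]

theorem sum_piFinset_succ {α M : Type*} [AddCommMonoid M] (R : Finset α) (n : ℕ)
    (F : (Fin (n + 1) → α) → M) :
    ∑ t ∈ Fintype.piFinset fun _ : Fin (n + 1) => R, F t =
      ∑ t ∈ Fintype.piFinset fun _ : Fin n => R, ∑ r ∈ R, F (Fin.cons r t) := by
  have h := filter_piFinset_eq_map_consEquiv (fun _ : Fin (n + 1) => R) fun _ => True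
  rw [filter_true, filter_true] at h
  rw [h, sum_map, sum_product_right]
  rfl

theorem prod_cons_div_lcm {n r : ℕ} (hr : r ≠ 0) {t : Fin n → ℕ} (h0 : ∀ i, t i ≠ 0) :
    (∏ i, ((Fin.cons r t : Fin (n + 1) → ℕ) i : ℝ)) /
        (univ.lcm (Fin.cons r t : Fin (n + 1) → ℕ) : ℕ) =
      (∏ i, (t i : ℝ)) / (univ.lcm t : ℕ) * (r.gcd (univ.lcm t) : ℕ) := by
  have hl : univ.lcm t ≠ 0 := lcm_ne_zero_iff.2 fun i _ => h0 i
  have hgl : ((r.gcd (univ.lcm t) : ℕ) : ℝ) * (r.lcm (univ.lcm t) : ℕ) = r * (univ.lcm t : ℕ) := by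
    exact_mod_cast Nat.gcd_mul_lcm r (univ.lcm t)
  have hlcm : ((r.lcm (univ.lcm t) : ℕ) : ℝ) ≠ 0 := by exact_mod_cast Nat.lcm_ne_zero hr hl
  have hl' : ((univ.lcm t : ℕ) : ℝ) ≠ 0 := by exact_mod_cast hl
  rw [lcm_univ_cons, Fin.prod_univ_succ]
  simp only [Fin.cons_zero, Fin.cons_succ]
  field_simp
  linear_combination (-∏ i, (t i : ℝ)) * hgl

theorem Spread.sum_prod_div_lcm_rpow_le {R : Finset ℕ} {s : ℝ} (hR : Spread R s)
    (h0 : ∀ r ∈ R, r ≠ 0) {T : ℕ} (hT1 : 1 ≤ T) (hT : ∀ r ∈ R, #r.divisors ≤ T) (n : ℕ) :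
    ∑ t ∈ Fintype.piFinset fun _ : Fin n => R,
      ((∏ i, (t i : ℝ)) / (univ.lcm t : ℕ)) ^ s ≤ (#R : ℝ) ^ n * (T : ℝ) ^ n ^ 2 := by
  induction n with
  | zero => simp
  | succ n ih =>
    have hstep : ∀ t ∈ Fintype.piFinset fun _ : Fin n => R,
        ∑ r ∈ R, ((∏ i, ((Fin.cons r t : Fin (n + 1) → ℕ) i : ℝ)) /
            (univ.lcm (Fin.cons r t : Fin (n + 1) → ℕ) : ℕ)) ^ s ≤
          ((∏ i, (t i : ℝ)) / (univ.lcm t : ℕ)) ^ s * ((T : ℝ) ^ n * #R) := by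
      intro t ht
      have htR := Fintype.mem_piFinset.1 ht
      have hpos : ∀ i, t i ≠ 0 := fun i => h0 _ (htR i)
      rw [sum_congr rfl fun r hr => by
        rw [prod_cons_div_lcm (h0 r hr) hpos, Real.mul_rpow (by positivity) (by positivity)],
        ← mul_sum]
      refine mul_le_mul_of_nonneg_left ?_ (by positivity)
      refine (hR.sum_gcd_rpow_le (lcm_ne_zero_iff.2 fun i _ => hpos i)).trans
        (mul_le_mul_of_nonneg_right ?_ (Nat.cast_nonneg _))
      simpa using (mod_cast card_divisors_lcm_le (fun i _ => hpos i) fun i _ => hT _ (htR i) :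
        (#(univ.lcm t).divisors : ℝ) ≤ (T : ℝ) ^ #(univ : Finset (Fin n)))
    rw [sum_piFinset_succ]
    calc _ ≤ ∑ t ∈ Fintype.piFinset fun _ : Fin n => R,
          ((∏ i, (t i : ℝ)) / (univ.lcm t : ℕ)) ^ s * ((T : ℝ) ^ n * #R) := sum_le_sum hstep
      _ ≤ ((#R : ℝ) ^ n * (T : ℝ) ^ n ^ 2) * ((T : ℝ) ^ n * #R) := by
          rw [← sum_mul]
          exact mul_le_mul_of_nonneg_right ih (by positivity)
      _ = (#R : ℝ) ^ (n + 1) * (T : ℝ) ^ (n ^ 2 + n) := by ring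
      _ ≤ (#R : ℝ) ^ (n + 1) * (T : ℝ) ^ (n + 1) ^ 2 := by
          refine mul_le_mul_of_nonneg_left (pow_le_pow_right₀ (mod_cast hT1) ?_) (by positivity)
          nlinarith

theorem Admissible.pow_le_prod_div_lcm {k : ℕ} {t : Fin (2 * k) → ℕ} (ht : Admissible t)
    (h0 : ∀ i, t i ≠ 0) {Y : ℝ} (hY0 : 0 ≤ Y) (hY : ∀ i, Y ≤ t i) :
    Y ^ k ≤ (∏ i, (t i : ℝ)) / (univ.lcm t : ℕ) := by
  have hl : (0 : ℝ) < (univ.lcm t : ℕ) := by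
    exact_mod_cast Nat.pos_of_ne_zero (lcm_ne_zero_iff.2 fun i _ => h0 i)
  have hP : 0 ≤ ∏ i, (t i : ℝ) := prod_nonneg fun i _ => (t i).cast_nonneg
  have hlcm : ((univ.lcm t : ℕ) : ℝ) ≤ √(∏ i, (t i : ℝ)) :=
    Real.le_sqrt_of_sq_le (mod_cast ht.lcm_sq_le_prod h0)
  have hY' : Y ^ k ≤ √(∏ i, (t i : ℝ)) := by
    refine Real.le_sqrt_of_sq_le ?_
    calc (Y ^ k) ^ 2 = ∏ _i : Fin (2 * k), Y := by simp [← pow_mul, mul_comm]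
      _ ≤ _ := prod_le_prod (fun _ _ => hY0) fun i _ => hY i
  rw [le_div_iff₀ hl]
  calc Y ^ k * (univ.lcm t : ℕ) ≤ √(∏ i, (t i : ℝ)) * √(∏ i, (t i : ℝ)) :=
        mul_le_mul hY' hlcm hl.le (Real.sqrt_nonneg _)
    _ = _ := Real.mul_self_sqrt hP

theorem Spread.card_admissible_mul_le {R : Finset ℕ} {s : ℝ} (hR : Spread R s) (hs : 0 ≤ s)
    {Y : ℝ} (hY0 : 0 < Y) (hY : ∀ r ∈ R, Y ≤ r) {T : ℕ} (hT1 : 1 ≤ T)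
    (hT : ∀ r ∈ R, #r.divisors ≤ T) (k : ℕ) :
    (#(admissibleTuples (2 * k) R) : ℝ) * (Y ^ k) ^ s ≤
      (#R : ℝ) ^ (2 * k) * (T : ℝ) ^ (2 * k) ^ 2 := by
  have h0 : ∀ r ∈ R, r ≠ 0 := fun r hr => Nat.cast_ne_zero.1 (hY0.trans_le (hY r hr)).ne'
  calc (#(admissibleTuples (2 * k) R) : ℝ) * (Y ^ k) ^ s
      ≤ ∑ t ∈ admissibleTuples (2 * k) R, ((∏ i, (t i : ℝ)) / (univ.lcm t : ℕ)) ^ s := by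
        rw [← nsmul_eq_mul, ← sum_const]
        refine sum_le_sum fun t ht => Real.rpow_le_rpow (pow_nonneg hY0.le k) ?_ hs
        obtain ⟨htR, hadm⟩ := mem_admissibleTuples.1 ht
        exact hadm.pow_le_prod_div_lcm (fun i => h0 _ (htR i)) hY0.le fun i => hY _ (htR i)
    _ ≤ ∑ t ∈ Fintype.piFinset fun _ : Fin (2 * k) => R,
        ((∏ i, (t i : ℝ)) / (univ.lcm t : ℕ)) ^ s :=
        sum_le_sum_of_subset_of_nonneg (filter_subset _ _) fun t _ _ => by positivity
    _ ≤ _ := hR.sum_prod_div_lcm_rpow_le h0 hT1 hT (2 * k)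

theorem injOn_div {d : ℕ} {𝒬 : Finset ℕ} (h : ∀ q ∈ 𝒬, d ∣ q) :
    Set.InjOn (· / d) (𝒬 : Set ℕ) := fun a ha b hb hab =>
  (Nat.div_left_inj (h a ha) (h b hb)).1 hab

theorem card_admissible_le_card_image_div {d n : ℕ} (hd : 0 < d) {𝒬 : Finset ℕ}
    (h : ∀ q ∈ 𝒬, d ∣ q) :
    #(admissibleTuples n 𝒬) ≤ #(admissibleTuples n (𝒬.image (· / d))) := by
  refine card_le_card_of_injOn (fun t i => t i / d) (fun t ht => ?_) fun t ht t' ht' heq => ?_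
  · obtain ⟨ht𝒬, hadm⟩ := mem_admissibleTuples.1 ht
    refine mem_admissibleTuples.2 ⟨fun i => mem_image_of_mem _ (ht𝒬 i), fun i => ?_⟩
    refine Nat.dvd_of_mul_dvd_mul_left hd ?_
    rw [Nat.mul_div_cancel' (h _ (ht𝒬 i))]
    refine (hadm i).trans (Finset.lcm_dvd fun j hj => ?_)
    rw [← Nat.mul_div_cancel' (h _ (ht𝒬 j))]
    exact mul_dvd_mul_left d (dvd_lcm (f := fun i => t i / d) hj)
  · exact funext fun i => injOn_div h ((mem_admissibleTuples.1 ht).1 i)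
      ((mem_admissibleTuples.1 ht').1 i) (congrFun heq i)

theorem exists_forall_card_filter_dvd_mul_rpow_le {𝒬 : Finset ℕ} (h0 : ∀ q ∈ 𝒬, 0 < q) (s : ℝ) :
    ∃ d : ℕ, 1 ≤ d ∧ ∀ e : ℕ, 1 ≤ e →
      (#(𝒬.filter fun q => e ∣ q) : ℝ) * (e : ℝ) ^ s ≤
        #(𝒬.filter fun q => d ∣ q) * (d : ℝ) ^ s := by
  obtain ⟨d, hd, hmax⟩ := exists_max_image (Icc 1 (max 1 (𝒬.sup id)))
    (fun e : ℕ => (#(𝒬.filter fun q => e ∣ q) : ℝ) * (e : ℝ) ^ s)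
    ⟨1, mem_Icc.2 ⟨le_rfl, le_max_left _ _⟩⟩
  refine ⟨d, (mem_Icc.1 hd).1, fun e he => ?_⟩
  by_cases hmem : e ∈ Icc 1 (max 1 (𝒬.sup id))
  · exact hmax e hmem
  · rw [filter_eq_empty_iff.2, card_empty, Nat.cast_zero, zero_mul]
    · positivity
    · intro q hq hdvd
      exact hmem (mem_Icc.2 ⟨he, ((Nat.le_of_dvd (h0 q hq) hdvd).trans
        (le_sup (f := id) hq)).trans (le_max_right _ _)⟩)

theorem spread_image_div_of_forall_le {𝒬 : Finset ℕ} {s : ℝ} {d : ℕ} (hd : 1 ≤ d)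
    (hmax : ∀ e : ℕ, 1 ≤ e → (#(𝒬.filter fun q => e ∣ q) : ℝ) * (e : ℝ) ^ s ≤
      #(𝒬.filter fun q => d ∣ q) * (d : ℝ) ^ s) :
    Spread ((𝒬.filter fun q => d ∣ q).image (· / d)) s := by
  intro e he
  have hdvd : ∀ q ∈ 𝒬.filter (d ∣ ·), d ∣ q := fun q hq => (mem_filter.1 hq).2
  have hcard : #(((𝒬.filter fun q => d ∣ q).image (· / d)).filter fun r => e ∣ r) ≤
      #(𝒬.filter fun q => d * e ∣ q) := by
    refine card_le_card_of_injOn (d * ·) (fun r hr => ?_)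
      fun a _ b _ hab => Nat.eq_of_mul_eq_mul_left hd hab
    obtain ⟨hr, her⟩ := mem_filter.1 (mem_coe.1 hr)
    obtain ⟨q, hq, rfl⟩ := mem_image.1 hr
    have hq' : d * (q / d) ∈ 𝒬 := by
      rw [Nat.mul_div_cancel' (hdvd q hq)]
      exact (mem_filter.1 hq).1
    exact mem_coe.2 (mem_filter.2 ⟨hq', mul_dvd_mul_left d her⟩)
  have hde := hmax (d * e) (Nat.mul_pos hd he)
  rw [Nat.cast_mul, Real.mul_rpow d.cast_nonneg e.cast_nonneg] at hde
  rw [card_image_of_injOn (injOn_div hdvd)]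
  refine le_of_mul_le_mul_right ?_ (Real.rpow_pos_of_pos (Nat.cast_pos.2 hd : (0 : ℝ) < d) s)
  calc _ ≤ (#(𝒬.filter fun q => d * e ∣ q) : ℝ) * (e : ℝ) ^ s * (d : ℝ) ^ s := by gcongr
    _ ≤ _ := by linarith

-- Choose `d` to maximise `#{q ∈ 𝒬 : d ∣ q} * d ^ s`: the multiples of `d`, divided by `d`, are then
-- spread.
theorem exists_dvd_card_admissible_le {s : ℝ} (hs : 0 ≤ s) {𝒬 : Finset ℕ} (h𝒬 : 𝒬.Nonempty)
    {Y : ℝ} (hY0 : 0 < Y) (hY : ∀ q ∈ 𝒬, Y ≤ q) {T : ℕ} (hT : ∀ q ∈ 𝒬, #q.divisors ≤ T) :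
    ∃ d : ℕ, 1 ≤ d ∧ (𝒬.filter fun q => d ∣ q).Nonempty ∧
      (#𝒬 : ℝ) ≤ #(𝒬.filter fun q => d ∣ q) * (d : ℝ) ^ s ∧
      ∀ k : ℕ, (#(admissibleTuples (2 * k) (𝒬.filter fun q => d ∣ q)) : ℝ) * ((Y / d) ^ k) ^ s ≤
        (#(𝒬.filter fun q => d ∣ q) : ℝ) ^ (2 * k) * (T : ℝ) ^ (2 * k) ^ 2 := by
  have h0 : ∀ q ∈ 𝒬, 0 < q := fun q hq => Nat.cast_pos.1 (hY0.trans_le (hY q hq))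
  obtain ⟨q₀, hq₀⟩ := h𝒬
  have hT1 : 1 ≤ T := (card_pos.2 (Nat.nonempty_divisors.2 (h0 q₀ hq₀).ne')).trans_le (hT q₀ hq₀)
  obtain ⟨d, hd, hmax⟩ := exists_forall_card_filter_dvd_mul_rpow_le h0 s
  have hdvd : ∀ q ∈ 𝒬.filter (d ∣ ·), d ∣ q := fun q hq => (mem_filter.1 hq).2
  have hcard : (#𝒬 : ℝ) ≤ #(𝒬.filter fun q => d ∣ q) * (d : ℝ) ^ s := by
    simpa using hmax 1 le_rfl
  refine ⟨d, hd, ?_, hcard, fun k => ?_⟩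
  · rw [nonempty_iff_ne_empty]
    intro he
    rw [he, card_empty, Nat.cast_zero, zero_mul] at hcard
    exact (Nat.cast_pos.2 (card_pos.2 ⟨q₀, hq₀⟩)).not_ge hcard
  have hd0 : (0 : ℝ) < d := Nat.cast_pos.2 hd
  have hmain := (spread_image_div_of_forall_le hd hmax).card_admissible_mul_le hs (Y := Y / d)
    (div_pos hY0 hd0) (forall_mem_image.2 fun q hq => ?_) hT1 (forall_mem_image.2 fun q hq => ?_) k
  · rw [card_image_of_injOn (injOn_div hdvd)] at hmain
    refine le_trans (mul_le_mul_of_nonneg_right ?_ (by positivity)) hmain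
    exact_mod_cast card_admissible_le_card_image_div hd hdvd
  · rw [Nat.cast_div (hdvd q hq) hd0.ne']
    exact div_le_div_of_nonneg_right (hY q (mem_filter.1 hq).1) hd0.le
  · have hq𝒬 := (mem_filter.1 hq).1
    exact (card_le_card (Nat.divisors_subset_of_dvd (h0 q hq𝒬).ne'
      (Nat.div_dvd_of_dvd (hdvd q hq)))).trans (hT q hq𝒬)

/-! ### Exponential sums at rational frequencies -/

/-- The additive character `e(x) = exp (2 π i x)` with complex values. -/
noncomputable def ee (x : ℝ) : ℂ := Real.fourierChar x

theorem ee_def (x : ℝ) : ee x = Complex.exp (2 * Real.pi * Complex.I * x) := by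
  rw [ee, Real.fourierChar_apply]
  push_cast
  ring_nf

theorem ee_add (x y : ℝ) : ee (x + y) = ee x * ee y := by
  rw [ee, AddChar.map_add_eq_mul, Circle.coe_mul, ee, ee]

theorem ee_zero : ee 0 = 1 := by simp [ee]

theorem norm_ee (x : ℝ) : ‖ee x‖ = 1 := Circle.norm_coe _

theorem conj_ee (x : ℝ) : (starRingEnd ℂ) (ee x) = ee (-x) :=
  Circle.starRingEnd_addChar x

theorem ee_eq_one_iff (x : ℝ) : ee x = 1 ↔ ∃ n : ℤ, x = n := by
  rw [ee_def, Complex.exp_eq_one_iff]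
  refine exists_congr fun n => ?_
  rw [mul_comm, mul_left_inj' Complex.two_pi_I_ne_zero]
  norm_cast

theorem ee_int (n : ℤ) : ee n = 1 := (ee_eq_one_iff _).2 ⟨n, rfl⟩

theorem ee_add_int (x : ℝ) (n : ℤ) : ee (x + n) = ee x := by rw [ee_add, ee_int, mul_one]

theorem ee_nat_mul (n : ℕ) (x : ℝ) : ee (n * x) = ee x ^ n := by
  rw [ee, ← nsmul_eq_mul, AddChar.map_nsmul_eq_pow, Circle.coe_pow, ee]

theorem ee_mul_div_congr {q x y : ℕ} (h : x ≡ y [MOD q]) (a : ℕ) :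
    ee (x * (a / q)) = ee (y * (a / q)) := by
  rcases Nat.eq_zero_or_pos q with rfl | hq
  · simp [ee_zero]
  have hq' : (q : ℝ) ≠ 0 := by exact_mod_cast hq.ne'
  obtain ⟨c, hc⟩ := Nat.modEq_iff_dvd.1 h.symm
  have hx : (x : ℝ) = y + q * c := by
    exact_mod_cast (by linarith : (x : ℤ) = y + q * c)
  have hshift : ((y : ℝ) + q * c) * (a / q) = y * (a / q) + ((c * a : ℤ) : ℝ) := by
    push_cast
    field_simp
  rw [hx, hshift, ee_add_int]

theorem sum_ee_mul_div {q : ℕ} (hq : 0 < q) (m : ℤ) :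
    ∑ j ∈ range q, ee (m * j / q) = if (q : ℤ) ∣ m then (q : ℂ) else 0 := by
  have hq' : (q : ℝ) ≠ 0 := by exact_mod_cast hq.ne'
  have hpow : ∀ j : ℕ, ee (m * j / q) = ee (m / q) ^ j := fun j => by
    rw [← ee_nat_mul]
    congr 1
    ring
  have hone : ee ((m : ℝ) / q) = 1 ↔ (q : ℤ) ∣ m := by
    rw [ee_eq_one_iff]
    refine exists_congr fun n => ?_
    rw [div_eq_iff hq', mul_comm]
    norm_cast
  simp_rw [hpow]
  split_ifs with h
  · simp [hone.2 h]
  · rw [geom_sum_eq (mt hone.1 h), ← ee_nat_mul, mul_div_cancel₀ _ hq', ee_int, sub_self, zero_div]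

theorem sum_ee_mul_conj_ee {q a b : ℕ} (ha : a < q) (hb : b < q) :
    ∑ x ∈ range q, ee (x * (a / q)) * (starRingEnd ℂ) (ee (x * (b / q))) =
      if a = b then (q : ℂ) else 0 := by
  have hdvd : (q : ℤ) ∣ (a : ℤ) - b ↔ a = b := by
    rw [← Nat.modEq_iff_dvd]
    exact ⟨fun h => (h.eq_of_lt_of_lt hb ha).symm, fun h => h ▸ rfl⟩
  have hsum := sum_ee_mul_div (Nat.zero_lt_of_lt ha) ((a : ℤ) - b)
  rw [if_congr hdvd rfl rfl] at hsum
  rw [← hsum]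
  refine sum_congr rfl fun x _ => ?_
  rw [conj_ee, ← ee_add]
  congr 1
  push_cast
  ring

theorem sum_norm_sq_sum_ee {q : ℕ} {S : Finset ℕ} (hS : S ⊆ range q) (w : ℕ → ℂ) :
    ∑ x ∈ range q, ‖∑ a ∈ S, ee (x * (a / q)) * w a‖ ^ 2 = q * ∑ a ∈ S, ‖w a‖ ^ 2 := by
  have hexpand : ∑ x ∈ range q, (‖∑ a ∈ S, ee (x * (a / q)) * w a‖ : ℂ) ^ 2 =
      q * ∑ a ∈ S, (‖w a‖ : ℂ) ^ 2 := by
    calc ∑ x ∈ range q, (‖∑ a ∈ S, ee (x * (a / q)) * w a‖ : ℂ) ^ 2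
        = ∑ x ∈ range q, ∑ a ∈ S, ∑ b ∈ S, w a * (starRingEnd ℂ) (w b) *
            (ee (x * (a / q)) * (starRingEnd ℂ) (ee (x * (b / q)))) := by
          refine sum_congr rfl fun x _ => ?_
          rw [← Complex.mul_conj', map_sum, sum_mul_sum]
          refine sum_congr rfl fun a _ => sum_congr rfl fun b _ => ?_
          rw [map_mul]
          ring
      _ = ∑ a ∈ S, ∑ b ∈ S, w a * (starRingEnd ℂ) (w b) * (if a = b then (q : ℂ) else 0) := by
          rw [sum_comm]
          refine sum_congr rfl fun a ha => ?_
          rw [sum_comm]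
          refine sum_congr rfl fun b hb => ?_
          rw [← mul_sum, sum_ee_mul_conj_ee (mem_range.1 (hS ha)) (mem_range.1 (hS hb))]
      _ = q * ∑ a ∈ S, (‖w a‖ : ℂ) ^ 2 := by
          rw [mul_sum]
          refine sum_congr rfl fun a ha => ?_
          simp only [mul_ite, mul_zero, sum_ite_eq, if_pos ha, Complex.mul_conj']
          ring
  exact_mod_cast hexpand

/-- The residues modulo `q` which are coprime to `q`: the numerators of the fractions of
denominator `q`. -/
def reducedResidues (q : ℕ) : Finset ℕ := (range q).filter fun a => a.Coprime q

theorem mem_reducedResidues {q a : ℕ} : a ∈ reducedResidues q ↔ a < q ∧ a.Coprime q := by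
  rw [reducedResidues, mem_filter, mem_range]

theorem sum_range_eq_sum_divisors_reducedResidues {M : Type*} [AddCommMonoid M] {q : ℕ}
    (hq : 0 < q) (F : ℝ → M) :
    ∑ a ∈ range q, F (a / q) = ∑ d ∈ q.divisors, ∑ a ∈ reducedResidues d, F (a / d) := by
  have hgcd : ∀ a, 0 < q.gcd a := fun a => Nat.gcd_pos_of_pos_left a hq
  rw [sum_sigma']
  refine sum_nbij' (fun a => ⟨q / q.gcd a, a / q.gcd a⟩) (fun x => x.2 * (q / x.1))
    (fun a ha => ?_) ?_ (fun a _ => ?_) ?_ (fun a _ => ?_)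
  · simp only [mem_sigma, Nat.mem_divisors, mem_reducedResidues]
    exact ⟨⟨Nat.div_dvd_of_dvd (Nat.gcd_dvd_left q a), hq.ne'⟩,
      Nat.div_lt_div_of_lt_of_dvd (Nat.gcd_dvd_left q a) (mem_range.1 ha),
      (Nat.coprime_div_gcd_div_gcd (hgcd a)).symm⟩
  · rintro ⟨d, a⟩ hx
    simp only [mem_sigma, Nat.mem_divisors, mem_reducedResidues, mem_range] at hx ⊢
    obtain ⟨⟨⟨u, rfl⟩, -⟩, had, -⟩ := hx
    rw [Nat.mul_div_cancel_left _ (Nat.zero_lt_of_lt had)]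
    exact Nat.mul_lt_mul_of_pos_right had (Nat.pos_of_mul_pos_left hq)
  · simp only
    rw [Nat.div_div_self (Nat.gcd_dvd_left q a) hq.ne', Nat.div_mul_cancel (Nat.gcd_dvd_right q a)]
  · rintro ⟨d, a⟩ hx
    simp only [mem_sigma, Nat.mem_divisors, mem_reducedResidues] at hx
    obtain ⟨⟨⟨u, rfl⟩, -⟩, had, hc⟩ := hx
    have hu : 0 < u := Nat.pos_of_mul_pos_left hq
    simp only
    rw [Nat.mul_div_cancel_left _ (Nat.zero_lt_of_lt had), Nat.gcd_mul_right, Nat.gcd_comm, hc,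
      one_mul, Nat.mul_div_cancel _ hu, Nat.mul_div_cancel _ hu]
  · have hg : ((q.gcd a : ℕ) : ℝ) ≠ 0 := by exact_mod_cast (hgcd a).ne'
    rw [Nat.cast_div (Nat.gcd_dvd_left q a) hg, Nat.cast_div (Nat.gcd_dvd_right q a) hg,
      div_div_div_cancel_right₀ hg]

/-- The exponential sum `∑ e(yθ)` over the elements `y` of a finite set `B`. -/
noncomputable def expSum (B : Finset ℕ) (θ : ℝ) : ℂ := ∑ y ∈ B, ee (y * θ)

/-- The projection of the indicator function of `B ⊆ {0, …, X - 1}` to the frequencies with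
denominator exactly `q`, evaluated at `x`. -/
noncomputable def primitivePart (B : Finset ℕ) (X q x : ℕ) : ℝ :=
  (∑ a ∈ reducedResidues q, ee (x * (a / q)) * (starRingEnd ℂ) (expSum B (a / q))).re / X

/-- The energy of `B ⊆ {0, …, X - 1}` on the frequencies with denominator exactly `q`, normalized
so that the trivial frequency `q = 1` contributes the square of the density of `B`. -/
noncomputable def energy (B : Finset ℕ) (X q : ℕ) : ℝ :=
  (∑ a ∈ reducedResidues q, ‖expSum B (a / q)‖ ^ 2) / (X : ℝ) ^ 2

theorem energy_nonneg (B : Finset ℕ) (X q : ℕ) : 0 ≤ energy B X q :=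
  div_nonneg (sum_nonneg fun _ _ => sq_nonneg _) (sq_nonneg _)

theorem sum_primitivePart (B : Finset ℕ) {X : ℕ} (hX : X ≠ 0) (q : ℕ) :
    ∑ y ∈ B, primitivePart B X q y = X * energy B X q := by
  have hX' : (X : ℝ) ≠ 0 := by exact_mod_cast hX
  have hconj : ∀ a ∈ reducedResidues q,
      ∑ y ∈ B, ee (y * (a / q)) * (starRingEnd ℂ) (expSum B (a / q)) =
        ((‖expSum B (a / q)‖ ^ 2 : ℝ) : ℂ) := by
    intro a _
    rw [← sum_mul, Complex.ofReal_pow]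
    exact Complex.mul_conj' (expSum B (a / q))
  simp only [primitivePart, energy]
  rw [← sum_div, ← Complex.re_sum, sum_comm, sum_congr rfl hconj, ← Complex.ofReal_sum,
    Complex.ofReal_re]
  field_simp

theorem primitivePart_periodic (B : Finset ℕ) (X q : ℕ) :
    Function.Periodic (primitivePart B X q) q := by
  intro x
  simp only [primitivePart, ee_mul_div_congr (Nat.add_modEq_right : x + q ≡ x [MOD q])]

theorem sum_primitivePart_progression (B : Finset ℕ) (X : ℕ) {q d : ℕ} (hq : 0 < q)
    (hd : ¬ q ∣ d) (x : ℕ) : ∑ j ∈ range q, primitivePart B X q (x + d * j) = 0 := by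
  simp only [primitivePart]
  rw [← sum_div, ← Complex.re_sum, sum_comm, sum_eq_zero, Complex.zero_re, zero_div]
  intro a ha
  have hsplit : ∀ j ∈ range q, ee (((x + d * j : ℕ) : ℝ) * (a / q)) =
      ee (x * (a / q)) * ee (((d * a : ℕ) : ℤ) * j / q) := by
    intro j _
    rw [← ee_add]
    congr 1
    push_cast
    ring
  rw [← sum_mul, sum_congr rfl hsplit, ← mul_sum, sum_ee_mul_div hq, if_neg, mul_zero, zero_mul]
  rw [Int.natCast_dvd_natCast]
  exact fun h => hd ((mem_reducedResidues.1 ha).2.symm.dvd_of_dvd_mul_right h)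

theorem sum_primitivePart_sq_le (B : Finset ℕ) (X q : ℕ) :
    ∑ x ∈ range q, primitivePart B X q x ^ 2 ≤ q * energy B X q := by
  have h := sum_norm_sq_sum_ee (S := reducedResidues q) (filter_subset _ _)
    (fun a => (starRingEnd ℂ) (expSum B (a / q)))
  simp only [RCLike.norm_conj] at h
  simp only [primitivePart, energy, div_pow]
  rw [← sum_div, ← mul_div_assoc, ← h]
  refine div_le_div_of_nonneg_right (sum_le_sum fun x _ => ?_) (sq_nonneg _)
  rw [← sq_abs]
  exact pow_le_pow_left₀ (abs_nonneg _) (Complex.abs_re_le_norm _) 2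

theorem sum_range_ee_mul_conj_expSum (B : Finset ℕ) {q : ℕ} (hq : 0 < q) (x : ℕ) :
    ∑ a ∈ range q, ee (x * (a / q)) * (starRingEnd ℂ) (expSum B (a / q)) =
      ((q * #{y ∈ B | y ≡ x [MOD q]} : ℝ) : ℂ) := by
  calc ∑ a ∈ range q, ee (x * (a / q)) * (starRingEnd ℂ) (expSum B (a / q))
      = ∑ y ∈ B, ∑ a ∈ range q, ee ((((x : ℤ) - y : ℤ) : ℝ) * a / q) := by
        rw [sum_comm]
        refine sum_congr rfl fun a _ => ?_
        rw [expSum, map_sum, mul_sum]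
        refine sum_congr rfl fun y _ => ?_
        rw [conj_ee, ← ee_add]
        congr 1
        push_cast
        ring
    _ = ∑ y ∈ B, if y ≡ x [MOD q] then (q : ℂ) else 0 := by
        refine sum_congr rfl fun y _ => ?_
        simp only [sum_ee_mul_div hq, Nat.modEq_iff_dvd]
    _ = _ := by
        rw [← sum_filter, sum_const, nsmul_eq_mul]
        push_cast
        ring

theorem sum_divisors_primitivePart (B : Finset ℕ) (X : ℕ) {q : ℕ} (hq : 0 < q) (x : ℕ) :
    ∑ d ∈ q.divisors, primitivePart B X d x = (q : ℝ) * #{y ∈ B | y ≡ x [MOD q]} / X := by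
  simp only [primitivePart]
  rw [← sum_div, ← Complex.re_sum, ← sum_range_eq_sum_divisors_reducedResidues hq
    (fun θ : ℝ => ee (x * θ) * (starRingEnd ℂ) (expSum B θ)), sum_range_ee_mul_conj_expSum B hq,
    Complex.ofReal_re]

theorem filter_mod_eq (B : Finset ℕ) {q x : ℕ} (hx : x ∈ range q) :
    {y ∈ B | y % q = x} = {y ∈ B | y ≡ x [MOD q]} :=
  filter_congr fun y _ => by rw [Nat.ModEq, Nat.mod_eq_of_lt (mem_range.1 hx)]

theorem sum_card_filter_modEq (B : Finset ℕ) {q : ℕ} (hq : 0 < q) :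
    ∑ x ∈ range q, #{y ∈ B | y ≡ x [MOD q]} = #B := by
  rw [card_eq_sum_card_fiberwise (t := range q) (f := (· % q))
    fun y _ => mem_coe.2 (mem_range.2 (Nat.mod_lt y hq))]
  exact sum_congr rfl fun x hx => by rw [filter_mod_eq B hx]

theorem sum_norm_expSum_sq (B : Finset ℕ) {q : ℕ} (hq : 0 < q) :
    ∑ a ∈ range q, ‖expSum B (a / q)‖ ^ 2 =
      q * ∑ x ∈ range q, (#{y ∈ B | y ≡ x [MOD q]} : ℝ) ^ 2 := by
  have h := sum_norm_sq_sum_ee (Subset.refl (range q))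
    (fun x => (#{y ∈ B | y ≡ x [MOD q]} : ℂ))
  simp only [RCLike.norm_natCast] at h
  rw [← h]
  refine sum_congr rfl fun a _ => ?_
  congr 2
  rw [expSum, ← sum_fiberwise_of_maps_to (t := range q) (g := (· % q))
    fun y _ => mem_range.2 (Nat.mod_lt y hq)]
  refine sum_congr rfl fun x hx => ?_
  rw [filter_mod_eq B hx, sum_congr rfl fun y hy => ee_mul_div_congr (mem_filter.1 hy).2 a,
    sum_const, nsmul_eq_mul, mul_comm, mul_div_left_comm]

section ClassBound

/-- The set `B` has density at most `β` in every residue class modulo every `d ≤ Z`. -/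
def ClassBound (B : Finset ℕ) (X Z : ℕ) (β : ℝ) : Prop :=
  ∀ d, 1 ≤ d → d ≤ Z → ∀ x, (d : ℝ) * #{y ∈ B | y ≡ x [MOD d]} ≤ β * X

variable {B : Finset ℕ} {X Z : ℕ} {β : ℝ}

theorem ClassBound.card_le (h : ClassBound B X Z β) (hZ : 1 ≤ Z) : (#B : ℝ) ≤ β * X := by
  simpa [Nat.modEq_one] using h 1 le_rfl hZ 0

theorem ClassBound.nonneg (h : ClassBound B X Z β) (hZ : 1 ≤ Z) (hX : 0 < X) : 0 ≤ β :=
  nonneg_of_mul_nonneg_left ((Nat.cast_nonneg _).trans (h.card_le hZ)) (Nat.cast_pos.2 hX)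

theorem ClassBound.abs_primitivePart_le (h : ClassBound B X Z β) (hX : 0 < X) {q : ℕ}
    (hq : q ∈ Icc 1 Z) (x : ℕ) : |primitivePart B X q x| ≤ #q.divisors * β := by
  obtain ⟨hq0, hqZ⟩ := mem_Icc.1 hq
  have hinv := (ArithmeticFunction.sum_eq_iff_sum_mul_moebius_eq (R := ℝ)
    (f := fun d => primitivePart B X d x)
    (g := fun d => (d : ℝ) * #{y ∈ B | y ≡ x [MOD d]} / X)).1
    (fun n hn => sum_divisors_primitivePart B X hn x) q hq0
  have hterm : ∀ y ∈ q.divisorsAntidiagonal, |((ArithmeticFunction.moebius y.1 : ℤ) : ℝ) *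
      ((y.2 : ℝ) * #{z ∈ B | z ≡ x [MOD y.2]} / X)| ≤ β := by
    intro y hy
    have hy2 : y.2 ∈ q.divisors := Nat.snd_mem_divisors_of_mem_antidiagonal hy
    have hmoebius : |((ArithmeticFunction.moebius y.1 : ℤ) : ℝ)| ≤ 1 := by
      exact_mod_cast ArithmeticFunction.abs_moebius_le_one (n := y.1)
    have hclass : (y.2 : ℝ) * #{z ∈ B | z ≡ x [MOD y.2]} / X ≤ β :=
      (div_le_iff₀ (Nat.cast_pos.2 hX)).2
        (h y.2 (Nat.pos_of_mem_divisors hy2) ((Nat.divisor_le hy2).trans hqZ) x)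
    have hnonneg : 0 ≤ (y.2 : ℝ) * #{z ∈ B | z ≡ x [MOD y.2]} / X := by positivity
    rw [abs_mul, abs_of_nonneg hnonneg]
    exact (mul_le_of_le_one_left hnonneg hmoebius).trans hclass
  rw [← hinv]
  refine ((abs_sum_le_sum_abs _ _).trans (sum_le_sum hterm)).trans_eq ?_
  rw [sum_const, nsmul_eq_mul, ← Nat.map_div_right_divisors, card_map]

theorem ClassBound.mul_sum_card_sq_le (h : ClassBound B X Z β) {q : ℕ} (hq : q ∈ Icc 1 Z) :
    (q : ℝ) * ∑ x ∈ range q, (#{y ∈ B | y ≡ x [MOD q]} : ℝ) ^ 2 ≤ β * X * #B := by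
  obtain ⟨hq0, hqZ⟩ := mem_Icc.1 hq
  calc (q : ℝ) * ∑ x ∈ range q, (#{y ∈ B | y ≡ x [MOD q]} : ℝ) ^ 2
      = ∑ x ∈ range q, (q * #{y ∈ B | y ≡ x [MOD q]} : ℝ) * #{y ∈ B | y ≡ x [MOD q]} := by
        rw [mul_sum]
        exact sum_congr rfl fun x _ => by ring
    _ ≤ ∑ x ∈ range q, β * X * #{y ∈ B | y ≡ x [MOD q]} :=
        sum_le_sum fun x _ => mul_le_mul_of_nonneg_right (h q hq0 hqZ x) (Nat.cast_nonneg _)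
    _ = β * X * #B := by
        rw [← mul_sum, ← Nat.cast_sum, sum_card_filter_modEq B hq0]

theorem ClassBound.energy_le (h : ClassBound B X Z β) {q : ℕ} (hq : 2 ≤ q) (hqZ : q ≤ Z) :
    energy B X q ≤ #B * (β * X - #B) / (X : ℝ) ^ 2 := by
  have hq0 : 0 < q := by omega
  refine div_le_div_of_nonneg_right ?_ (sq_nonneg _)
  have hzero : ∑ a ∈ reducedResidues q, ‖expSum B (a / q)‖ ^ 2 + (#B : ℝ) ^ 2 ≤
      ∑ a ∈ range q, ‖expSum B (a / q)‖ ^ 2 := by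
    rw [← add_sum_erase (range q) _ (mem_range.2 hq0), add_comm]
    refine add_le_add (by simp [expSum, ee_zero]) ?_
    refine sum_le_sum_of_subset_of_nonneg (fun a ha => ?_) fun _ _ _ => sq_nonneg _
    obtain ⟨haq, hcop⟩ := mem_reducedResidues.1 ha
    refine mem_erase.2 ⟨?_, mem_range.2 haq⟩
    rintro rfl
    exact absurd ((Nat.coprime_zero_left q).1 hcop) (by omega)
  rw [sum_norm_expSum_sq B hq0] at hzero
  linarith [h.mul_sum_card_sq_le (mem_Icc.2 ⟨hq0, hqZ⟩)]

end ClassBound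

/-! ### The moment method for the energy -/

theorem pow_sum_le_card_pow_mul_sum {ι : Type*} (s : Finset ι) (f : ι → ℝ) {n : ℕ}
    (hn : Even (n + 1)) : (∑ i ∈ s, f i) ^ (n + 1) ≤ (#s : ℝ) ^ n * ∑ i ∈ s, f i ^ (n + 1) := by
  rcases s.eq_empty_or_nonempty with rfl | hs
  · simp
  have habs := pow_sum_div_card_le_sum_pow (s := s) (f := fun i => |f i|)
    (fun i _ => abs_nonneg _) n
  have hcard : (0 : ℝ) < (#s : ℝ) ^ n := pow_pos (Nat.cast_pos.2 hs.card_pos) n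
  rw [div_le_iff₀ hcard] at habs
  simp_rw [hn.pow_abs] at habs
  calc (∑ i ∈ s, f i) ^ (n + 1) = |∑ i ∈ s, f i| ^ (n + 1) := (hn.pow_abs _).symm
    _ ≤ (∑ i ∈ s, |f i|) ^ (n + 1) :=
        pow_le_pow_left₀ (abs_nonneg _) (abs_sum_le_sum_abs _ _) _
    _ ≤ (#s : ℝ) ^ n * ∑ i ∈ s, f i ^ (n + 1) := habs.trans_eq (mul_comm _ _)

section EnergyMoments

variable {B 𝒬 : Finset ℕ} {X Z k T : ℕ} {β r : ℝ}

theorem sum_sum_primitivePart (B 𝒬 : Finset ℕ) (hX : X ≠ 0) :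
    ∑ y ∈ B, ∑ q ∈ 𝒬, primitivePart B X q y = X * ∑ q ∈ 𝒬, energy B X q := by
  rw [sum_comm, mul_sum]
  exact sum_congr rfl fun q _ => sum_primitivePart B hX q

theorem ClassBound.abs_primitivePart_le_mul (h : ClassBound B X Z β) (hX : 0 < X) {q : ℕ}
    (hq : q ∈ Icc 1 Z) (hT : #q.divisors ≤ T) (x : ℕ) : |primitivePart B X q x| ≤ T * β :=
  have hZ : 1 ≤ Z := (mem_Icc.1 hq).1.trans (mem_Icc.1 hq).2
  (h.abs_primitivePart_le hX hq x).trans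
    (mul_le_mul_of_nonneg_right (Nat.cast_le.2 hT) (h.nonneg hZ hX))

theorem ClassBound.sum_energy_pow_le (h : ClassBound B X Z β) (hX : 0 < X) (hZ : 1 ≤ Z)
    (hB : B ⊆ range X) (h𝒬 : 𝒬 ⊆ Icc 1 Z) (hT : ∀ q ∈ 𝒬, #q.divisors ≤ T) (hk : 1 ≤ k) :
    (∑ q ∈ 𝒬, energy B X q) ^ (2 * k) ≤ β ^ (2 * k - 1) *
      ((∑ t ∈ admissibleTuples (2 * k) 𝒬, (1 : ℝ) / (univ.lcm t : ℕ) *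
          |∑ x ∈ range (univ.lcm t), ∏ i, primitivePart B X (t i) x|) +
        (#𝒬 : ℝ) ^ (2 * k) * (Z : ℝ) ^ (2 * k) * (T * β) ^ (2 * k) / X) := by
  have hX' : (0 : ℝ) < X := Nat.cast_pos.2 hX
  have heven : Even (2 * k) := even_two_mul k
  have hmoment := sum_pow_le_sum_admissible (2 * k) X Z 𝒬 (primitivePart B X) (T * β) h𝒬
    (fun q _ => primitivePart_periodic B X q)
    (fun q hq d x hd => sum_primitivePart_progression B X (mem_Icc.1 (h𝒬 hq)).1 hd x)
    (fun q hq => h.abs_primitivePart_le_mul hX (h𝒬 hq) (hT q hq))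
  obtain ⟨n, hn⟩ : ∃ n, 2 * k = n + 1 := ⟨2 * k - 1, by omega⟩
  have hholder := pow_sum_le_card_pow_mul_sum B (fun y => ∑ q ∈ 𝒬, primitivePart B X q y)
    (hn ▸ heven)
  rw [sum_sum_primitivePart B 𝒬 hX.ne', ← hn] at hholder
  have hextend : ∑ y ∈ B, (∑ q ∈ 𝒬, primitivePart B X q y) ^ (2 * k) ≤
      ∑ y ∈ range X, (∑ q ∈ 𝒬, primitivePart B X q y) ^ (2 * k) :=
    sum_le_sum_of_subset_of_nonneg hB fun _ _ _ => heven.pow_nonneg _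
  refine le_of_mul_le_mul_left ?_ (pow_pos hX' (2 * k))
  calc (X : ℝ) ^ (2 * k) * (∑ q ∈ 𝒬, energy B X q) ^ (2 * k)
      ≤ (#B : ℝ) ^ n * ∑ y ∈ B, (∑ q ∈ 𝒬, primitivePart B X q y) ^ (2 * k) := by
        rwa [← mul_pow]
    _ ≤ (β * X) ^ n * ((∑ t ∈ admissibleTuples (2 * k) 𝒬, (X : ℝ) / (univ.lcm t : ℕ) *
          |∑ x ∈ range (univ.lcm t), ∏ i, primitivePart B X (t i) x|) +
            (#𝒬 : ℝ) ^ (2 * k) * (Z : ℝ) ^ (2 * k) * (T * β) ^ (2 * k)) :=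
        mul_le_mul (pow_le_pow_left₀ (Nat.cast_nonneg _) (h.card_le hZ) _)
          (hextend.trans hmoment) (sum_nonneg fun _ _ => heven.pow_nonneg _)
          (pow_nonneg (mul_nonneg (h.nonneg hZ hX) hX'.le) _)
    _ = _ := by
        have hscale : ∑ t ∈ admissibleTuples (2 * k) 𝒬, (X : ℝ) / (univ.lcm t : ℕ) *
            |∑ x ∈ range (univ.lcm t), ∏ i, primitivePart B X (t i) x| =
            X * ∑ t ∈ admissibleTuples (2 * k) 𝒬, (1 : ℝ) / (univ.lcm t : ℕ) *
              |∑ x ∈ range (univ.lcm t), ∏ i, primitivePart B X (t i) x| := by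
          rw [mul_sum]
          exact sum_congr rfl fun t _ => by ring
        rw [hscale, show 2 * k - 1 = n by omega, hn, mul_pow, pow_succ (X : ℝ) n]
        field_simp

theorem Admissible.abs_sum_prod_primitivePart_le {t : Fin (2 * k) → ℕ} (ht : Admissible t)
    (htZ : ∀ i, t i ∈ Icc 1 Z) (hr : ∀ i, energy B X (t i) ≤ r) (hr0 : 0 ≤ r) :
    |∑ x ∈ range (univ.lcm t), ∏ i, primitivePart B X (t i) x| ≤ (Z * r) ^ k := by
  calc |∑ x ∈ range (univ.lcm t), ∏ i, primitivePart B X (t i) x|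
      ≤ ∏ i, √(∑ y ∈ range (t i), primitivePart B X (t i) y ^ 2) :=
        ht.abs_sum_prod_le (fun i => Nat.one_le_iff_ne_zero.1 (mem_Icc.1 (htZ i)).1)
          (fun i => primitivePart_periodic B X (t i))
    _ ≤ ∏ _i : Fin (2 * k), √(Z * r) :=
        prod_le_prod (fun i _ => Real.sqrt_nonneg _) fun i _ => Real.sqrt_le_sqrt <|
          (sum_primitivePart_sq_le B X (t i)).trans <|
            mul_le_mul (Nat.cast_le.2 (mem_Icc.1 (htZ i)).2) (hr i) (energy_nonneg _ _ _)
              (Nat.cast_nonneg _)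
    _ = (Z * r) ^ k := by
        rw [prod_const, card_univ, Fintype.card_fin, pow_mul, Real.sq_sqrt (by positivity)]

theorem ClassBound.sum_energy_pow_le_of_energy_le (h : ClassBound B X Z β) (hX : 0 < X)
    (hZ : 1 ≤ Z) (hB : B ⊆ range X) (h𝒬 : 𝒬 ⊆ Icc 1 Z) (hr : ∀ q ∈ 𝒬, energy B X q ≤ r)
    (hr0 : 0 ≤ r) (hk : 1 ≤ k) :
    (∑ q ∈ 𝒬, energy B X q) ^ (2 * k) ≤ β ^ (2 * k - 1) *
      ((Z * r) ^ k * (1 + k * Real.log Z) ^ 4 ^ k +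
        (Z : ℝ) ^ (4 * k) * (Z * β) ^ (2 * k) / X) := by
  have hβ := h.nonneg hZ hX
  refine (h.sum_energy_pow_le hX hZ hB h𝒬 (T := Z)
    (fun q hq => (Nat.card_divisors_le_self q).trans (mem_Icc.1 (h𝒬 hq)).2) hk).trans ?_
  refine mul_le_mul_of_nonneg_left (add_le_add ?_ ?_) (pow_nonneg hβ _)
  · calc ∑ t ∈ admissibleTuples (2 * k) 𝒬, (1 : ℝ) / (univ.lcm t : ℕ) *
          |∑ x ∈ range (univ.lcm t), ∏ i, primitivePart B X (t i) x|
        ≤ ∑ t ∈ admissibleTuples (2 * k) 𝒬, (1 : ℝ) / (univ.lcm t : ℕ) * (Z * r) ^ k := by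
          refine sum_le_sum fun t ht => mul_le_mul_of_nonneg_left ?_ (by positivity)
          obtain ⟨ht𝒬, hadm⟩ := mem_admissibleTuples.1 ht
          exact hadm.abs_sum_prod_primitivePart_le (fun i => h𝒬 (ht𝒬 i)) (fun i => hr _ (ht𝒬 i))
            hr0
      _ ≤ (Z * r) ^ k * (1 + k * Real.log Z) ^ 4 ^ k := by
          rw [← sum_mul, mul_comm]
          exact mul_le_mul_of_nonneg_left (sum_admissible_one_div_lcm_le k h𝒬)
            (pow_nonneg (mul_nonneg (Nat.cast_nonneg _) hr0) k)
  · have hcard : (#𝒬 : ℝ) ≤ Z := by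
      have hle := card_le_card h𝒬
      rw [Nat.card_Icc, Nat.add_sub_cancel] at hle
      exact_mod_cast hle
    rw [show 4 * k = 2 * k + 2 * k by ring, pow_add]
    gcongr

theorem ClassBound.one_div_lcm_mul_abs_sum_le (h : ClassBound B X Z β) (hX : 0 < X) {n : ℕ}
    {t : Fin n → ℕ} (htZ : ∀ i, t i ∈ Icc 1 Z) (hT : ∀ i, #(t i).divisors ≤ T) :
    (1 : ℝ) / (univ.lcm t : ℕ) * |∑ x ∈ range (univ.lcm t), ∏ i, primitivePart B X (t i) x| ≤
      (T * β) ^ n := by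
  have hlcm : (0 : ℝ) < (univ.lcm t : ℕ) := by
    exact_mod_cast Nat.pos_of_ne_zero
      (Finset.lcm_ne_zero_iff.2 fun i _ => Nat.one_le_iff_ne_zero.1 (mem_Icc.1 (htZ i)).1)
  rw [one_div, inv_mul_le_iff₀ hlcm]
  calc |∑ x ∈ range (univ.lcm t), ∏ i, primitivePart B X (t i) x|
      ≤ ∑ x ∈ range (univ.lcm t), ∏ i, |primitivePart B X (t i) x| := by
        simp only [← abs_prod]
        exact abs_sum_le_sum_abs _ _
    _ ≤ ∑ _x ∈ range (univ.lcm t), ∏ _i : Fin n, (T * β : ℝ) :=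
        sum_le_sum fun x _ => prod_le_prod (fun i _ => abs_nonneg _) fun i _ =>
          h.abs_primitivePart_le_mul hX (htZ i) (hT i) x
    _ = (univ.lcm t : ℕ) * (T * β) ^ n := by simp

theorem ClassBound.sum_energy_pow_le_card_admissible (h : ClassBound B X Z β) (hX : 0 < X)
    (hZ : 1 ≤ Z) (hB : B ⊆ range X) (h𝒬 : 𝒬 ⊆ Icc 1 Z) (hT : ∀ q ∈ 𝒬, #q.divisors ≤ T)
    (hk : 1 ≤ k) :
    (∑ q ∈ 𝒬, energy B X q) ^ (2 * k) ≤ β ^ (2 * k - 1) *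
      ((#(admissibleTuples (2 * k) 𝒬) : ℝ) * (T * β) ^ (2 * k) +
        (#𝒬 : ℝ) ^ (2 * k) * (Z : ℝ) ^ (2 * k) * (T * β) ^ (2 * k) / X) := by
  refine (h.sum_energy_pow_le hX hZ hB h𝒬 hT hk).trans ?_
  refine mul_le_mul_of_nonneg_left (add_le_add ?_ le_rfl) (pow_nonneg (h.nonneg hZ hX) _)
  rw [← nsmul_eq_mul, ← sum_const]
  refine sum_le_sum fun t ht => ?_
  have ht𝒬 := (mem_admissibleTuples.1 ht).1
  exact h.one_div_lcm_mul_abs_sum_le hX (fun i => h𝒬 (ht𝒬 i)) (fun i => hT _ (ht𝒬 i))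

end EnergyMoments

/-! ### Quadratic Weyl sums -/

theorem norm_ee_sub_one (x : ℝ) : ‖ee x - 1‖ = 2 * |Real.sin (Real.pi * x)| := by
  have harg : 2 * (Real.pi : ℂ) * Complex.I * x = Complex.I * ((2 * Real.pi * x : ℝ) : ℂ) := by
    push_cast
    ring
  rw [ee_def, harg, Complex.norm_exp_I_mul_ofReal_sub_one, norm_mul, Real.norm_eq_abs,
    Real.norm_eq_abs, abs_two, mul_assoc, mul_div_cancel_left₀ _ two_ne_zero]

theorem norm_ee_sub_one_le (x : ℝ) : ‖ee x - 1‖ ≤ 2 * Real.pi * |x| := by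
  have h := Real.abs_sin_le_abs (x := Real.pi * x)
  rw [abs_mul, abs_of_pos Real.pi_pos] at h
  rw [norm_ee_sub_one]
  linarith

theorem le_norm_ee_sub_one (x : ℝ) : 4 * |x - round x| ≤ ‖ee x - 1‖ := by
  have hshift : ee x = ee (x - round x) := by
    rw [← ee_add_int (x - round x) (round x), sub_add_cancel]
  have harg : |Real.pi * (x - round x)| ≤ Real.pi / 2 := by
    rw [abs_mul, abs_of_pos Real.pi_pos, div_eq_mul_one_div]
    exact mul_le_mul_of_nonneg_left (abs_sub_round x) Real.pi_pos.le
  have hsin := Real.mul_abs_le_abs_sin harg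
  rw [abs_mul, abs_of_pos Real.pi_pos, ← mul_assoc, div_mul_cancel₀ _ Real.pi_ne_zero] at hsin
  rw [hshift, norm_ee_sub_one]
  linarith

theorem norm_sum_range_ee_le (M : ℕ) (φ : ℕ → ℝ) : ‖∑ n ∈ range M, ee (φ n)‖ ≤ M := by
  simpa only [norm_ee, sum_const, card_range, nsmul_eq_mul, mul_one] using
    norm_sum_le (range M) fun n => ee (φ n)

theorem norm_geom_sum_ee_le (φ : ℝ) {η : ℝ} (hη : 0 < η) (h : η ≤ |φ - round φ|) (k : ℕ) :
    ‖∑ n ∈ range k, ee (n * φ)‖ ≤ 1 / (2 * η) := by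
  have hlow : 4 * η ≤ ‖ee φ - 1‖ := by linarith [le_norm_ee_sub_one φ]
  have hpos : 0 < ‖ee φ - 1‖ := by linarith
  have hnum : ‖ee φ ^ k - 1‖ ≤ 2 := by
    refine (norm_sub_le _ _).trans_eq ?_
    rw [norm_pow, norm_ee]
    norm_num
  simp_rw [ee_nat_mul]
  rw [geom_sum_eq (sub_ne_zero.1 (norm_pos_iff.1 hpos)), norm_div,
    div_le_div_iff₀ hpos (by positivity)]
  nlinarith

theorem sum_sum_range_eq_sum_sum_shift {R : Type*} [AddCommMonoid R] (F : ℕ → ℕ → R) (M : ℕ) :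
    ∑ m ∈ range M, ∑ n ∈ range m, F m n = ∑ h ∈ Ico 1 M, ∑ n ∈ range (M - h), F (n + h) n := by
  rw [sum_sigma', sum_sigma']
  refine sum_nbij' (fun p => ⟨p.1 - p.2, p.2⟩) (fun p => ⟨p.2 + p.1, p.2⟩) ?_ ?_ ?_ ?_ ?_ <;>
    rintro ⟨a, b⟩ h <;> simp only [mem_sigma, mem_range, mem_Ico] at h ⊢
  · omega
  · omega
  · rw [Nat.add_sub_cancel' h.2.le]
  · rw [Nat.add_sub_cancel_left]
  · rw [Nat.add_sub_cancel' h.2.le]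

theorem norm_sum_sq_eq (z : ℕ → ℂ) (M : ℕ) :
    ‖∑ n ∈ range M, z n‖ ^ 2 = ∑ n ∈ range M, ‖z n‖ ^ 2 +
      2 * (∑ m ∈ range M, ∑ n ∈ range m, z m * (starRingEnd ℂ) (z n)).re := by
  induction M with
  | zero => simp
  | succ M ih =>
    rw [sum_range_succ, sum_range_succ, sum_range_succ, add_comm (∑ n ∈ range M, z n),
      ← Complex.normSq_eq_norm_sq, Complex.normSq_add, Complex.normSq_eq_norm_sq,
      Complex.normSq_eq_norm_sq, ih, Complex.add_re, map_sum, mul_sum]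
    ring

theorem norm_sum_sq_le_differencing (z : ℕ → ℂ) (M : ℕ) :
    ‖∑ n ∈ range M, z n‖ ^ 2 ≤ ∑ n ∈ range M, ‖z n‖ ^ 2 +
      2 * ∑ h ∈ Ico 1 M, ‖∑ n ∈ range (M - h), z (n + h) * (starRingEnd ℂ) (z n)‖ := by
  rw [norm_sum_sq_eq, sum_sum_range_eq_sum_sum_shift fun m n => z m * (starRingEnd ℂ) (z n)]
  gcongr
  exact (Complex.re_le_norm _).trans (norm_sum_le _ _)

/-- The quadratic Weyl sum over the squares of `1, …, M`. -/
noncomputable def weylSum (M : ℕ) (θ : ℝ) : ℂ := ∑ n ∈ range M, ee (((n : ℝ) + 1) ^ 2 * θ)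

theorem norm_weylSum_sq_le (M : ℕ) (θ : ℝ) :
    ‖weylSum M θ‖ ^ 2 ≤ M + 2 * ∑ h ∈ Ico 1 M, ‖∑ n ∈ range (M - h), ee (n * (h * (2 * θ)))‖ := by
  have hdiff : ∀ h n : ℕ,
      ee (((n + h : ℕ) + 1 : ℝ) ^ 2 * θ) * (starRingEnd ℂ) (ee (((n : ℝ) + 1) ^ 2 * θ)) =
        ee (n * (h * (2 * θ))) * ee ((h ^ 2 + 2 * h) * θ) := fun h n => by
    rw [conj_ee, ← ee_add, ← ee_add]
    congr 1
    push_cast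
    ring
  refine (norm_sum_sq_le_differencing _ _).trans_eq ?_
  simp only [norm_ee, one_pow, sum_const, card_range, nsmul_eq_mul, mul_one, hdiff, ← sum_mul,
    norm_mul]

/-- The fraction `a / q` is an approximation of `ψ` as provided by Dirichlet's theorem with
denominators up to `2M`. -/
structure DirichletApprox (M : ℕ) (ψ : ℝ) (q : ℕ) (a : ℤ) : Prop where
  den_pos : 0 < q
  den_le : q ≤ 2 * M
  coprime : IsCoprime a (q : ℤ)
  abs_sub_le : |ψ - a / q| ≤ 1 / (2 * M * q)

theorem exists_dirichletApprox {M : ℕ} (hM : 0 < M) (ψ : ℝ) : ∃ q a, DirichletApprox M ψ q a := by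
  obtain ⟨r, hr, hrM⟩ := Real.exists_rat_abs_sub_le_and_den_le ψ (n := 2 * M) (by omega)
  refine ⟨r.den, r.num, r.den_pos, hrM, Rat.isCoprime_num_den r, ?_⟩
  have hden : (0 : ℝ) < r.den := Nat.cast_pos.2 r.den_pos
  rw [show (r.num : ℝ) / r.den = r by exact_mod_cast Rat.num_div_den r]
  refine hr.trans (one_div_le_one_div_of_le (by positivity) ?_)
  push_cast
  linarith

/-- The `h` in `[1, M)` for which `hψ` has distance less than `η` to the nearest integer. -/
noncomputable def nearMultiples (M : ℕ) (ψ η : ℝ) : Finset ℕ :=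
  {h ∈ Ico 1 M | |(h : ℕ) * ψ - round (h * ψ)| < η}

theorem mem_nearMultiples {M h : ℕ} {ψ η : ℝ} :
    h ∈ nearMultiples M ψ η ↔ (1 ≤ h ∧ h < M) ∧ |h * ψ - round (h * ψ)| < η := by
  rw [nearMultiples, mem_filter, mem_Ico]

theorem card_Ico_filter_dvd_le (M q : ℕ) : (#{h ∈ Ico 1 M | q ∣ h} : ℝ) ≤ M / q := by
  have hle : #{h ∈ Ico 1 M | q ∣ h} ≤ M / q := by
    rw [← Nat.Ioc_filter_dvd_card_eq_div]
    refine card_le_card fun h hh => ?_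
    simp only [mem_filter, mem_Ico, mem_Ioc] at hh ⊢
    exact ⟨⟨by omega, by omega⟩, hh.2⟩
  exact (Nat.cast_le.2 hle).trans Nat.cast_div_le

namespace DirichletApprox

variable {M q : ℕ} {a : ℤ} {ψ η : ℝ}

theorem bound_pos (happ : DirichletApprox M ψ q a) : 0 < M := by
  linarith [happ.den_pos, happ.den_le]

theorem abs_mul_sub_le (happ : DirichletApprox M ψ q a) {x : ℝ} (hx : |x| ≤ M) :
    |x * (ψ - a / q)| ≤ 1 / (2 * q) := by
  have hM : (0 : ℝ) < M := Nat.cast_pos.2 happ.bound_pos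
  calc |x * (ψ - a / q)| = |x| * |ψ - a / q| := abs_mul _ _
    _ ≤ M * (1 / (2 * M * q)) := mul_le_mul hx happ.abs_sub_le (abs_nonneg _) hM.le
    _ = 1 / (2 * q) := by field_simp

theorem le_abs_mul_sub_of_not_dvd (happ : DirichletApprox M ψ q a) {h z : ℤ} (hh : |h| ≤ M)
    (hd : ¬(q : ℤ) ∣ h) : 1 / (2 * (q : ℝ)) ≤ |h * ψ - z| := by
  have hq : (0 : ℝ) < q := Nat.cast_pos.2 happ.den_pos
  have hne : h * a - z * q ≠ 0 := fun h0 => hd <|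
    happ.coprime.symm.dvd_of_dvd_mul_right ⟨z, by linarith⟩
  have hone : (1 : ℝ) ≤ |(h * a - z * q : ℝ)| := by exact_mod_cast Int.one_le_abs hne
  have hfrac : 1 / (q : ℝ) ≤ |(h : ℝ) * (a / q) - z| := by
    rw [show (h : ℝ) * (a / q) - z = (h * a - z * q) / q by field_simp, abs_div, abs_of_pos hq]
    exact div_le_div_of_nonneg_right hone hq.le
  have herr : |(h : ℝ) * (ψ - a / q)| ≤ 1 / (2 * q) := happ.abs_mul_sub_le (by exact_mod_cast hh)
  have htri := abs_sub (h * ψ - z) ((h : ℝ) * (ψ - a / q))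
  rw [show h * ψ - z - h * (ψ - a / q) = (h : ℝ) * (a / q) - z by ring] at htri
  have hhalf : 1 / (q : ℝ) = 1 / (2 * q) + 1 / (2 * q) := by
    field_simp
    norm_num
  linarith

theorem injOn_div_floor (happ : DirichletApprox M ψ q a) :
    Set.InjOn (fun h : ℕ => (h / q, ⌊2 * (q : ℝ) * (h * ψ - round (h * ψ))⌋))
      (nearMultiples M ψ η) := by
  intro h hh h' hh' he
  obtain ⟨hhM, -⟩ := mem_nearMultiples.1 (mem_coe.1 hh)
  obtain ⟨hhM', -⟩ := mem_nearMultiples.1 (mem_coe.1 hh')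
  obtain ⟨hdiv, hfloor⟩ := Prod.mk.inj he
  have hq : (0 : ℝ) < q := Nat.cast_pos.2 happ.den_pos
  by_contra hne
  have hndvd : ¬(q : ℤ) ∣ (h : ℤ) - h' := by
    intro hd
    have hmod : h % q = h' % q := (Nat.modEq_iff_dvd.2 hd).symm
    exact hne (by rw [← Nat.div_add_mod h q, ← Nat.div_add_mod h' q, hdiv, hmod])
  have hsep := happ.le_abs_mul_sub_of_not_dvd (z := round (h * ψ) - round (h' * ψ))
    (abs_le.2 ⟨by omega, by omega⟩) hndvd
  have hclose := Int.abs_sub_lt_one_of_floor_eq_floor hfloor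
  rw [← mul_sub, abs_mul, abs_of_pos (by positivity)] at hclose
  push_cast at hsep
  rw [show ((h : ℝ) - h') * ψ - (round (h * ψ) - round (h' * ψ)) =
      (h * ψ - round (h * ψ)) - (h' * ψ - round (h' * ψ)) by ring,
    div_le_iff₀ (by positivity)] at hsep
  linarith

theorem card_nearMultiples_le (happ : DirichletApprox M ψ q a) (hη : 0 ≤ η) :
    (#(nearMultiples M ψ η) : ℝ) ≤ ((M : ℝ) / q + 1) * (4 * q * η + 3) := by
  have hq : (0 : ℝ) < q := Nat.cast_pos.2 happ.den_pos
  set c : ℤ := ⌈2 * (q : ℝ) * η⌉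
  have hc : 0 ≤ c := Int.ceil_nonneg (by positivity)
  have hcard : #(nearMultiples M ψ η) ≤ #(range (M / q + 1) ×ˢ Icc (-c) c) := by
    refine card_le_card_of_injOn _ (fun h hh => ?_) happ.injOn_div_floor
    obtain ⟨⟨-, hhM⟩, hnear⟩ := mem_nearMultiples.1 (mem_coe.1 hh)
    obtain ⟨hlow, hup⟩ := abs_lt.1 hnear
    have hceil := Int.le_ceil (2 * (q : ℝ) * η)
    simp only [coe_product, Set.mem_prod, mem_coe, mem_range, mem_Icc]
    refine ⟨Nat.lt_succ_of_le (Nat.div_le_div_right hhM.le), Int.le_floor.2 ?_, ?_⟩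
    · push_cast
      nlinarith
    · rw [← Int.floor_intCast (R := ℝ) c]
      exact Int.floor_mono (by nlinarith)
  rw [card_product, card_range, Int.card_Icc] at hcard
  have hwidth : (((c + 1 - -c).toNat : ℕ) : ℝ) = 2 * c + 1 := by
    have : (((c + 1 - -c).toNat : ℕ) : ℤ) = 2 * c + 1 := by omega
    exact_mod_cast this
  have hc' : (0 : ℝ) ≤ c := Int.cast_nonneg hc
  have hdiv : ((M / q : ℕ) : ℝ) ≤ (M : ℝ) / q := Nat.cast_div_le
  have hceil := (Int.ceil_lt_add_one (2 * (q : ℝ) * η)).le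
  calc (#(nearMultiples M ψ η) : ℝ) ≤ ((M / q + 1) * (c + 1 - -c).toNat : ℕ) := by
        exact_mod_cast hcard
    _ = ((M / q : ℕ) + 1) * (2 * c + 1) := by
        push_cast [hwidth]
        ring
    _ ≤ (M / q + 1) * (4 * q * η + 3) :=
        mul_le_mul (by linarith) (by linarith) (by linarith) (by positivity)

theorem dvd_of_mem_nearMultiples (happ : DirichletApprox M ψ q a) (hη : η ≤ 1 / (2 * q)) {h : ℕ}
    (hh : h ∈ nearMultiples M ψ η) : q ∣ h := by
  obtain ⟨hhM, hnear⟩ := mem_nearMultiples.1 hh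
  by_contra hd
  have hsep := happ.le_abs_mul_sub_of_not_dvd (h := h) (z := round (h * ψ))
    (abs_le.2 ⟨by omega, by omega⟩) (by exact_mod_cast hd)
  push_cast at hsep
  linarith

theorem mul_abs_sub_lt_of_mem_nearMultiples (happ : DirichletApprox M ψ q a)
    (hη : η ≤ 1 / (2 * q)) {h : ℕ} (hh : h ∈ nearMultiples M ψ η) : h * |ψ - a / q| < η := by
  obtain ⟨⟨-, hhM⟩, hnear⟩ := mem_nearMultiples.1 hh
  have hq : (1 : ℝ) ≤ q := by exact_mod_cast happ.den_pos
  have habs : |(h : ℝ) * (ψ - a / q)| = h * |ψ - a / q| := by rw [abs_mul, Nat.abs_cast]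
  have hsmall : |(h : ℝ) * (ψ - a / q)| ≤ 1 / (2 * q) :=
    happ.abs_mul_sub_le (by rw [Nat.abs_cast]; exact_mod_cast hhM.le)
  obtain ⟨w, hw⟩ := happ.dvd_of_mem_nearMultiples hη hh
  have hw' : (h : ℝ) = q * w := by exact_mod_cast hw
  have hsplit : (h : ℝ) * ψ - round (h * ψ) =
      h * (ψ - a / q) - (round (h * ψ) - w * a : ℤ) := by
    push_cast
    rw [hw']
    field_simp
    ring
  have hround : round (h * ψ) - w * a = 0 := by
    by_contra hne
    have hone : (1 : ℝ) ≤ |((round (h * ψ) - w * a : ℤ) : ℝ)| := by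
      exact_mod_cast Int.one_le_abs hne
    have hhalf : 1 / (2 * (q : ℝ)) ≤ 1 / 2 :=
      one_div_le_one_div_of_le two_pos (by linarith)
    have htri := abs_sub_abs_le_abs_sub ((round (h * ψ) - w * a : ℤ) : ℝ) (h * (ψ - a / q))
    rw [abs_sub_comm, ← hsplit] at htri
    linarith
  rwa [hsplit, hround, Int.cast_zero, sub_zero, habs] at hnear

theorem card_nearMultiples_mul_le (happ : DirichletApprox M ψ q a) (hη : 0 ≤ η)
    (hηq : η ≤ 1 / (2 * q)) : (#(nearMultiples M ψ η) : ℝ) * (q * |ψ - a / q|) ≤ η := by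
  rcases (nearMultiples M ψ η).eq_empty_or_nonempty with hempty | hne
  · simpa [hempty] using hη
  set m := (nearMultiples M ψ η).max' hne
  have hdvd : ∀ h ∈ nearMultiples M ψ η, q ∣ h := fun h => happ.dvd_of_mem_nearMultiples hηq
  have hcard : #(nearMultiples M ψ η) ≤ m / q := by
    refine (card_le_card_of_injOn (t := Ioc 0 (m / q)) (· / q) (fun h hh => ?_)
      (fun h hh h' hh' he => ?_)).trans_eq (Nat.card_Ioc _ _)
    · exact mem_coe.2 <| mem_Ioc.2 ⟨Nat.div_pos
        (Nat.le_of_dvd (mem_nearMultiples.1 hh).1.1 (hdvd h hh)) happ.den_pos,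
        Nat.div_le_div_right (le_max' _ h hh)⟩
    · exact Nat.div_left_inj (hdvd h hh) (hdvd h' hh') |>.1 he
  calc (#(nearMultiples M ψ η) : ℝ) * (q * |ψ - a / q|)
      = ((#(nearMultiples M ψ η) * q : ℕ) : ℝ) * |ψ - a / q| := by
        push_cast
        ring
    _ ≤ m * |ψ - a / q| := mul_le_mul_of_nonneg_right (Nat.cast_le.2
        ((Nat.mul_le_mul_right q hcard).trans (Nat.div_mul_le_self m q))) (abs_nonneg _)
    _ ≤ η := (happ.mul_abs_sub_lt_of_mem_nearMultiples hηq (max'_mem _ hne)).le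

theorem sum_norm_geom_sum_le (happ : DirichletApprox M ψ q a) :
    ∑ h ∈ Ico 1 M, ‖∑ n ∈ range (M - h), ee (n * (h * ψ))‖ ≤ (M : ℝ) / q * M + M * q := by
  have hq : (0 : ℝ) < q := Nat.cast_pos.2 happ.den_pos
  rw [← sum_filter_add_sum_filter_not (Ico 1 M) (fun h : ℕ => q ∣ h)]
  refine add_le_add ?_ ?_
  · refine (sum_le_card_nsmul _ _ (M : ℝ) fun h _ => (norm_sum_range_ee_le _ _).trans
      (Nat.cast_le.2 (Nat.sub_le M h))).trans ?_
    rw [nsmul_eq_mul]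
    exact mul_le_mul_of_nonneg_right (card_Ico_filter_dvd_le M q) (Nat.cast_nonneg M)
  · refine (sum_le_card_nsmul _ _ (q : ℝ) fun h hh => ?_).trans ?_
    · obtain ⟨hhM, hd⟩ := mem_filter.1 hh
      rw [mem_Ico] at hhM
      have hsep := happ.le_abs_mul_sub_of_not_dvd (h := h) (z := round (h * ψ))
        (abs_le.2 ⟨by omega, by omega⟩) (by exact_mod_cast hd)
      push_cast at hsep
      refine (norm_geom_sum_ee_le _ (by positivity) hsep _).trans_eq ?_
      field_simp
    · rw [nsmul_eq_mul]
      refine mul_le_mul_of_nonneg_right (Nat.cast_le.2 ((card_filter_le _ _).trans ?_)) hq.le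
      simp

end DirichletApprox

theorem sum_norm_geom_sum_le_card_nearMultiples (M : ℕ) (ψ : ℝ) {η : ℝ} (hη : 0 < η) :
    ∑ h ∈ Ico 1 M, ‖∑ n ∈ range (M - h), ee (n * (h * ψ))‖ ≤
      (#(nearMultiples M ψ η) : ℝ) * M + M * (1 / (2 * η)) := by
  rw [← sum_filter_add_sum_filter_not (Ico 1 M) (fun h : ℕ => |h * ψ - round (h * ψ)| < η)]
  refine add_le_add ?_ ?_
  · rw [← nsmul_eq_mul]
    exact sum_le_card_nsmul _ _ _ fun h _ => (norm_sum_range_ee_le _ _).trans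
      (Nat.cast_le.2 (Nat.sub_le M h))
  · refine (sum_le_card_nsmul _ _ (1 / (2 * η)) fun h hh =>
      norm_geom_sum_ee_le _ hη (not_lt.1 (mem_filter.1 hh).2) _).trans ?_
    rw [nsmul_eq_mul]
    refine mul_le_mul_of_nonneg_right (Nat.cast_le.2 ((card_filter_le _ _).trans ?_))
      (by positivity)
    simp

/-! ### Major arcs -/

section LargeWeylSum

variable {M K X : ℕ} {θ δ : ℝ}

theorem le_card_nearMultiples_of_le_norm_weylSum (hδ : 0 < δ) (hM : 4 ≤ δ ^ 2 * M)
    (h : δ * M ≤ ‖weylSum M θ‖) :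
    δ ^ 2 * M / 8 ≤ #(nearMultiples M (2 * θ) (2 / (δ ^ 2 * M))) := by
  have hM0 : (0 : ℝ) < M := (pos_iff_pos_of_mul_pos (by linarith)).1 (by positivity : 0 < δ ^ 2)
  set H := nearMultiples M (2 * θ) (2 / (δ ^ 2 * M))
  have hfar : 1 / (2 * (2 / (δ ^ 2 * M))) = δ ^ 2 * M / 4 := by
    field_simp
    norm_num
  have hsum := sum_norm_geom_sum_le_card_nearMultiples M (2 * θ)
    (by positivity : 0 < 2 / (δ ^ 2 * (M : ℝ)))
  rw [hfar] at hsum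
  have hsq : (δ * M) ^ 2 ≤ ‖weylSum M θ‖ ^ 2 := pow_le_pow_left₀ (by positivity) h 2
  have hscaled : (M : ℝ) * (δ ^ 2 * M / 2) ≤ M * (1 + 2 * (#H : ℝ)) := by
    linarith [norm_weylSum_sq_le M θ]
  linarith [le_of_mul_le_mul_left hscaled hM0]

theorem DirichletApprox.den_mul_sq_le {q : ℕ} {a : ℤ} (happ : DirichletApprox M (2 * θ) q a)
    (hδ : 0 < δ) (hδ1 : δ ≤ 1) (hM : 62208 ≤ δ ^ 4 * M) (h : δ * M ≤ ‖weylSum M θ‖) :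
    q * δ ^ 2 ≤ 144 := by
  have hM0 : (0 : ℝ) < M := Nat.cast_pos.2 happ.bound_pos
  have hq : (0 : ℝ) < q := Nat.cast_pos.2 happ.den_pos
  have hqM : (q : ℝ) ≤ 2 * M := by exact_mod_cast happ.den_le
  have hδ2 : δ ^ 4 * M ≤ δ ^ 2 * M :=
    mul_le_mul_of_nonneg_right (pow_le_pow_of_le_one hδ.le hδ1 (by norm_num)) hM0.le
  have hcard := (le_card_nearMultiples_of_le_norm_weylSum hδ (by linarith) h).trans
    (happ.card_nearMultiples_le (by positivity))
  have hup : ((M : ℝ) / q + 1) * (4 * q * (2 / (δ ^ 2 * M)) + 3) ≤ 24 / δ ^ 2 + 9 * M / q := by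
    have hblocks : (M : ℝ) / q + 1 ≤ 3 * M / q := by
      rw [div_add_one hq.ne']
      exact div_le_div_of_nonneg_right (by linarith) hq.le
    calc ((M : ℝ) / q + 1) * (4 * q * (2 / (δ ^ 2 * M)) + 3)
        ≤ 3 * M / q * (4 * q * (2 / (δ ^ 2 * M)) + 3) :=
          mul_le_mul_of_nonneg_right hblocks (by positivity)
      _ = 24 / δ ^ 2 + 9 * M / q := by
          field_simp
          ring
  have habsorb : 24 / δ ^ 2 ≤ δ ^ 2 * M / 16 := by
    rw [div_le_iff₀ (by positivity)]
    linarith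
  have hmain : δ ^ 2 * M / 16 ≤ 9 * M / q := by linarith
  rw [div_le_div_iff₀ (by norm_num) hq] at hmain
  exact le_of_mul_le_mul_left (by linarith : (M : ℝ) * (q * δ ^ 2) ≤ M * 144) hM0

theorem DirichletApprox.abs_two_mul_sub_le {q : ℕ} {a : ℤ} (happ : DirichletApprox M (2 * θ) q a)
    (hδ : 0 < δ) (hδ1 : δ ≤ 1) (hM : 62208 ≤ δ ^ 4 * M) (h : δ * M ≤ ‖weylSum M θ‖) :
    |2 * θ - a / q| ≤ 16 / (δ ^ 4 * M ^ 2) := by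
  have hM0 : (0 : ℝ) < M := Nat.cast_pos.2 happ.bound_pos
  have hq : (1 : ℝ) ≤ q := by exact_mod_cast happ.den_pos
  have hδ2 : δ ^ 4 * M ≤ δ ^ 2 * M :=
    mul_le_mul_of_nonneg_right (pow_le_pow_of_le_one hδ.le hδ1 (by norm_num)) hM0.le
  have hηq : 2 / (δ ^ 2 * M) ≤ 1 / (2 * (q : ℝ)) := by
    rw [div_le_div_iff₀ (by positivity) (by positivity)]
    have hscaled : δ ^ 2 * (q * 4) ≤ δ ^ 2 * (δ ^ 2 * M) := by
      linarith [happ.den_mul_sq_le hδ hδ1 hM h]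
    linarith [le_of_mul_le_mul_left hscaled (by positivity)]
  have hlow := le_card_nearMultiples_of_le_norm_weylSum hδ (by linarith) h
  have hmul : δ ^ 2 * M / 8 * |2 * θ - a / q| ≤ 2 / (δ ^ 2 * M) :=
    (mul_le_mul hlow (le_mul_of_one_le_left (abs_nonneg _) hq) (abs_nonneg _)
      (Nat.cast_nonneg _)).trans (happ.card_nearMultiples_mul_le (by positivity) hηq)
  rw [le_div_iff₀ (by positivity)] at hmul ⊢
  linarith

theorem DirichletApprox.norm_weylSum_sq_mul_le {q : ℕ} {a : ℤ}
    (happ : DirichletApprox M (2 * θ) q a) (hqM : 3 * q ^ 2 ≤ M) :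
    ‖weylSum M θ‖ ^ 2 * q ≤ 3 * M ^ 2 := by
  have hq : (1 : ℝ) ≤ q := by exact_mod_cast happ.den_pos
  have hqM' : 3 * (q : ℝ) ^ 2 ≤ M := by exact_mod_cast hqM
  calc ‖weylSum M θ‖ ^ 2 * q ≤ (M + 2 * (M / q * M + M * q)) * q :=
        mul_le_mul_of_nonneg_right ((norm_weylSum_sq_le M θ).trans <|
          by linarith [happ.sum_norm_geom_sum_le]) (by linarith)
    _ = 2 * M ^ 2 + M * (q + 2 * q ^ 2) := by
        field_simp
        ring
    _ ≤ 2 * M ^ 2 + M * M :=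
        add_le_add le_rfl (mul_le_mul_of_nonneg_left (by nlinarith) (Nat.cast_nonneg M))
    _ = 3 * M ^ 2 := by ring

theorem exists_mem_reducedResidues_add_int_eq (r : ℚ) :
    ∃ a ∈ reducedResidues r.den, ∃ z : ℤ, (r : ℝ) = a / r.den + z := by
  have hden : (0 : ℤ) < r.den := Nat.cast_pos.2 r.den_pos
  have hmod : ((r.num % r.den).toNat : ℤ) = r.num % r.den :=
    Int.toNat_of_nonneg (Int.emod_nonneg _ hden.ne')
  refine ⟨(r.num % r.den).toNat, mem_reducedResidues.2 ⟨?_, ?_⟩, r.num / r.den, ?_⟩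
  · have := Int.emod_lt_of_pos r.num hden
    omega
  · have hcop := Rat.isCoprime_num_den r
    rw [← Int.emod_add_mul_ediv r.num r.den] at hcop
    rw [← Nat.isCoprime_iff_coprime, hmod]
    exact IsCoprime.of_add_mul_left_left hcop
  · have hden' : (r.den : ℝ) ≠ 0 := Nat.cast_ne_zero.2 r.den_pos.ne'
    have hnum : (r.num : ℝ) = (r.num % r.den).toNat + r.den * ((r.num / r.den : ℤ) : ℝ) := by
      exact_mod_cast (by rw [hmod, Int.emod_add_mul_ediv] :
        r.num = (r.num % r.den).toNat + r.den * (r.num / r.den))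
    rw [show (r : ℝ) = r.num / r.den by exact_mod_cast (Rat.num_div_den r).symm]
    rw [hnum]
    field_simp

theorem exists_reducedResidues_approx_of_le_norm_weylSum (hδ : 0 < δ) (hδ1 : δ ≤ 1)
    (hM : 62208 ≤ δ ^ 4 * M) (hK : 288 ≤ K * δ ^ 2) (h : δ * M ≤ ‖weylSum M θ‖) :
    ∃ q ∈ Icc 1 K, ∃ a ∈ reducedResidues q, ∃ z : ℤ,
      |θ - a / q - z| ≤ 8 / (δ ^ 4 * M ^ 2) ∧ ‖weylSum M θ‖ ^ 2 * q ≤ 6 * M ^ 2 := by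
  have hM0 : (0 : ℝ) < M := (pos_iff_pos_of_mul_pos (by linarith)).1 (by positivity : 0 < δ ^ 4)
  obtain ⟨q, b, happ⟩ := exists_dirichletApprox (Nat.cast_pos.1 hM0) (2 * θ)
  have hq : (0 : ℝ) < q := Nat.cast_pos.2 happ.den_pos
  have hqδ := happ.den_mul_sq_le hδ hδ1 hM h
  have hqM : 3 * (q : ℝ) ^ 2 ≤ M := by
    have hsq : (q * δ ^ 2) ^ 2 ≤ 144 ^ 2 := pow_le_pow_left₀ (by positivity) hqδ 2
    have hscaled : δ ^ 4 * (3 * (q : ℝ) ^ 2) ≤ δ ^ 4 * M := by linarith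
    exact le_of_mul_le_mul_left hscaled (by positivity)
  set r : ℚ := Rat.divInt b (2 * q : ℕ) with hr
  obtain ⟨a, ha, z, hz⟩ := exists_mem_reducedResidues_add_int_eq r
  have hden : (r.den : ℝ) ≤ 2 * q := by
    have hdvd : (r.den : ℤ) ∣ (2 * q : ℕ) := Rat.den_dvd _ _
    exact_mod_cast Nat.le_of_dvd (by linarith [happ.den_pos]) (Int.natCast_dvd_natCast.1 hdvd)
  have hval : (r : ℝ) = b / (2 * q) := by
    rw [hr, Rat.divInt_eq_div]
    push_cast
    ring
  refine ⟨r.den, mem_Icc.2 ⟨r.den_pos, ?_⟩, a, ha, z, ?_, ?_⟩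
  · have hscaled : δ ^ 2 * (r.den : ℝ) ≤ δ ^ 2 * K := by
      linarith [mul_le_mul_of_nonneg_left hden (sq_nonneg δ)]
    exact_mod_cast le_of_mul_le_mul_left hscaled (by positivity)
  · have hhalf : θ - a / r.den - z = (2 * θ - b / q) / 2 := by
      rw [sub_sub, ← hz, hval]
      field_simp
    rw [hhalf, abs_div, abs_two, div_le_iff₀ two_pos]
    exact (happ.abs_two_mul_sub_le hδ hδ1 hM h).trans_eq (by ring)
  · linarith [happ.norm_weylSum_sq_mul_le (by exact_mod_cast hqM),
      mul_le_mul_of_nonneg_left hden (sq_nonneg ‖weylSum M θ‖)]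

/-- The linear exponential sum over `0, …, X - 1`. -/
noncomputable def linSum (X : ℕ) (β : ℝ) : ℂ := ∑ z ∈ range X, ee (z * β)

theorem linSum_sub_int (X : ℕ) (β : ℝ) (n : ℤ) : linSum X (β - n) = linSum X β := by
  refine sum_congr rfl fun z _ => ?_
  rw [← ee_add_int (z * (β - n)) (z * n)]
  congr 1
  push_cast
  ring

theorem le_norm_linSum {β : ℝ} (h : 16 * X * |β| ≤ 1) : (X : ℝ) / 2 ≤ ‖linSum X β‖ := by
  have hterm : ∀ z ∈ range X, ‖1 - ee (z * β)‖ ≤ 1 / 2 := fun z hz => by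
    have hz' : (z : ℝ) ≤ X := Nat.cast_le.2 (mem_range.1 hz).le
    rw [norm_sub_rev]
    refine (norm_ee_sub_one_le _).trans ?_
    rw [abs_mul, Nat.abs_cast]
    calc 2 * Real.pi * (z * |β|) ≤ 2 * 4 * (X * |β|) := by
          gcongr
          exact Real.pi_lt_four.le
      _ ≤ 1 / 2 := by linarith
  have hdiff : ‖(X : ℂ) - linSum X β‖ ≤ X / 2 := by
    rw [show (X : ℂ) - linSum X β = ∑ z ∈ range X, (1 - ee (z * β)) by
      simp [linSum, sum_sub_distrib]]
    refine ((norm_sum_le _ _).trans (sum_le_card_nsmul _ _ _ hterm)).trans_eq ?_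
    rw [card_range, nsmul_eq_mul, mul_one_div]
  have htri := norm_sub_norm_le (X : ℂ) ((X : ℂ) - linSum X β)
  rw [sub_sub_cancel, Complex.norm_natCast] at htri
  linarith

theorem exists_norm_weylSum_le_linSum (hδ : 0 < δ) (hδ1 : δ ≤ 1) (hM : 62208 ≤ δ ^ 4 * M)
    (hK : 288 ≤ K * δ ^ 2) (hX : 0 < X) (hXM : 128 * X ≤ δ ^ 4 * M ^ 2)
    (h : δ * M ≤ ‖weylSum M θ‖) :
    ∃ q ∈ Icc 1 K, ∃ a ∈ reducedResidues q,
      ‖weylSum M θ‖ ≤ 12 * M / X ^ 2 * (√q)⁻¹ * ‖linSum X (θ - a / q)‖ ^ 2 := by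
  have : (0 : ℝ) < X := Nat.cast_pos.2 hX
  have hM0 : (0 : ℝ) < M := (pos_iff_pos_of_mul_pos (by linarith)).1 (by positivity : 0 < δ ^ 4)
  obtain ⟨q, hq, a, ha, z, hz, hS⟩ :=
    exists_reducedResidues_approx_of_le_norm_weylSum hδ hδ1 hM hK h
  have hq' : (0 : ℝ) < q := Nat.cast_pos.2 (mem_Icc.1 hq).1
  have hlin : (X : ℝ) / 2 ≤ ‖linSum X (θ - a / q)‖ := by
    rw [← linSum_sub_int _ _ z]
    refine le_norm_linSum ?_
    rw [le_div_iff₀ (by positivity)] at hz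
    have hscaled : (δ ^ 4 * (M : ℝ) ^ 2) * (16 * X * |θ - a / q - z|) ≤
        (δ ^ 4 * (M : ℝ) ^ 2) * 1 := by nlinarith
    exact le_of_mul_le_mul_left hscaled (by positivity)
  have hsqrt : ‖weylSum M θ‖ * √q ≤ 3 * M := by
    refine le_of_sq_le_sq ?_ (by positivity)
    rw [mul_pow, Real.sq_sqrt hq'.le]
    nlinarith
  refine ⟨q, hq, a, ha, ?_⟩
  calc ‖weylSum M θ‖ ≤ 3 * M / √q := by rwa [le_div_iff₀ (by positivity)]
    _ = 12 * M / X ^ 2 * (√q)⁻¹ * (X / 2) ^ 2 := by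
        field_simp
        norm_num
    _ ≤ 12 * M / X ^ 2 * (√q)⁻¹ * ‖linSum X (θ - a / q)‖ ^ 2 := by gcongr

theorem norm_weylSum_le_sum_reducedResidues (hδ : 0 < δ) (hδ1 : δ ≤ 1) (hM : 62208 ≤ δ ^ 4 * M)
    (hK : 288 ≤ K * δ ^ 2) (hX : 0 < X) (hXM : 128 * X ≤ δ ^ 4 * M ^ 2) (θ : ℝ) :
    ‖weylSum M θ‖ ≤ δ * M + ∑ q ∈ Icc 1 K, ∑ a ∈ reducedResidues q,
      12 * M / X ^ 2 * (√q)⁻¹ * ‖linSum X (θ - a / q)‖ ^ 2 := by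
  rcases le_or_gt ‖weylSum M θ‖ (δ * M) with h | h
  · exact h.trans (le_add_of_nonneg_right (by positivity))
  obtain ⟨q, hq, a, ha, hle⟩ := exists_norm_weylSum_le_linSum hδ hδ1 hM hK hX hXM h.le
  calc ‖weylSum M θ‖ ≤ 12 * M / X ^ 2 * (√q)⁻¹ * ‖linSum X (θ - a / q)‖ ^ 2 := hle
    _ ≤ ∑ a ∈ reducedResidues q, 12 * M / X ^ 2 * (√q)⁻¹ * ‖linSum X (θ - a / q)‖ ^ 2 :=
        single_le_sum (f := fun a : ℕ => 12 * M / X ^ 2 * (√q)⁻¹ * ‖linSum X (θ - a / q)‖ ^ 2)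
          (fun _ _ => by positivity) ha
    _ ≤ ∑ q ∈ Icc 1 K, ∑ a ∈ reducedResidues q,
          12 * M / X ^ 2 * (√q)⁻¹ * ‖linSum X (θ - a / q)‖ ^ 2 :=
        single_le_sum (f := fun q : ℕ => ∑ a ∈ reducedResidues q,
          12 * M / X ^ 2 * (√q)⁻¹ * ‖linSum X (θ - a / q)‖ ^ 2) (fun _ _ => by positivity) hq
    _ ≤ _ := le_add_of_nonneg_left (by positivity)

end LargeWeylSum

/-! ### Correlations along squares -/

/-- The exponential sum with coefficients `f 0, …, f N`. -/
noncomputable def coeffSum (f : ℕ → ℝ) (N : ℕ) (θ : ℝ) : ℂ :=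
  ∑ y ∈ range (N + 1), ee (y * θ) * f y

/-- The sum of `f` over the window of length `X` ending at `t`, twisted by the frequency `β`. -/
noncomputable def window (f : ℕ → ℝ) (X : ℕ) (β : ℝ) (t : ℕ) : ℂ :=
  ∑ z ∈ range X with z ≤ t, ee (-(z * β)) * f (t - z)

section CoeffSum

variable (f : ℕ → ℝ) {N P M K X : ℕ} {δ : ℝ}

theorem sum_norm_coeffSum_sq (hP : N < P) :
    ∑ r ∈ range P, ‖coeffSum f N (r / P)‖ ^ 2 = P * ∑ y ∈ range (N + 1), f y ^ 2 := by
  have h := sum_norm_sq_sum_ee (range_subset_range.2 hP) (fun y => (f y : ℂ))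
  simp only [Complex.norm_real, Real.norm_eq_abs, sq_abs] at h
  rw [← h]
  simp only [coeffSum, mul_div_left_comm]

theorem coeffSum_mul_linSum (hf : ∀ y, N < y → f y = 0) (hP : N + X ≤ P) (β θ : ℝ) :
    coeffSum f N θ * linSum X (θ - β) = ∑ t ∈ range P, ee (t * θ) * window f X β t := by
  simp only [window, mul_sum, sum_filter]
  rw [sum_comm, linSum, mul_sum]
  refine sum_congr rfl fun z hz => ?_
  rw [mem_range] at hz
  have htwist : ∀ y : ℕ, ee ((z + y : ℕ) * θ) * (ee (-(z * β)) * f (z + y - z)) =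
      ee (y * θ) * f y * ee (z * (θ - β)) := fun y => by
    have hexp : ee ((z + y : ℕ) * θ) * ee (-(z * β)) = ee (y * θ) * ee (z * (θ - β)) := by
      rw [← ee_add, ← ee_add]
      congr 1
      push_cast
      ring
    rw [← mul_assoc, hexp, Nat.add_sub_cancel_left]
    ring
  have hIco : {t ∈ range P | z ≤ t} = Ico z P := by
    ext t
    rw [mem_filter, mem_range, mem_Ico, and_comm]
  simp_rw [mul_ite, mul_zero]
  rw [← sum_filter, hIco, sum_Ico_eq_sum_range, sum_congr rfl fun y _ => htwist y, coeffSum,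
    sum_mul]
  refine sum_subset (range_subset_range.2 (by omega)) fun y _ hy => ?_
  rw [hf y (by simpa using hy), Complex.ofReal_zero, mul_zero, zero_mul]

theorem sum_norm_coeffSum_sq_mul_norm_linSum_sq (hf : ∀ y, N < y → f y = 0) (hP : N + X ≤ P)
    (β : ℝ) : ∑ r ∈ range P, ‖coeffSum f N (r / P)‖ ^ 2 * ‖linSum X (r / P - β)‖ ^ 2 =
      P * ∑ t ∈ range P, ‖window f X β t‖ ^ 2 := by
  rw [← sum_norm_sq_sum_ee (Subset.refl (range P)) (window f X β)]
  refine sum_congr rfl fun r _ => ?_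
  rw [← mul_pow, ← norm_mul, coeffSum_mul_linSum f hf hP]
  simp only [mul_div_left_comm]

theorem norm_coeffSum_sq_mul_weylSum (N M : ℕ) (θ : ℝ) :
    ((‖coeffSum f N θ‖ ^ 2 : ℝ) : ℂ) * weylSum M θ =
      ∑ n ∈ range M, ∑ x ∈ range (N + 1), ∑ y ∈ range (N + 1),
        (f x * f y : ℂ) * ee ((x - y + (n + 1) ^ 2 : ℤ) * θ) := by
  rw [Complex.ofReal_pow, ← Complex.mul_conj', coeffSum, map_sum, sum_mul_sum, weylSum, mul_sum]
  refine sum_congr rfl fun n _ => ?_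
  rw [sum_mul]
  refine sum_congr rfl fun x _ => ?_
  rw [sum_mul]
  refine sum_congr rfl fun y _ => ?_
  have hexp : ee ((x - y + (n + 1) ^ 2 : ℤ) * θ) =
      ee (x * θ) * ee (-(y * θ)) * ee (((n : ℝ) + 1) ^ 2 * θ) := by
    rw [← ee_add, ← ee_add]
    congr 1
    push_cast
    ring
  rw [map_mul, conj_ee, Complex.conj_ofReal, hexp]
  ring

theorem sum_mul_sum_ee_shift (hf : ∀ y, N < y → f y = 0) {x s : ℕ} (hx : x ≤ N)
    (hP : N + s < P) :
    ∑ y ∈ range (N + 1), (f x * f y : ℂ) * ∑ r ∈ range P, ee ((x - y + s : ℤ) * r / P) =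
      P * (f x * f (x + s)) := by
  have hterm : ∀ y ∈ range (N + 1), (f x * f y : ℂ) *
      ∑ r ∈ range P, ee ((x - y + s : ℤ) * r / P) =
        if y = x + s then (P : ℂ) * (f x * f y) else 0 := by
    intro y hy
    rw [mem_range] at hy
    have hdvd : (P : ℤ) ∣ x - y + s ↔ y = x + s := by
      refine ⟨fun hd => ?_, fun h => by simp [h]⟩
      have hzero := Int.eq_zero_of_abs_lt_dvd hd (abs_lt.2 ⟨by omega, by omega⟩)
      omega
    rw [sum_ee_mul_div (by omega)]
    simp only [hdvd, mul_ite, mul_zero, mul_comm]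
  rw [sum_congr rfl hterm, sum_ite_eq']
  split_ifs with hxs
  · rfl
  · rw [hf (x + s) (by simpa using hxs), Complex.ofReal_zero, mul_zero, mul_zero]

theorem sum_norm_coeffSum_sq_mul_weylSum (hf : ∀ y, N < y → f y = 0) (hP : N + M ^ 2 < P) :
    ∑ r ∈ range P, ((‖coeffSum f N (r / P)‖ ^ 2 : ℝ) : ℂ) * weylSum M (r / P) =
      ((P * ∑ n ∈ range M, ∑ x ∈ range (N + 1), f x * f (x + (n + 1) ^ 2) : ℝ) : ℂ) := by
  simp_rw [norm_coeffSum_sq_mul_weylSum]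
  rw [sum_comm]
  push_cast
  rw [mul_sum]
  refine sum_congr rfl fun n hn => ?_
  rw [sum_comm, mul_sum]
  refine sum_congr rfl fun x hx => ?_
  rw [sum_comm]
  have hn2 : (n + 1) ^ 2 ≤ M ^ 2 := Nat.pow_le_pow_left (mem_range.1 hn) 2
  have hshift := sum_mul_sum_ee_shift f (P := P) (s := (n + 1) ^ 2) hf
    (Nat.lt_succ_iff.1 (mem_range.1 hx)) (by omega)
  push_cast at hshift
  rw [← hshift]
  simp only [mul_sum, mul_div_assoc]

theorem neg_sum_mul_le_sum_norm_weylSum (hf : ∀ y, N < y → f y = 0) (hP : N + M ^ 2 < P) :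
    P * -∑ n ∈ range M, ∑ x ∈ range (N + 1), f x * f (x + (n + 1) ^ 2) ≤
      ∑ r ∈ range P, ‖coeffSum f N (r / P)‖ ^ 2 * ‖weylSum M (r / P)‖ := by
  have hnorm := congrArg norm (sum_norm_coeffSum_sq_mul_weylSum f hf hP)
  rw [Complex.norm_real, Real.norm_eq_abs] at hnorm
  rw [mul_neg]
  refine (neg_le_abs _).trans (hnorm.symm.trans_le ((norm_sum_le _ _).trans_eq ?_))
  refine sum_congr rfl fun r _ => ?_
  rw [norm_mul, Complex.norm_real, Real.norm_of_nonneg (sq_nonneg _)]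

theorem neg_sum_mul_le_sum_window (hf : ∀ y, N < y → f y = 0) (hPM : N + M ^ 2 < P)
    (hPX : N + X ≤ P) (hδ : 0 < δ) (hδ1 : δ ≤ 1) (hM : 62208 ≤ δ ^ 4 * M)
    (hK : 288 ≤ K * δ ^ 2) (hX : 0 < X) (hXM : 128 * X ≤ δ ^ 4 * M ^ 2) :
    -∑ n ∈ range M, ∑ x ∈ range (N + 1), f x * f (x + (n + 1) ^ 2) ≤
      δ * M * ∑ y ∈ range (N + 1), f y ^ 2 + 12 * M / X ^ 2 * ∑ q ∈ Icc 1 K, (√q)⁻¹ *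
        ∑ a ∈ reducedResidues q, ∑ t ∈ range P, ‖window f X (a / q) t‖ ^ 2 := by
  have hP0 : (0 : ℝ) < P := Nat.cast_pos.2 (by omega)
  refine le_of_mul_le_mul_left ((neg_sum_mul_le_sum_norm_weylSum f hf hPM).trans ?_) hP0
  calc ∑ r ∈ range P, ‖coeffSum f N (r / P)‖ ^ 2 * ‖weylSum M (r / P)‖
      ≤ ∑ r ∈ range P, ‖coeffSum f N (r / P)‖ ^ 2 * (δ * M + ∑ q ∈ Icc 1 K,
          ∑ a ∈ reducedResidues q,
            12 * M / X ^ 2 * (√q)⁻¹ * ‖linSum X (r / P - a / q)‖ ^ 2) :=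
        sum_le_sum fun r _ => mul_le_mul_of_nonneg_left
          (norm_weylSum_le_sum_reducedResidues hδ hδ1 hM hK hX hXM _) (sq_nonneg _)
    _ = δ * M * ∑ r ∈ range P, ‖coeffSum f N (r / P)‖ ^ 2 + ∑ q ∈ Icc 1 K,
          ∑ a ∈ reducedResidues q, 12 * M / X ^ 2 * (√q)⁻¹ *
            ∑ r ∈ range P, ‖coeffSum f N (r / P)‖ ^ 2 * ‖linSum X (r / P - a / q)‖ ^ 2 := by
        simp_rw [mul_add, sum_add_distrib, mul_sum]
        congr 1
        · exact sum_congr rfl fun _ _ => mul_comm _ _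
        · rw [sum_comm]
          refine sum_congr rfl fun q _ => ?_
          rw [sum_comm]
          exact sum_congr rfl fun a _ => sum_congr rfl fun r _ => mul_left_comm _ _ _
    _ = _ := by
        simp_rw [sum_norm_coeffSum_sq f (by omega : N < P),
          sum_norm_coeffSum_sq_mul_norm_linSum_sq f hf hPX, mul_add, mul_sum]
        congr 1
        · exact sum_congr rfl fun _ _ => by ring
        · exact sum_congr rfl fun q _ => sum_congr rfl fun a _ => sum_congr rfl fun r _ => by ring

end CoeffSum

/-! ### Progressions and windows -/

/-- `A` has density at most `β` on every progression of length at least `n₀` whose common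
difference is a square. -/
def ProgBound (A : Finset ℕ) (n₀ : ℕ) (β : ℝ) : Prop :=
  ∀ d : ℕ, 1 ≤ d → ∀ x : ℤ, ∀ n : ℕ, n₀ ≤ n →
    (#{j ∈ Icc 1 n | ∃ a ∈ A, (a : ℤ) = x + d ^ 2 * (j : ℕ)} : ℝ) ≤ β * n

/-- The reflected window `{z < X : t - z ∈ A}` of `A`. Unlike a translate of `A ∩ (t - X, t]`, it
makes the windowed sums of the indicator function of `A` convolutions. -/
def windowSet (A : Finset ℕ) (X t : ℕ) : Finset ℕ := {z ∈ range X | z ≤ t ∧ t - z ∈ A}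

section WindowSet

variable {A : Finset ℕ} {n₀ N X t z : ℕ} {β : ℝ}

theorem mem_windowSet : z ∈ windowSet A X t ↔ z < X ∧ z ≤ t ∧ t - z ∈ A := by
  rw [windowSet, mem_filter, mem_range]

theorem windowSet_subset_range (A : Finset ℕ) (X t : ℕ) : windowSet A X t ⊆ range X :=
  filter_subset _ _

theorem card_windowSet_le (A : Finset ℕ) (X t : ℕ) : #(windowSet A X t) ≤ X :=
  (card_le_card (windowSet_subset_range A X t)).trans (card_range X).le

theorem card_filter_sub_mem (hA : A ⊆ Icc 1 N) (hz : z < X) :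
    #{t ∈ range (N + X) | z ≤ t ∧ t - z ∈ A} = #A := by
  refine card_nbij' (fun t => t - z) (fun y => y + z) (fun t ht => (mem_filter.1 ht).2.2) ?_ ?_ ?_
  · intro y hy
    have hyN := mem_Icc.1 (hA hy)
    refine mem_coe.2 (mem_filter.2 ⟨mem_range.2 ?_, Nat.le_add_left z y, ?_⟩)
    · change y + z < N + X
      omega
    · rwa [Nat.add_sub_cancel]
  · exact fun t ht => Nat.sub_add_cancel (mem_filter.1 ht).2.1
  · exact fun y _ => Nat.add_sub_cancel y z

theorem sum_card_windowSet (hA : A ⊆ Icc 1 N) :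
    ∑ t ∈ range (N + X), #(windowSet A X t) = #A * X := by
  simp_rw [windowSet, card_filter]
  rw [sum_comm]
  simp_rw [← card_filter]
  rw [sum_congr rfl fun z hz => card_filter_sub_mem hA (mem_range.1 hz), sum_const, card_range,
    smul_eq_mul, mul_comm]

theorem sum_card_windowSet_eq_mul {α : ℝ} (hA : A ⊆ Icc 1 N) (hα : (#A : ℝ) = α * N) :
    ∑ t ∈ range (N + X), (#(windowSet A X t) : ℝ) = α * N * X := by
  rw [← hα]
  exact_mod_cast sum_card_windowSet hA

theorem ProgBound.card_windowSet_filter_mod_le (h : ProgBound A n₀ β) {d : ℕ} (hd : 1 ≤ d)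
    (hX : n₀ * d ^ 2 ≤ X) (t s : ℕ) :
    (#{z ∈ windowSet A X t | z % d ^ 2 = s} : ℝ) ≤ β * (X / d ^ 2 + 1 : ℕ) := by
  have hd2 : 0 < d ^ 2 := pow_pos hd 2
  set n := X / d ^ 2 + 1
  have hn : n₀ ≤ n := Nat.le_succ_of_le ((Nat.le_div_iff_mul_le hd2).2 hX)
  have hmem : ∀ z ∈ {z ∈ windowSet A X t | z % d ^ 2 = s},
      z / d ^ 2 < n ∧ z = d ^ 2 * (z / d ^ 2) + s ∧ z ≤ t ∧ t - z ∈ A := fun z hz => by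
    obtain ⟨hzA, hzs⟩ := mem_filter.1 hz
    obtain ⟨hzX, hzt, hzA⟩ := mem_windowSet.1 hzA
    refine ⟨Nat.lt_succ_of_le (Nat.div_le_div_right hzX.le), ?_, hzt, hzA⟩
    rw [← hzs, Nat.div_add_mod]
  refine le_trans (Nat.cast_le.2 ?_) (h d hd (t - s - d ^ 2 * n) n hn)
  refine card_le_card_of_injOn (fun z => n - z / d ^ 2) (fun z hz => ?_) fun z hz z' hz' he => ?_
  · obtain ⟨hzn, hdiv, hzt, hzA⟩ := hmem z hz
    refine mem_coe.2 (mem_filter.2 ⟨mem_Icc.2 ⟨Nat.sub_pos_of_lt hzn, Nat.sub_le _ _⟩,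
      t - z, hzA, ?_⟩)
    push_cast [Nat.cast_sub hzt, Nat.cast_sub hzn.le]
    have hdiv' : (z : ℤ) = d ^ 2 * (z / d ^ 2 : ℕ) + s := by exact_mod_cast hdiv
    push_cast at hdiv'
    linarith
  · obtain ⟨hzn, hdiv, -⟩ := hmem z hz
    obtain ⟨hzn', hdiv', -⟩ := hmem z' hz'
    rw [hdiv, hdiv', tsub_right_inj hzn.le hzn'.le |>.1 he]

-- A class modulo `d` consists of `d` classes modulo `d ^ 2`, which are progressions as in
-- `ProgBound`.
theorem ProgBound.card_windowSet_filter_modEq_le (h : ProgBound A n₀ β) (hβ : 0 ≤ β) {d : ℕ}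
    (hd : 1 ≤ d) (hX : n₀ * d ^ 2 ≤ X) (t x : ℕ) :
    (#{y ∈ windowSet A X t | y ≡ x [MOD d]} : ℝ) ≤ d * (β * (X / d ^ 2 + 1)) := by
  have hd2 : 0 < d ^ 2 := pow_pos hd 2
  have hmaps : ∀ z ∈ {y ∈ windowSet A X t | y ≡ x [MOD d]}, z % d ^ 2 / d ∈ range d :=
    fun z _ => mem_range.2 ((Nat.div_lt_iff_lt_mul hd).2 ((Nat.mod_lt z hd2).trans_eq (sq d)))
  have hfiber : ∀ i ∈ range d,
      (#{z ∈ {y ∈ windowSet A X t | y ≡ x [MOD d]} | z % d ^ 2 / d = i} : ℝ) ≤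
        β * (X / d ^ 2 + 1) := by
    intro i _
    have hsub : {z ∈ {y ∈ windowSet A X t | y ≡ x [MOD d]} | z % d ^ 2 / d = i} ⊆
        {z ∈ windowSet A X t | z % d ^ 2 = d * i + x % d} := fun z hz => by
      simp only [mem_filter] at hz ⊢
      have hmod : z % d ^ 2 % d = x % d :=
        (Nat.mod_mod_of_dvd z (dvd_pow_self d two_ne_zero)).trans hz.1.2
      exact ⟨hz.1.1, by rw [← Nat.div_add_mod (z % d ^ 2) d, hz.2, hmod]⟩
    refine (Nat.cast_le.2 (card_le_card hsub)).trans
      ((h.card_windowSet_filter_mod_le hd hX t _).trans (mul_le_mul_of_nonneg_left ?_ hβ))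
    push_cast
    exact add_le_add_left (by exact_mod_cast Nat.cast_div_le (α := ℝ) (m := X) (n := d ^ 2)) 1
  rw [card_eq_sum_card_fiberwise hmaps]
  push_cast
  refine (sum_le_card_nsmul _ _ _ hfiber).trans_eq ?_
  rw [card_range, nsmul_eq_mul]

theorem ProgBound.classBound (h : ProgBound A n₀ β) (hβ : 0 ≤ β) {Z : ℕ} {β' : ℝ}
    (hX : n₀ * Z ^ 2 ≤ X) (hβ' : β * (X + Z ^ 2) ≤ β' * X) (t : ℕ) :
    ClassBound (windowSet A X t) X Z β' := by
  intro d hd hdZ x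
  have hd' : (0 : ℝ) < d := Nat.cast_pos.2 hd
  have hdX : n₀ * d ^ 2 ≤ X := (Nat.mul_le_mul_left n₀ (Nat.pow_le_pow_left hdZ 2)).trans hX
  have hdZ' : (d : ℝ) ≤ Z := Nat.cast_le.2 hdZ
  calc (d : ℝ) * #{y ∈ windowSet A X t | y ≡ x [MOD d]}
      ≤ d * (d * (β * (X / d ^ 2 + 1))) :=
        mul_le_mul_of_nonneg_left (h.card_windowSet_filter_modEq_le hβ hd hdX t x) hd'.le
    _ = β * (X + d ^ 2) := by field_simp
    _ ≤ β * (X + Z ^ 2) := by gcongr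
    _ ≤ β' * X := hβ'

theorem ProgBound.card_filter_le (h : ProgBound A n₀ β) (hA : A ⊆ Icc 1 N) {m : ℕ} (hm : n₀ ≤ m) :
    (#{a ∈ A | a ≤ m} : ℝ) ≤ β * m := by
  refine (Nat.cast_le.2 (card_le_card fun a ha => ?_)).trans (h 1 le_rfl 0 m hm)
  obtain ⟨haA, ham⟩ := mem_filter.1 ha
  exact mem_filter.2 ⟨mem_Icc.2 ⟨(mem_Icc.1 (hA haA)).1, ham⟩, a, haA, by simp⟩

theorem ProgBound.card_filter_lt_add_le (h : ProgBound A n₀ β) (hA : A ⊆ Icc 1 N) {m : ℕ}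
    (hm : n₀ ≤ m) : (#{a ∈ A | N < a + m} : ℝ) ≤ β * m := by
  refine (Nat.cast_le.2 ?_).trans (h 1 le_rfl (N - m) m hm)
  refine card_le_card_of_injOn (fun a => a + m - N) (fun a ha => ?_) fun a ha a' ha' he => ?_
  · obtain ⟨haA, ham⟩ := mem_filter.1 ha
    have haN := mem_Icc.1 (hA haA)
    refine mem_coe.2 (mem_filter.2 ⟨mem_Icc.2 ⟨Nat.sub_pos_of_lt ham, ?_⟩, a, haA, ?_⟩)
    · exact Nat.sub_le_iff_le_add.2 (by omega)
    · push_cast [Nat.cast_sub ham.le]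
      ring
  · have ham := (mem_filter.1 ha).2
    have ham' := (mem_filter.1 ha').2
    exact Nat.add_right_cancel (tsub_left_inj ham.le ham'.le |>.1 he)

end WindowSet

/-! ### The balanced function -/

/-- The balanced function `1_A - α 1_{[N]}` of a set `A` of density `α` in `[N]`. -/
noncomputable def balanced (A : Finset ℕ) (N : ℕ) (α : ℝ) (y : ℕ) : ℝ :=
  (if y ∈ A then 1 else 0) - α * if y ∈ Icc 1 N then 1 else 0

section Balanced

variable {A : Finset ℕ} {N n₀ m s X : ℕ} {α β ε : ℝ}

theorem balanced_eq_zero (hA : A ⊆ Icc 1 N) {y : ℕ} (hy : N < y) : balanced A N α y = 0 := by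
  have hyN : y ∉ Icc 1 N := fun h => (mem_Icc.1 h).2.not_gt hy
  rw [balanced, if_neg hyN, if_neg fun h => hyN (hA h), mul_zero, sub_zero]

theorem Icc_one_subset_range_succ (N : ℕ) : Icc 1 N ⊆ range (N + 1) :=
  fun _ hy => mem_range_succ_iff.2 (mem_Icc.1 hy).2

theorem sum_balanced_sq_le (hA : A ⊆ Icc 1 N) (hα : (#A : ℝ) = α * N) :
    ∑ y ∈ range (N + 1), balanced A N α y ^ 2 ≤ α * N := by
  have hpoint : ∀ y, balanced A N α y ^ 2 =
      (1 - 2 * α) * (if y ∈ A then 1 else 0) + α ^ 2 * if y ∈ Icc 1 N then 1 else 0 := by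
    intro y
    rw [balanced]
    by_cases h : y ∈ A
    · rw [if_pos h, if_pos (hA h)]; ring
    · rw [if_neg h]; split_ifs <;> ring
  simp_rw [hpoint]
  rw [sum_add_distrib, ← mul_sum, ← mul_sum, sum_boole, sum_boole, filter_mem_eq_inter,
    filter_mem_eq_inter, inter_eq_right.2 (Icc_one_subset_range_succ N),
    inter_eq_right.2 (hA.trans (Icc_one_subset_range_succ N)), hα, Nat.card_Icc,
    Nat.add_sub_cancel]
  nlinarith [sq_nonneg α, Nat.cast_nonneg (α := ℝ) N]

theorem balanced_mul_balanced_add (hA : A ⊆ Icc 1 N) (hs : ∀ a ∈ A, a + s ∉ A) (x : ℕ) :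
    balanced A N α x * balanced A N α (x + s) =
      -(α * (if x ∈ A ∧ x + s ∈ Icc 1 N then 1 else 0)) -
        α * (if x ∈ Icc 1 N ∧ x + s ∈ A then 1 else 0) +
        α ^ 2 * (if x ∈ Icc 1 N ∧ x + s ∈ Icc 1 N then 1 else 0) := by
  rw [balanced, balanced]
  by_cases hx : x ∈ A
  · simp only [hx, hA hx, hs x hx, true_and, and_false, if_false, if_true]
    ring
  · simp only [hx, false_and, if_false]
    by_cases hxN : x ∈ Icc 1 N
    · simp only [hxN, true_and, if_true]
      ring
    · simp only [hxN, false_and, if_false]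
      ring

theorem ProgBound.card_sub_le_card_add_mem_Icc (h : ProgBound A n₀ β) (hA : A ⊆ Icc 1 N)
    (hsm : s ≤ m) (hm : n₀ ≤ m) :
    #A - β * m ≤ #{x ∈ range (N + 1) | x ∈ A ∧ x + s ∈ Icc 1 N} := by
  have hcover : A ⊆ {x ∈ range (N + 1) | x ∈ A ∧ x + s ∈ Icc 1 N} ∪ {a ∈ A | N < a + m} := by
    intro a ha
    have haN := mem_Icc.1 (hA ha)
    simp only [mem_union, mem_filter, mem_range, mem_Icc]
    by_cases ham : N < a + m
    · exact Or.inr ⟨ha, ham⟩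
    · exact Or.inl ⟨by omega, ha, by omega, by omega⟩
  have hcard : (#A : ℝ) ≤ #{x ∈ range (N + 1) | x ∈ A ∧ x + s ∈ Icc 1 N} +
      #{a ∈ A | N < a + m} := by
    exact_mod_cast (card_le_card hcover).trans (card_union_le _ _)
  linarith [h.card_filter_lt_add_le hA hm]

theorem ProgBound.card_sub_le_card_add_mem (h : ProgBound A n₀ β) (hA : A ⊆ Icc 1 N)
    (hsm : s ≤ m) (hm : n₀ ≤ m) :
    #A - β * m ≤ #{x ∈ range (N + 1) | x ∈ Icc 1 N ∧ x + s ∈ A} := by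
  have hcover : A ⊆ {x ∈ range (N + 1) | x ∈ Icc 1 N ∧ x + s ∈ A}.image (· + s) ∪
      {a ∈ A | a ≤ m} := by
    intro a ha
    have haN := mem_Icc.1 (hA ha)
    simp only [mem_union, mem_image, mem_filter, mem_Icc, mem_range]
    by_cases ham : a ≤ m
    · exact Or.inr ⟨ha, ham⟩
    · refine Or.inl ⟨a - s, ⟨by omega, ⟨by omega, by omega⟩, ?_⟩, by omega⟩
      rwa [Nat.sub_add_cancel (by omega)]
  have hcard : (#A : ℝ) ≤ #{x ∈ range (N + 1) | x ∈ Icc 1 N ∧ x + s ∈ A} + #{a ∈ A | a ≤ m} := by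
    exact_mod_cast (card_le_card hcover).trans
      ((card_union_le _ _).trans (Nat.add_le_add_right card_image_le _))
  linarith [h.card_filter_le hA hm]

theorem ProgBound.sum_balanced_mul_balanced_le (h : ProgBound A n₀ β) (hA : A ⊆ Icc 1 N)
    (hα0 : 0 ≤ α) (hα : (#A : ℝ) = α * N) (hβ : β ≤ 2 * α) (hs : ∀ a ∈ A, a + s ∉ A)
    (hsm : s ≤ m) (hm : n₀ ≤ m) (hmN : 8 * m ≤ N) :
    ∑ x ∈ range (N + 1), balanced A N α x * balanced A N α (x + s) ≤ -(α ^ 2 * N / 2) := by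
  have hmN' : 8 * (m : ℝ) ≤ N := by exact_mod_cast hmN
  have hβm : β * m ≤ α * N / 4 := by nlinarith [Nat.cast_nonneg (α := ℝ) m]
  have hboth : (#{x ∈ range (N + 1) | x ∈ Icc 1 N ∧ x + s ∈ Icc 1 N} : ℝ) ≤ N := by
    have hsub : {x ∈ range (N + 1) | x ∈ Icc 1 N ∧ x + s ∈ Icc 1 N} ⊆ Icc 1 N :=
      fun x hx => (mem_filter.1 hx).2.1
    exact_mod_cast (card_le_card hsub).trans_eq (by rw [Nat.card_Icc, Nat.add_sub_cancel])
  simp_rw [balanced_mul_balanced_add hA hs]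
  rw [sum_add_distrib, sum_sub_distrib, sum_neg_distrib, ← mul_sum, ← mul_sum, ← mul_sum, sum_boole,
    sum_boole, sum_boole]
  have hleft := mul_le_mul_of_nonneg_left (h.card_sub_le_card_add_mem_Icc hA hsm hm) hα0
  have hright := mul_le_mul_of_nonneg_left (h.card_sub_le_card_add_mem hA hsm hm) hα0
  rw [hα] at hleft hright
  nlinarith [mul_le_mul_of_nonneg_left hboth (sq_nonneg α), mul_le_mul_of_nonneg_left hβm hα0]

theorem window_balanced (A : Finset ℕ) (N X : ℕ) (α θ : ℝ) (t : ℕ) :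
    window (balanced A N α) X θ t =
      ∑ z ∈ windowSet A X t, ee (-(z * θ)) - α * ∑ z ∈ windowSet (Icc 1 N) X t, ee (-(z * θ)) := by
  have hwindow : ∀ B : Finset ℕ, ∑ z ∈ windowSet B X t, ee (-(z * θ)) =
      ∑ z ∈ range X with z ≤ t, if t - z ∈ B then ee (-(z * θ)) else 0 := fun B => by
    rw [← sum_filter, filter_filter]
    rfl
  rw [hwindow, hwindow, window, mul_sum, ← sum_sub_distrib]
  refine sum_congr rfl fun z _ => ?_
  rw [balanced]
  split_ifs <;> push_cast <;> ring

theorem norm_sum_ee_neg (B : Finset ℕ) (θ : ℝ) : ‖∑ z ∈ B, ee (-(z * θ))‖ = ‖expSum B θ‖ := by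
  rw [expSum, ← Complex.norm_conj, map_sum]
  simp_rw [conj_ee, neg_neg]

theorem one_div_le_abs_sub_round {q a : ℕ} (hq : 2 ≤ q) (ha : a ∈ reducedResidues q) :
    1 / (q : ℝ) ≤ |(a : ℝ) / q - round ((a : ℝ) / q)| := by
  have hq' : (0 : ℝ) < q := Nat.cast_pos.2 (by omega)
  set z := round ((a : ℝ) / q)
  have hne : (a : ℤ) - z * q ≠ 0 := fun h0 => by
    have hdvd : (q : ℤ) ∣ a := ⟨z, by linarith⟩
    have := (mem_reducedResidues.1 ha).2.symm.eq_one_of_dvd (Int.natCast_dvd_natCast.1 hdvd)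
    omega
  have habs : (1 : ℝ) ≤ |(a - z * q : ℝ)| := by exact_mod_cast Int.one_le_abs hne
  rw [show (a : ℝ) / q - z = (a - z * q) / q by field_simp, abs_div, abs_of_pos hq']
  exact div_le_div_of_nonneg_right habs hq'.le

theorem norm_expSum_Ico_le (m n : ℕ) {q a : ℕ} (hq : 2 ≤ q) (ha : a ∈ reducedResidues q) :
    ‖expSum (Ico m n) (a / q)‖ ≤ q / 2 := by
  have hq' : (0 : ℝ) < q := Nat.cast_pos.2 (by omega)
  have hshift : ∀ k : ℕ, ee ((m + k : ℕ) * (a / q : ℝ)) =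
      ee (m * (a / q : ℝ)) * ee (k * (a / q : ℝ)) := fun k => by
    rw [← ee_add, Nat.cast_add, add_mul]
  rw [expSum, sum_Ico_eq_sum_range]
  simp_rw [hshift]
  rw [← mul_sum, norm_mul, norm_ee, one_mul]
  refine (norm_geom_sum_ee_le _ (one_div_pos.2 hq') (one_div_le_abs_sub_round hq ha) _).trans_eq ?_
  field_simp

theorem windowSet_Icc_one (N X t : ℕ) : windowSet (Icc 1 N) X t = Ico (t - N) (min X t) := by
  ext z
  rw [mem_windowSet, mem_Icc, mem_Ico]
  omega

theorem norm_window_balanced_sq_le (hα : 0 ≤ α) (t : ℕ) {q a : ℕ} (hq : 2 ≤ q)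
    (ha : a ∈ reducedResidues q) : ‖window (balanced A N α) X (a / q) t‖ ^ 2 ≤
      2 * ‖expSum (windowSet A X t) (a / q)‖ ^ 2 + α ^ 2 * q ^ 2 / 2 := by
  set w := ‖expSum (windowSet A X t) (a / q)‖
  have htriangle := norm_sub_le (∑ z ∈ windowSet A X t, ee (-(z * (a / q : ℝ))))
    (α * ∑ z ∈ windowSet (Icc 1 N) X t, ee (-(z * (a / q : ℝ))))
  rw [← window_balanced, norm_mul, norm_sum_ee_neg, norm_sum_ee_neg, Complex.norm_real,
    Real.norm_of_nonneg hα, windowSet_Icc_one] at htriangle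
  calc ‖window (balanced A N α) X (a / q) t‖ ^ 2 ≤ (w + α * (q / 2)) ^ 2 := by
        gcongr
        exact htriangle.trans (by gcongr; exact norm_expSum_Ico_le _ _ hq ha)
    _ ≤ 2 * (w ^ 2 + (α * (q / 2)) ^ 2) := add_sq_le
    _ = 2 * w ^ 2 + α ^ 2 * q ^ 2 / 2 := by ring

theorem norm_window_balanced_zero_sq (A : Finset ℕ) (N X : ℕ) (α : ℝ) (t : ℕ) :
    ‖window (balanced A N α) X 0 t‖ ^ 2 =
      ((#(windowSet A X t) : ℝ) - α * #(windowSet (Icc 1 N) X t)) ^ 2 := by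
  have hreal : window (balanced A N α) X 0 t =
      (((#(windowSet A X t) : ℝ) - α * #(windowSet (Icc 1 N) X t) : ℝ) : ℂ) := by
    simp [window_balanced, ee_zero]
  rw [hreal, Complex.norm_real, Real.norm_eq_abs, sq_abs]

theorem sq_sub_mul_le {s w x b : ℝ} (hα : 0 ≤ α) (hs : 0 ≤ s) (hsb : s ≤ b) (hw : 0 ≤ w)
    (hwx : w ≤ x) :
    (s - α * w) ^ 2 ≤ (b - 2 * α * x) * s + 2 * α * b * (x - w) + α ^ 2 * x * w := by
  have hsecond : 0 ≤ s * (b - s) := mul_nonneg hs (by linarith)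
  have hmixed : 0 ≤ 2 * α * ((b - s) * (x - w)) :=
    mul_nonneg (by positivity) (mul_nonneg (by linarith) (by linarith))
  have hfirst : 0 ≤ α ^ 2 * (w * (x - w)) := mul_nonneg (sq_nonneg α) (mul_nonneg hw (by linarith))
  linarith

theorem sum_sq_card_windowSet_sub_le (hA : A ⊆ Icc 1 N) (hα0 : 0 ≤ α) (hα : (#A : ℝ) = α * N)
    (hβ : β ≤ (1 + 2 * ε) * α) (hε : ε ≤ 1 / 2) (hs : ∀ t, (#(windowSet A X t) : ℝ) ≤ β * X)
    (hX : (X : ℝ) ≤ ε * N) :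
    ∑ t ∈ range (N + X), ((#(windowSet A X t) : ℝ) - α * #(windowSet (Icc 1 N) X t)) ^ 2 ≤
      6 * ε * (α ^ 2 * N * X ^ 2) := by
  have hsumN : ∑ t ∈ range (N + X), (#(windowSet (Icc 1 N) X t) : ℝ) = 1 * N * X :=
    sum_card_windowSet_eq_mul Subset.rfl (by simp)
  have hpoint : ∀ t, ((#(windowSet A X t) : ℝ) - α * #(windowSet (Icc 1 N) X t)) ^ 2 ≤
      (β * X - 2 * α * X) * #(windowSet A X t) +
        2 * α * (β * X) * (X - #(windowSet (Icc 1 N) X t)) +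
        α ^ 2 * X * #(windowSet (Icc 1 N) X t) := fun t =>
    sq_sub_mul_le hα0 (Nat.cast_nonneg _) (hs t) (Nat.cast_nonneg _)
      (Nat.cast_le.2 (card_windowSet_le _ _ _))
  refine (sum_le_sum fun t _ => hpoint t).trans ?_
  rw [sum_add_distrib, sum_add_distrib, ← mul_sum, ← mul_sum, ← mul_sum, sum_sub_distrib,
    sum_card_windowSet_eq_mul hA hα, hsumN, sum_const, card_range, nsmul_eq_mul]
  push_cast
  have hN : 0 ≤ ((1 + 2 * ε) * α - β) * (α * N * X ^ 2) := mul_nonneg (by linarith) (by positivity)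
  have hXβ : 0 ≤ ((1 + 2 * ε) * α - β) * (2 * α * X ^ 3) := mul_nonneg (by linarith) (by positivity)
  have hXε : 0 ≤ (1 - 2 * ε) * (2 * α ^ 2 * X ^ 3) := mul_nonneg (by linarith) (by positivity)
  have hXN : 0 ≤ (ε * N - X) * (4 * α ^ 2 * X ^ 2) := mul_nonneg (by linarith) (by positivity)
  linarith

theorem sum_card_windowSet_mul_le (hA : A ⊆ Icc 1 N) (hα0 : 0 ≤ α) (hα : (#A : ℝ) = α * N)
    (hβ : β ≤ (1 + 2 * ε) * α) (hN : 0 < N) (hX : (X : ℝ) ≤ ε * N) :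
    ∑ t ∈ range (N + X), (#(windowSet A X t) : ℝ) * (β * X - #(windowSet A X t)) ≤
      3 * ε * (α ^ 2 * N * X ^ 2) := by
  have hsum := sum_card_windowSet_eq_mul (X := X) hA hα
  have hX0 : (0 : ℝ) ≤ X := Nat.cast_nonneg _
  have : (0 : ℝ) < N := Nat.cast_pos.2 hN
  have hcauchy : (α * N * X) ^ 2 ≤ (N + X) * ∑ t ∈ range (N + X), (#(windowSet A X t) : ℝ) ^ 2 := by
    have := sq_sum_le_card_mul_sum_sq (s := range (N + X)) (f := fun t => (#(windowSet A X t) : ℝ))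
    rw [hsum, card_range] at this
    exact_mod_cast this
  have hsquares : α ^ 2 * X ^ 2 * (N - X) ≤ ∑ t ∈ range (N + X), (#(windowSet A X t) : ℝ) ^ 2 := by
    refine le_of_mul_le_mul_left (le_trans ?_ hcauchy) (by positivity : (0 : ℝ) < N + X)
    nlinarith [mul_nonneg (sq_nonneg α) (pow_nonneg hX0 4)]
  simp_rw [mul_sub, ← sq]
  rw [sum_sub_distrib, ← sum_mul, hsum]
  have hNβ : 0 ≤ ((1 + 2 * ε) * α - β) * (α * N * X ^ 2) := mul_nonneg (by linarith) (by positivity)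
  have hXN : 0 ≤ (ε * N - X) * (α ^ 2 * X ^ 2) := mul_nonneg (by linarith) (by positivity)
  linarith

end Balanced

/-! ### The energy of a window -/

/-- The energy of `B` at the frequencies of denominator `2, …, K`, weighted by the size `q^(-1/2)`
of the normalized quadratic Gauss sums of modulus `q`. -/
noncomputable def gaussEnergy (B : Finset ℕ) (X K : ℕ) : ℝ :=
  ∑ q ∈ Icc 2 K, (√q)⁻¹ * energy B X q

/-- `A ⊆ [N]` has density `α`, no square differences, and density at most `(1 + ε) α` on every long
progression whose common difference is a square. -/
structure IncrementFree (A : Finset ℕ) (N n₀ : ℕ) (α ε : ℝ) : Prop where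
  subset : A ⊆ Icc 1 N
  noSquareDiff : NoSquareDiff A
  card_eq : (#A : ℝ) = α * N
  progBound : ProgBound A n₀ ((1 + ε) * α)

/-- Parameters for which the circle method applies to sets of density `α` in `[N]`: differences
up to `M ^ 2`, denominators up to `K`, windows of length `X`. The constants are those of the major
arc approximation to a quadratic Weyl sum that exceeds `α M / 4`. -/
structure CircleParameters (N n₀ M K X : ℕ) (α ε : ℝ) : Prop where
  N_pos : 0 < N
  X_pos : 0 < X
  α_pos : 0 < α
  α_le_one : α ≤ 1
  ε_pos : 0 < ε
  ε_le : ε ≤ 1 / 1000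
  n₀_le : n₀ ≤ N / 8
  sq_M_le : 8 * M ^ 2 ≤ N
  le_M : 62208 ≤ (α / 4) ^ 4 * M
  le_K : 288 ≤ K * (α / 4) ^ 2
  X_le_sq_M : 128 * X ≤ (α / 4) ^ 4 * M ^ 2
  X_le_N : (X : ℝ) ≤ ε * N
  n₀_mul_le_X : n₀ * (2 * K) ^ 2 ≤ X
  sq_K_le_X : 8 * (K : ℝ) ^ 2 ≤ ε * X

section CircleParameters

variable {A : Finset ℕ} {N n₀ M K X : ℕ} {α ε : ℝ}

theorem CircleParameters.X_le (hp : CircleParameters N n₀ M K X α ε) : X ≤ N := by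
  have : (X : ℝ) ≤ N :=
    hp.X_le_N.trans (mul_le_of_le_one_left (Nat.cast_nonneg N) (by linarith [hp.ε_le]))
  exact_mod_cast this

theorem CircleParameters.K_pos (hp : CircleParameters N n₀ M K X α ε) : 0 < K :=
  Nat.pos_of_ne_zero fun h => by linarith [hp.le_K, show (K : ℝ) * (α / 4) ^ 2 = 0 by simp [h]]

theorem CircleParameters.M_pos (hp : CircleParameters N n₀ M K X α ε) : 0 < M :=
  Nat.pos_of_ne_zero fun h => by linarith [hp.le_M, show (α / 4) ^ 4 * (M : ℝ) = 0 by simp [h]]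

theorem IncrementFree.classBound_windowSet (hA : IncrementFree A N n₀ α ε)
    (hp : CircleParameters N n₀ M K X α ε) (t : ℕ) :
    ClassBound (windowSet A X t) X (2 * K) ((1 + 2 * ε) * α) := by
  obtain ⟨hα, hε, hε1⟩ := And.intro hp.α_pos (And.intro hp.ε_pos hp.ε_le)
  refine hA.progBound.classBound (by positivity) hp.n₀_mul_le_X ?_ t
  have hK := hp.sq_K_le_X
  have : (1 + ε) * (X + (2 * (K : ℝ)) ^ 2) ≤ (1 + 2 * ε) * X := by nlinarith [sq_nonneg (K : ℝ)]
  push_cast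
  nlinarith

theorem IncrementFree.le_neg_sum_balanced_mul (hA : IncrementFree A N n₀ α ε)
    (hp : CircleParameters N n₀ M K X α ε) :
    M * (α ^ 2 * N / 2) ≤ -∑ n ∈ range M, ∑ x ∈ range (N + 1),
      balanced A N α x * balanced A N α (x + (n + 1) ^ 2) := by
  rw [le_neg, ← mul_neg]
  refine (sum_le_card_nsmul (range M) _ (-(α ^ 2 * N / 2)) fun n hn => ?_).trans_eq ?_
  · have hnM : (n + 1) ^ 2 ≤ M ^ 2 := Nat.pow_le_pow_left (mem_range.1 hn) 2
    have hM := hp.sq_M_le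
    refine hA.progBound.sum_balanced_mul_balanced_le hA.subset hp.α_pos.le hA.card_eq ?_
      (fun a ha ha' => hA.noSquareDiff _ ha' a ha (n + 1) n.succ_pos rfl) (m := N / 8) (by omega)
      hp.n₀_le (by omega)
    exact mul_le_mul_of_nonneg_right (by linarith [hp.ε_le]) hp.α_pos.le
  · rw [card_range, nsmul_eq_mul]

theorem sum_range_norm_window_sq_eq {f : ℕ → ℝ} (hf : ∀ y, N < y → f y = 0) {P : ℕ}
    (hP : N + X ≤ P) (θ : ℝ) : ∑ t ∈ range P, ‖window f X θ t‖ ^ 2 =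
      ∑ t ∈ range (N + X), ‖window f X θ t‖ ^ 2 := by
  refine (sum_subset (range_subset_range.2 hP) fun t _ ht => ?_).symm
  rw [mem_range, not_lt] at ht
  have hzero : window f X θ t = 0 := sum_eq_zero fun z hz => by
    have hzX := mem_range.1 (mem_filter.1 hz).1
    rw [hf (t - z) (by omega), Complex.ofReal_zero, mul_zero]
  rw [hzero, norm_zero, zero_pow two_ne_zero]

theorem IncrementFree.le_sum_norm_window_balanced (hA : IncrementFree A N n₀ α ε)
    (hp : CircleParameters N n₀ M K X α ε) :
    α ^ 2 * N * X ^ 2 / 48 ≤ ∑ q ∈ Icc 1 K, (√q)⁻¹ * ∑ a ∈ reducedResidues q,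
      ∑ t ∈ range (N + X), ‖window (balanced A N α) X (a / q) t‖ ^ 2 := by
  have hf : ∀ y, N < y → balanced A N α y = 0 := fun y => balanced_eq_zero hA.subset
  obtain ⟨hN, hM, hX, hα⟩ :=
    And.intro hp.N_pos (And.intro hp.M_pos (And.intro hp.X_pos hp.α_pos))
  have hXN := hp.X_le
  have hM8 := hp.sq_M_le
  have hM' : (0 : ℝ) < M := Nat.cast_pos.2 hM
  have hcircle := neg_sum_mul_le_sum_window (balanced A N α) (P := 4 * N) hf (by omega) (by omega)
    (by positivity : 0 < α / 4) (by linarith [hp.α_le_one]) hp.le_M hp.le_K hX hp.X_le_sq_M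
  simp_rw [sum_range_norm_window_sq_eq hf (by omega : N + X ≤ 4 * N)] at hcircle
  set W := ∑ q ∈ Icc 1 K, (√q)⁻¹ * ∑ a ∈ reducedResidues q,
    ∑ t ∈ range (N + X), ‖window (balanced A N α) X (a / q) t‖ ^ 2
  have hminor : α / 4 * M * ∑ y ∈ range (N + 1), balanced A N α y ^ 2 ≤ α / 4 * M * (α * N) :=
    mul_le_mul_of_nonneg_left (sum_balanced_sq_le hA.subset hA.card_eq) (by positivity)
  have hmajor : M * (α ^ 2 * N / 4) ≤ M * (12 / X ^ 2 * W) := by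
    linarith [hA.le_neg_sum_balanced_mul hp, show 12 * (M : ℝ) / X ^ 2 * W = M * (12 / X ^ 2 * W) by
      ring]
  have hW := le_of_mul_le_mul_left hmajor hM'
  rw [div_mul_eq_mul_div, le_div_iff₀ (by positivity)] at hW
  linarith

theorem sum_reducedResidues_norm_window_balanced_le (hα : 0 ≤ α) (hX : 0 < X) (hXN : X ≤ N) {q : ℕ}
    (hq : q ∈ Icc 2 K) :
    ∑ a ∈ reducedResidues q, ∑ t ∈ range (N + X), ‖window (balanced A N α) X (a / q) t‖ ^ 2 ≤
      2 * X ^ 2 * ∑ t ∈ range (N + X), energy (windowSet A X t) X q + α ^ 2 * N * K ^ 3 := by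
  obtain ⟨hq2, hqK⟩ := mem_Icc.1 hq
  have hX' : (X : ℝ) ≠ 0 := Nat.cast_ne_zero.2 hX.ne'
  have hXN' : (X : ℝ) ≤ N := Nat.cast_le.2 hXN
  have hqK' : (q : ℝ) ≤ K := Nat.cast_le.2 hqK
  have hcard : (#(reducedResidues q) : ℝ) ≤ K :=
    Nat.cast_le.2 (((card_filter_le _ _).trans (card_range q).le).trans hqK)
  calc ∑ a ∈ reducedResidues q, ∑ t ∈ range (N + X), ‖window (balanced A N α) X (a / q) t‖ ^ 2
      ≤ ∑ a ∈ reducedResidues q, ∑ t ∈ range (N + X),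
          (2 * ‖expSum (windowSet A X t) (a / q)‖ ^ 2 + α ^ 2 * q ^ 2 / 2) :=
        sum_le_sum fun a ha => sum_le_sum fun t _ => norm_window_balanced_sq_le hα t hq2 ha
    _ = 2 * X ^ 2 * ∑ t ∈ range (N + X), energy (windowSet A X t) X q +
          #(reducedResidues q) * ((N + X) * (α ^ 2 * q ^ 2 / 2)) := by
        simp_rw [sum_add_distrib, sum_const, card_range, nsmul_eq_mul, Nat.cast_add]
        rw [sum_comm, mul_sum]
        refine congrArg₂ _ (sum_congr rfl fun t _ => ?_) rfl
        rw [energy, ← mul_sum]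
        field_simp
    _ ≤ 2 * X ^ 2 * ∑ t ∈ range (N + X), energy (windowSet A X t) X q +
          K * ((N + N) * (α ^ 2 * K ^ 2 / 2)) := by gcongr
    _ = _ := by ring

theorem sum_Icc_two_norm_window_balanced_le (hα : 0 ≤ α) (hX : 0 < X) (hXN : X ≤ N)
    (hK : 8000 * (K : ℝ) ^ 2 ≤ X) :
    ∑ q ∈ Icc 2 K, (√q)⁻¹ * ∑ a ∈ reducedResidues q,
        ∑ t ∈ range (N + X), ‖window (balanced A N α) X (a / q) t‖ ^ 2 ≤
      2 * X ^ 2 * ∑ t ∈ range (N + X), gaussEnergy (windowSet A X t) X K +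
        α ^ 2 * N * X ^ 2 / 1000 := by
  have hterm : ∀ q ∈ Icc 2 K, (√q)⁻¹ * ∑ a ∈ reducedResidues q, ∑ t ∈ range (N + X),
      ‖window (balanced A N α) X (a / q) t‖ ^ 2 ≤
      2 * X ^ 2 * ∑ t ∈ range (N + X), (√q)⁻¹ * energy (windowSet A X t) X q +
        α ^ 2 * N * K ^ 3 := fun q hq => by
    have hq1 : (1 : ℝ) ≤ q := Nat.one_le_cast.2 (by linarith [(mem_Icc.1 hq).1])
    refine (mul_le_mul_of_nonneg_left (sum_reducedResidues_norm_window_balanced_le hα hX hXN hq)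
      (by positivity)).trans ?_
    rw [mul_add, mul_left_comm, ← mul_sum]
    exact add_le_add_right (mul_le_of_le_one_left (by positivity)
      (inv_le_one_of_one_le₀ (Real.one_le_sqrt.2 hq1))) _
  have hcard : (#(Icc 2 K) : ℝ) ≤ K := Nat.cast_le.2 (by rw [Nat.card_Icc]; omega)
  have herror : #(Icc 2 K) * (α ^ 2 * N * K ^ 3) ≤ α ^ 2 * N * (X : ℝ) ^ 2 / 1000 := by
    calc #(Icc 2 K) * (α ^ 2 * N * (K : ℝ) ^ 3) ≤ K * (α ^ 2 * N * K ^ 3) := by gcongr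
      _ = α ^ 2 * N * (K ^ 2) ^ 2 := by ring
      _ ≤ α ^ 2 * N * (X / 8000) ^ 2 := by gcongr; linarith
      _ ≤ α ^ 2 * N * X ^ 2 / 1000 := by
        linarith [show 0 ≤ α ^ 2 * N * (X : ℝ) ^ 2 by positivity]
  refine (sum_le_sum hterm).trans ?_
  rw [sum_add_distrib, ← mul_sum, sum_comm, sum_const, nsmul_eq_mul]
  exact add_le_add_right herror _

theorem IncrementFree.le_sum_gaussEnergy (hA : IncrementFree A N n₀ α ε)
    (hp : CircleParameters N n₀ M K X α ε) :
    α ^ 2 * N / 200 ≤ ∑ t ∈ range (N + X), gaussEnergy (windowSet A X t) X K := by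
  have hα := hp.α_pos
  have hε := hp.ε_le
  have hX' : (0 : ℝ) < X := Nat.cast_pos.2 hp.X_pos
  have hK : 8000 * (K : ℝ) ^ 2 ≤ X := by
    nlinarith [hp.sq_K_le_X, mul_le_mul_of_nonneg_right hε hX'.le]
  have hcard : ∀ t, (#(windowSet A X t) : ℝ) ≤ (1 + 2 * ε) * α * X := fun t =>
    (hA.classBound_windowSet hp t).card_le (by linarith [hp.K_pos])
  have htrivial := sum_sq_card_windowSet_sub_le hA.subset hα.le hA.card_eq le_rfl (by linarith)
    hcard hp.X_le_N
  have hrest := sum_Icc_two_norm_window_balanced_le (A := A) hα.le hp.X_pos hp.X_le hK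
  have hlower := hA.le_sum_norm_window_balanced hp
  have hone : reducedResidues 1 = {0} := by decide
  have hIcc : Icc 1 K = insert 1 (Icc 2 K) := (insert_Icc_succ_left_eq_Icc hp.K_pos).symm
  rw [hIcc, sum_insert (by simp), hone, sum_singleton] at hlower
  simp only [Nat.cast_one, Real.sqrt_one, inv_one, one_mul, Nat.cast_zero, zero_div,
    norm_window_balanced_zero_sq] at hlower
  have hpos : 0 ≤ α ^ 2 * N * (X : ℝ) ^ 2 := by positivity
  refine le_of_mul_le_mul_left ?_ (by positivity : 0 < 2 * (X : ℝ) ^ 2)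
  linarith [mul_le_mul_of_nonneg_left hε hpos]

theorem IncrementFree.exists_gaussEnergy_ge (hA : IncrementFree A N n₀ α ε)
    (hp : CircleParameters N n₀ M K X α ε) :
    ∃ t, #(windowSet A X t) * ((1 + 2 * ε) * α * X - #(windowSet A X t)) / (X : ℝ) ^ 2 +
      ε * α ^ 2 ≤ 1000 * ε * gaussEnergy (windowSet A X t) X K := by
  have hα := hp.α_pos
  have hε := hp.ε_pos
  have hX' : (0 : ℝ) < X := Nat.cast_pos.2 hp.X_pos
  have hN' : (0 : ℝ) < N := Nat.cast_pos.2 hp.N_pos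
  have hdefect := sum_card_windowSet_mul_le hA.subset hα.le hA.card_eq le_rfl hp.N_pos hp.X_le_N
  by_contra! hcon
  have hsum := sum_lt_sum_of_nonempty (nonempty_range_iff.2 (by linarith [hp.N_pos]))
    fun t (_ : t ∈ range (N + X)) => hcon t
  rw [← mul_sum, sum_add_distrib, ← sum_div, sum_const, card_range, nsmul_eq_mul,
    Nat.cast_add] at hsum
  have hdiv := div_le_div_of_nonneg_right hdefect (sq_nonneg (X : ℝ))
  have hcancel : 3 * ε * (α ^ 2 * N * X ^ 2) / (X : ℝ) ^ 2 = 3 * ε * (α ^ 2 * N) := by field_simp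
  have hlength : (N + X : ℝ) * (ε * α ^ 2) ≤ (N + N) * (ε * α ^ 2) := by
    gcongr
    exact hp.X_le
  have henergy := mul_le_mul_of_nonneg_left (hA.le_sum_gaussEnergy hp)
    (by positivity : 0 ≤ 1000 * ε)
  have : 0 ≤ ε * (α ^ 2 * N) := by positivity
  linarith

theorem IncrementFree.exists_classBound_gaussEnergy_ge (hA : IncrementFree A N n₀ α ε)
    (hp : CircleParameters N n₀ M K X α ε) :
    ∃ B ⊆ range X, ClassBound B X (2 * K) ((1 + 2 * ε) * α) ∧ ∃ ρ, ε ≤ ρ ∧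
      (∀ q ∈ Icc 2 (2 * K), energy B X q ≤ ρ * α ^ 2) ∧
      ρ * α ^ 2 ≤ 1000 * ε * gaussEnergy B X K := by
  obtain ⟨t, ht⟩ := hA.exists_gaussEnergy_ge hp
  have hα := hp.α_pos
  have hε := hp.ε_pos
  have hB := hA.classBound_windowSet hp t
  have hcard := hB.card_le (by linarith [hp.K_pos])
  set B := windowSet A X t
  have hdefect : 0 ≤ #B * ((1 + 2 * ε) * α * X - #B) / (X : ℝ) ^ 2 :=
    div_nonneg (mul_nonneg (Nat.cast_nonneg _) (by linarith)) (sq_nonneg _)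
  set r := #B * ((1 + 2 * ε) * α * X - #B) / (X : ℝ) ^ 2
  have hρ : (r / α ^ 2 + ε) * α ^ 2 = r + ε * α ^ 2 := by field_simp
  refine ⟨B, windowSet_subset_range A X t, hB, r / α ^ 2 + ε,
    le_add_of_nonneg_left (by positivity), fun q hq => ?_, hρ ▸ ht⟩
  rw [hρ]
  exact (hB.energy_le (mem_Icc.1 hq).1 (mem_Icc.1 hq).2).trans
    (le_add_of_nonneg_right (by positivity))

end CircleParameters

/-! ### Concentration on a dyadic block of denominators -/

theorem sum_dyadic_inv_sqrt_mul_le {μ : ℕ → ℝ} (hμ : ∀ q, 0 ≤ μ q) (s : Finset ℕ) (Q : ℕ) :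
    √Q * ∑ q ∈ s with q ∈ Ico Q (2 * Q), (√q)⁻¹ * μ q ≤ ∑ q ∈ s with q ∈ Ico Q (2 * Q), μ q := by
  rw [mul_sum]
  refine sum_le_sum fun q hq => ?_
  have hQq : √(Q : ℝ) ≤ √q :=
    Real.sqrt_le_sqrt (by exact_mod_cast (mem_Ico.1 (mem_filter.1 hq).2).1)
  rw [← mul_assoc, ← div_eq_mul_inv]
  exact mul_le_of_le_one_left (hμ q) (div_le_one_of_le₀ hQq (Real.sqrt_nonneg _))

theorem exists_dyadic_sum_ge {μ : ℕ → ℝ} (hμ : ∀ q, 0 ≤ μ q) {K : ℕ} (hK : 2 ≤ K) :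
    ∃ Q, 1 ≤ Q ∧ Q ≤ K ∧ √Q * ∑ q ∈ Icc 2 K, (√q)⁻¹ * μ q ≤
      Nat.log 2 K * ∑ q ∈ Icc 2 K with q ∈ Ico Q (2 * Q), μ q := by
  have hJ : 1 ≤ Nat.log 2 K := Nat.log_pos one_lt_two hK
  have hmaps : ∀ q ∈ Icc 2 K, Nat.log 2 q ∈ Icc 1 (Nat.log 2 K) := fun q hq =>
    mem_Icc.2 ⟨Nat.log_pos one_lt_two (mem_Icc.1 hq).1, Nat.log_mono_right (mem_Icc.1 hq).2⟩
  obtain ⟨j, hj, hsum⟩ := exists_le_sum_fiber_of_maps_to_of_nsmul_le_sum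
    (w := fun q : ℕ => (√q)⁻¹ * μ q) (b := (∑ q ∈ Icc 2 K, (√q)⁻¹ * μ q) / Nat.log 2 K)
    hmaps (nonempty_Icc.2 hJ) (by
      rw [Nat.card_Icc, Nat.add_sub_cancel, nsmul_eq_mul, mul_div_cancel₀]
      positivity)
  have hfiber : (Icc 2 K).filter (fun q => Nat.log 2 q = j) =
      (Icc 2 K).filter (· ∈ Ico (2 ^ j) (2 * 2 ^ j)) := filter_congr fun q _ => by
    rw [Nat.log_eq_iff (Or.inl (Nat.one_le_iff_ne_zero.1 (mem_Icc.1 hj).1)), mem_Ico, pow_succ']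
  rw [div_le_iff₀' (by positivity), hfiber] at hsum
  refine ⟨2 ^ j, Nat.one_le_two_pow, (Nat.pow_le_pow_right two_pos (mem_Icc.1 hj).2).trans
    (Nat.pow_log_le_self 2 (by omega)), ?_⟩
  calc _ ≤ √(2 ^ j : ℕ) * (Nat.log 2 K *
        ∑ q ∈ Icc 2 K with q ∈ Ico (2 ^ j) (2 * 2 ^ j), (√q)⁻¹ * μ q) := by gcongr
    _ = Nat.log 2 K *
        (√(2 ^ j : ℕ) * ∑ q ∈ Icc 2 K with q ∈ Ico (2 ^ j) (2 * 2 ^ j), (√q)⁻¹ * μ q) := by ring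
    _ ≤ _ := by
      gcongr
      exact sum_dyadic_inv_sqrt_mul_le hμ _ _

section DyadicMoments

variable {B 𝒬 : Finset ℕ} {X Q k : ℕ} {α : ℝ}

theorem subset_Icc_of_subset_Ico (hQ : 1 ≤ Q) (h𝒬 : 𝒬 ⊆ Ico Q (2 * Q)) : 𝒬 ⊆ Icc 1 (2 * Q) :=
  h𝒬.trans fun _ hq => mem_Icc.2 ⟨hQ.trans (mem_Ico.1 hq).1, (mem_Ico.1 hq).2.le⟩

theorem ClassBound.mul_pow_le_of_energy_le {r s : ℝ} (hα : 0 < α)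
    (h : ClassBound B X (2 * Q) (2 * α)) (hX : 0 < X) (hQ : 1 ≤ Q) (hB : B ⊆ range X)
    (h𝒬 : 𝒬 ⊆ Ico Q (2 * Q)) (hr : ∀ q ∈ 𝒬, energy B X q ≤ r * α ^ 2) (hr0 : 0 ≤ r)
    (hs0 : 0 ≤ s) (hs : √Q * (s * α ^ 2) ≤ ∑ q ∈ 𝒬, energy B X q) (hk : 1 ≤ k) :
    2 * α * (s ^ 2) ^ k ≤ (8 * r) ^ k * (1 + k * Real.log (2 * Q)) ^ 4 ^ k +
      (1024 * (Q : ℝ) ^ 5) ^ k / X := by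
  have hQ0 : (0 : ℝ) < Q := by exact_mod_cast hQ
  have hmoment := (pow_le_pow_left₀ (by positivity) hs (2 * k)).trans
    (h.sum_energy_pow_le_of_energy_le hX (by omega) hB (subset_Icc_of_subset_Ico hQ h𝒬) hr
      (by positivity) hk)
  push_cast at hmoment
  set F := (1 + k * Real.log (2 * Q)) ^ 4 ^ k
  have hlhs : (√Q * (s * α ^ 2)) ^ (2 * k) = (Q * α ^ 4) ^ k * (s ^ 2) ^ k := by
    rw [pow_mul, mul_pow, Real.sq_sqrt hQ0.le, ← mul_pow]
    ring_nf
  have hmain : (2 * α) ^ (2 * k) * (2 * Q * (r * α ^ 2)) ^ k = (Q * α ^ 4) ^ k * (8 * r) ^ k := by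
    rw [pow_mul, ← mul_pow, ← mul_pow]
    ring_nf
  have herr : (2 * α) ^ (2 * k) * ((2 * (Q : ℝ)) ^ (4 * k) * (2 * Q * (2 * α)) ^ (2 * k)) =
      (Q * α ^ 4) ^ k * (1024 * (Q : ℝ) ^ 5) ^ k := by
    simp only [pow_mul _ _ k, ← mul_pow]
    ring_nf
  refine le_of_mul_le_mul_left ?_ (by positivity : 0 < (Q * α ^ 4) ^ k)
  calc (Q * α ^ 4) ^ k * (2 * α * (s ^ 2) ^ k) = 2 * α * (√Q * (s * α ^ 2)) ^ (2 * k) := by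
        rw [hlhs]
        ring
    _ ≤ 2 * α * ((2 * α) ^ (2 * k - 1) * ((2 * Q * (r * α ^ 2)) ^ k * F +
        (2 * (Q : ℝ)) ^ (4 * k) * (2 * Q * (2 * α)) ^ (2 * k) / X)) := by gcongr
    _ = (2 * α) ^ (2 * k) * ((2 * Q * (r * α ^ 2)) ^ k * F +
        (2 * (Q : ℝ)) ^ (4 * k) * (2 * Q * (2 * α)) ^ (2 * k) / X) := by
      rw [← mul_assoc, mul_pow_sub_one (by omega)]
    _ = _ := by linear_combination F * hmain + herr / X

theorem card_filter_dvd_mul_le {Z : ℕ} (h𝒬 : 𝒬 ⊆ Icc 1 Z) (d : ℕ) :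
    #(𝒬.filter (d ∣ ·)) * d ≤ Z := by
  have hcard : #(𝒬.filter (d ∣ ·)) ≤ Z / d :=
    (card_le_card (filter_subset_filter _ h𝒬)).trans_eq (Nat.Ioc_filter_dvd_card_eq_div Z d)
  exact (Nat.mul_le_mul_right d hcard).trans (Nat.div_mul_le_self Z d)

theorem le_pow_mul_div_pow {q G d m m' : ℝ} (hq : 0 < q) (hG : 0 ≤ G) (hd : 0 < d)
    (hqm : √q ≤ G * m) (hm : m ≤ m' * d ^ (1 / 4 : ℝ)) (hm' : m' * d ≤ 2 * q) :
    q ≤ (2 * G) ^ 4 * (q / d) ^ 3 := by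
  have hsqrt : √q * d ≤ 2 * G * q * d ^ (1 / 4 : ℝ) := by
    calc √q * d ≤ G * (m' * d ^ (1 / 4 : ℝ)) * d := by
          gcongr
          exact hqm.trans (by gcongr)
      _ = G * d ^ (1 / 4 : ℝ) * (m' * d) := by ring
      _ ≤ G * d ^ (1 / 4 : ℝ) * (2 * q) := by gcongr
      _ = _ := by ring
  have hpow := pow_le_pow_left₀ (by positivity) hsqrt 4
  have hroot : (d ^ (1 / 4 : ℝ)) ^ 4 = d := by
    rw [← Real.rpow_natCast, ← Real.rpow_mul hd.le]
    norm_num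
  have hsqrt4 : √q ^ 4 = q ^ 2 := by rw [pow_mul _ 2 2, Real.sq_sqrt hq.le]
  rw [mul_pow, mul_pow _ _ 4, hroot, hsqrt4] at hpow
  rw [div_pow, mul_div_assoc', le_div_iff₀ (by positivity)]
  refine le_of_mul_le_mul_left ?_ (by positivity : 0 < q * d)
  linarith

theorem exists_subset_card_admissible_le {G : ℝ} (hQ : 1 ≤ Q) (h𝒬 : 𝒬 ⊆ Ico Q (2 * Q))
    (hG : √Q ≤ G * #𝒬) {T : ℕ} (hT : ∀ q ∈ 𝒬, #q.divisors ≤ T) (n : ℕ) :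
    ∃ 𝒟 ⊆ 𝒬, 𝒟.Nonempty ∧ (#(admissibleTuples (2 * (12 * n)) 𝒟) : ℝ) * (Q : ℝ) ^ n ≤
      (#𝒟 : ℝ) ^ (2 * (12 * n)) * (T : ℝ) ^ (2 * (12 * n)) ^ 2 * (2 * G) ^ (4 * n) := by
  have hQ0 : (0 : ℝ) < Q := by exact_mod_cast hQ
  have hpos : 0 < G * #𝒬 := (Real.sqrt_pos.2 hQ0).trans_le hG
  have hG0 : 0 < G := pos_of_mul_pos_left hpos (Nat.cast_nonneg _)
  have h𝒬0 : 𝒬.Nonempty := card_pos.1 (by exact_mod_cast pos_of_mul_pos_right hpos hG0.le)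
  obtain ⟨d, hd, hne, hcard, hadm⟩ := exists_dvd_card_admissible_le (s := 1 / 4) (by norm_num)
    h𝒬0 hQ0 (fun q hq => by exact_mod_cast (mem_Ico.1 (h𝒬 hq)).1) hT
  set 𝒟 := 𝒬.filter fun q => d ∣ q
  have hd0 : (0 : ℝ) < d := by exact_mod_cast hd
  have hQw : (Q : ℝ) ≤ (2 * G) ^ 4 * (Q / d) ^ 3 := le_pow_mul_div_pow hQ0 hG0.le hd0 hG hcard
    (by exact_mod_cast card_filter_dvd_mul_le (subset_Icc_of_subset_Ico hQ h𝒬) d)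
  have hroot : (((Q : ℝ) / d) ^ (12 * n)) ^ (1 / 4 : ℝ) = ((Q / d) ^ 3) ^ n := by
    rw [← pow_mul, ← Real.rpow_natCast, ← Real.rpow_natCast, ← Real.rpow_mul (by positivity)]
    push_cast
    ring_nf
  have hadm12 := hadm (12 * n)
  rw [hroot] at hadm12
  refine ⟨𝒟, filter_subset _ _, hne, ?_⟩
  calc (#(admissibleTuples (2 * (12 * n)) 𝒟) : ℝ) * (Q : ℝ) ^ n
      ≤ #(admissibleTuples (2 * (12 * n)) 𝒟) * ((2 * G) ^ 4 * (Q / d) ^ 3) ^ n := by gcongr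
    _ = #(admissibleTuples (2 * (12 * n)) 𝒟) * ((Q / d) ^ 3) ^ n * (2 * G) ^ (4 * n) := by
      rw [mul_pow, pow_mul]
      ring
    _ ≤ _ := by gcongr

theorem ClassBound.mul_pow_le_of_le_energy {T n : ℕ} {v G : ℝ} (hα : 0 < α)
    (h : ClassBound B X (2 * Q) (2 * α)) (hX : 0 < X) (hQ : 1 ≤ Q) (hB : B ⊆ range X)
    (h𝒬 : 𝒬 ⊆ Ico Q (2 * Q)) (hv0 : 0 ≤ v) (hv : ∀ q ∈ 𝒬, v * α ^ 2 ≤ energy B X q)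
    (hT : ∀ q ∈ 𝒬, #q.divisors ≤ T) (hG : √Q ≤ G * #𝒬) (hk : k = 12 * n) (hn : 1 ≤ n) :
    2 * α * (v ^ 2) ^ k ≤ 16 ^ k * (T : ℝ) ^ (2 * k) *
      ((T : ℝ) ^ (2 * k) ^ 2 * (2 * G) ^ (4 * n) / (Q : ℝ) ^ n + (2 * (Q : ℝ)) ^ (2 * k) / X) := by
  have : (0 : ℝ) < Q := by exact_mod_cast hQ
  obtain ⟨𝒟, h𝒟, hne, hadm⟩ := exists_subset_card_admissible_le hQ h𝒬 hG hT n
  rw [← hk] at hadm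
  have hmoment := h.sum_energy_pow_le_card_admissible hX (by omega) hB
    (subset_Icc_of_subset_Ico hQ (h𝒟.trans h𝒬)) (fun q hq => hT q (h𝒟 hq)) (by omega : 1 ≤ k)
  have hsum : #𝒟 * (v * α ^ 2) ≤ ∑ q ∈ 𝒟, energy B X q := by
    rw [← nsmul_eq_mul]
    exact card_nsmul_le_sum _ _ _ fun q hq => hv q (h𝒟 hq)
  have hpow := (pow_le_pow_left₀ (by positivity) hsum (2 * k)).trans hmoment
  push_cast at hpow
  have : (0 : ℝ) < #𝒟 := by exact_mod_cast hne.card_pos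
  set R := (T : ℝ) ^ (2 * k) ^ 2 * (2 * G) ^ (4 * n) / (Q : ℝ) ^ n with hR
  have hadmR : (#(admissibleTuples (2 * k) 𝒟) : ℝ) ≤ #𝒟 ^ (2 * k) * R := by
    rw [hR, mul_div_assoc', ← mul_assoc, le_div_iff₀ (by positivity)]
    exact hadm
  have hα16 : (2 * α) ^ (2 * k) * (2 * α) ^ (2 * k) = 16 ^ k * (α ^ 4) ^ k := by
    simp only [pow_mul _ _ k, ← mul_pow]
    ring_nf
  refine le_of_mul_le_mul_left ?_ (by positivity : 0 < (#𝒟 : ℝ) ^ (2 * k) * (α ^ 4) ^ k)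
  calc (#𝒟 : ℝ) ^ (2 * k) * (α ^ 4) ^ k * (2 * α * (v ^ 2) ^ k)
      = 2 * α * (#𝒟 * (v * α ^ 2)) ^ (2 * k) := by
        simp only [pow_mul, mul_pow]
        ring
    _ ≤ 2 * α * ((2 * α) ^ (2 * k - 1) * (#𝒟 ^ (2 * k) * R * (T * (2 * α)) ^ (2 * k) +
        #𝒟 ^ (2 * k) * (2 * Q) ^ (2 * k) * (T * (2 * α)) ^ (2 * k) / X)) := by
      have := h.nonneg (by omega) hX
      gcongr
      exact hpow.trans (by gcongr)
    _ = (2 * α) ^ (2 * k) * (#𝒟 ^ (2 * k) * R * (T * (2 * α)) ^ (2 * k) +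
        #𝒟 ^ (2 * k) * (2 * Q) ^ (2 * k) * (T * (2 * α)) ^ (2 * k) / X) := by
      rw [← mul_assoc, mul_pow_sub_one (by omega)]
    _ = _ := by
      rw [mul_pow (T : ℝ)]
      linear_combination ((#𝒟 : ℝ) ^ (2 * k) * (T : ℝ) ^ (2 * k) *
        (R + (2 * (Q : ℝ)) ^ (2 * k) / X)) * hα16

end DyadicMoments

theorem eventually_mul_pow_le_exp (a : ℝ) {b : ℝ} (hb : 0 < b) (n : ℕ) :
    ∀ᶠ x : ℝ in Filter.atTop, a * x ^ n ≤ Real.exp (b * x) := by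
  filter_upwards [(isLittleO_pow_exp_pos_mul_atTop n hb).bound (by positivity : 0 < (|a| + 1)⁻¹),
    Filter.eventually_ge_atTop 0] with x hx hx0
  rw [Real.norm_of_nonneg (by positivity), Real.norm_of_nonneg (by positivity), inv_mul_eq_div,
    le_div_iff₀' (by positivity)] at hx
  refine le_trans ?_ hx
  gcongr
  linarith [le_abs_self a]

theorem eventually_card_divisors_pow_le (m : ℕ) : ∀ᶠ x : ℝ in Filter.atTop, ∀ n : ℕ, 1 ≤ n →
    (n : ℝ) ≤ Real.exp (7 * x) → (#n.divisors : ℝ) ^ m ≤ Real.exp (2 * x) := by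
  filter_upwards [eventually_mul_pow_le_exp (8 ^ 2 ^ (m * 4)) one_pos (2 ^ (m * 4)),
    Filter.eventually_ge_atTop 1] with x hx hx1 n hn hnx
  have hlog : Real.log n ≤ 7 * x := (Real.log_le_iff_le_exp (by exact_mod_cast hn)).2 hnx
  have : 0 ≤ Real.log n := Real.log_natCast_nonneg n
  refine le_of_pow_le_pow_left₀ four_ne_zero (by positivity) ?_
  calc ((#n.divisors : ℝ) ^ m) ^ 4 ≤ n * (1 + Real.log n) ^ 2 ^ (m * 4) :=
        (pow_mul _ m 4).symm.trans_le (card_divisors_pow_le _ hn)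
    _ ≤ Real.exp (7 * x) * (8 * x) ^ 2 ^ (m * 4) := by
        gcongr
        linarith
    _ ≤ Real.exp (7 * x) * Real.exp (1 * x) := by
        rw [mul_pow]
        gcongr
    _ = Real.exp (2 * x) ^ 4 := by
        rw [← Real.exp_nat_mul, ← Real.exp_add]
        ring_nf

/-- The set `𝒬` of denominators lies in the dyadic block `[Q, 2Q)`, and the energy of `B` on it
has almost the size forced by a set of density `α = exp (-L)` that admits no density increment by
the factor `1 + ε`; the factor `L` is the loss in passing to a dyadic block. -/
structure DyadicConcentration (B 𝒬 : Finset ℕ) (X Q : ℕ) (L ε ρ : ℝ) : Prop where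
  classBound : ClassBound B X (2 * Q) (2 * Real.exp (-L))
  X_pos : 0 < X
  one_le_Q : 1 ≤ Q
  subset_range : B ⊆ range X
  subset_Ico : 𝒬 ⊆ Ico Q (2 * Q)
  Q_le_exp : (Q : ℝ) ≤ Real.exp (6 * L)
  ε_pos : 0 < ε
  ε_le : ε ≤ 1 / 1000
  ε_le_ρ : ε ≤ ρ
  energy_le : ∀ q ∈ 𝒬, energy B X q ≤ ρ * Real.exp (-L) ^ 2
  le_sum_energy : √Q * (ρ * Real.exp (-L) ^ 2) ≤ 9000 * L * ε * ∑ q ∈ 𝒬, energy B X q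

/-- `L` is large enough, in terms of `n`, for the moments of order `2k` with `k = 12 n` to be
dominated by powers of `exp L`. -/
structure DominatesMoments (n : ℕ) (L : ℝ) : Prop where
  one_le : 1 ≤ L
  small_main : (8 * 18000 ^ 2) ^ (12 * n) * (8 * (12 * n : ℕ)) ^ 4 ^ (12 * n) *
    L ^ (2 * (12 * n) + 4 ^ (12 * n)) ≤ Real.exp (1 / 2 * L)
  small_error : (1024 * 18000 ^ 2) ^ (12 * n) * L ^ (2 * (12 * n)) ≤ Real.exp (1 * L)
  large_main : 16 ^ (12 * n) * 36 ^ (4 * n) * L ^ (4 * n) ≤ Real.exp (1 * L)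
  card_divisors : ∀ m : ℕ, 1 ≤ m → (m : ℝ) ≤ Real.exp (7 * L) →
    (#m.divisors : ℝ) ^ ((2 * (12 * n)) ^ 2 + 2 * (12 * n)) ≤ Real.exp (2 * L)

theorem eventually_dominatesMoments (n : ℕ) : ∀ᶠ L in Filter.atTop, DominatesMoments n L := by
  filter_upwards [Filter.eventually_ge_atTop 1, eventually_mul_pow_le_exp _ one_half_pos _,
    eventually_mul_pow_le_exp _ one_pos _, eventually_mul_pow_le_exp _ one_pos _,
    eventually_card_divisors_pow_le _] with L h1 h2 h3 h4 h5 using ⟨h1, h2, h3, h4, h5⟩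

section DyadicConcentration

variable {B 𝒬 : Finset ℕ} {X Q k n : ℕ} {L ε ρ : ℝ}

theorem DyadicConcentration.ρ_pos (h : DyadicConcentration B 𝒬 X Q L ε ρ) : 0 < ρ :=
  h.ε_pos.trans_le h.ε_le_ρ

theorem DyadicConcentration.L_pos (h : DyadicConcentration B 𝒬 X Q L ε ρ) : 0 < L := by
  have hQ : (0 : ℝ) < Q := by exact_mod_cast h.one_le_Q
  have hρ := h.ρ_pos
  have hpos : 0 < 9000 * L * ε * ∑ q ∈ 𝒬, energy B X q :=
    lt_of_lt_of_le (by positivity) h.le_sum_energy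
  have hLε := pos_of_mul_pos_left hpos (sum_nonneg fun q _ => energy_nonneg B X q)
  linarith [pos_of_mul_pos_left hLε h.ε_pos.le]

theorem one_add_mul_log_le (hQ : 1 ≤ Q) (hk : 1 ≤ k) (hL : 1 ≤ L)
    (hQL : (Q : ℝ) ≤ Real.exp (6 * L)) : 1 + k * Real.log (2 * Q) ≤ 8 * k * L := by
  have hQ0 : (0 : ℝ) < Q := by exact_mod_cast hQ
  have hk1 : (1 : ℝ) ≤ k := by exact_mod_cast hk
  have hlogQ : Real.log Q ≤ 6 * L := (Real.log_le_iff_le_exp hQ0).2 hQL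
  have hlog : Real.log (2 * Q) ≤ 7 * L := by
    rw [Real.log_mul two_ne_zero hQ0.ne']
    linarith [Real.log_two_lt_d9]
  nlinarith [mul_le_mul_of_nonneg_left hlog (by positivity : (0 : ℝ) ≤ k)]

theorem DyadicConcentration.one_add_mul_log_pow_le (h : DyadicConcentration B 𝒬 X Q L ε ρ)
    (hL : 1 ≤ L) (hk : 1 ≤ k) :
    (1 + k * Real.log (2 * Q)) ^ 4 ^ k ≤ (8 * k * L) ^ 4 ^ k := by
  have hQ : (1 : ℝ) ≤ Q := by exact_mod_cast h.one_le_Q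
  have : 0 ≤ Real.log (2 * Q) := Real.log_nonneg (by linarith)
  gcongr
  exact one_add_mul_log_le h.one_le_Q hk hL h.Q_le_exp

theorem DyadicConcentration.sqrt_mul_le_sum_energy (h : DyadicConcentration B 𝒬 X Q L ε ρ) :
    √Q * Real.exp (-L) ^ 2 ≤ 9000 * L * ∑ q ∈ 𝒬, energy B X q := by
  have hρ := h.ρ_pos
  have hL := h.L_pos
  have hS : 0 ≤ ∑ q ∈ 𝒬, energy B X q := sum_nonneg fun q _ => energy_nonneg B X q
  refine le_of_mul_le_mul_left ?_ hρ
  calc ρ * (√Q * Real.exp (-L) ^ 2) = √Q * (ρ * Real.exp (-L) ^ 2) := by ring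
    _ ≤ 9000 * L * ε * ∑ q ∈ 𝒬, energy B X q := h.le_sum_energy
    _ ≤ 9000 * L * ρ * ∑ q ∈ 𝒬, energy B X q := by
      gcongr
      exact h.ε_le_ρ
    _ = _ := by ring

-- The two parts of the energy are separated at `exp (-2L / k) α ^ 2`, where `α = exp (-L)`.
theorem exp_neg_two_mul_div_pow (L : ℝ) (hk : 1 ≤ k) :
    Real.exp (-(2 * L / k)) ^ k = Real.exp (-L) ^ 2 := by
  rw [← Real.exp_nat_mul, ← Real.exp_nat_mul]
  push_cast
  congr 1
  field_simp

theorem DominatesMoments.small_main_le (hL : DominatesMoments n L) (hk : k = 12 * n) (hn : 1 ≤ n) :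
    (8 * Real.exp (-(2 * L / k))) ^ k * (8 * k * L) ^ 4 ^ k * ((18000 * L) ^ 2) ^ k ≤
      Real.exp (-(3 / 2) * L) := by
  have hmain := hL.small_main
  rw [← hk] at hmain
  calc _ = Real.exp (-L) ^ 2 *
        ((8 * 18000 ^ 2) ^ k * (8 * k) ^ 4 ^ k * L ^ (2 * k + 4 ^ k)) := by
        rw [← exp_neg_two_mul_div_pow L (by omega : 1 ≤ k), pow_add, pow_mul]
        simp only [mul_pow]
        ring
    _ ≤ Real.exp (-L) ^ 2 * Real.exp (1 / 2 * L) := by gcongr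
    _ = _ := by
        rw [← Real.exp_nat_mul, ← Real.exp_add]
        push_cast
        ring_nf

theorem DominatesMoments.small_error_le (hL : DominatesMoments n L) (hk : k = 12 * n)
    (hX : 0 < X) (hQL : (Q : ℝ) ≤ Real.exp (6 * L)) (hXL : Real.exp ((30 * k + 9) * L) ≤ X) :
    (1024 * (Q : ℝ) ^ 5) ^ k / X * ((18000 * L) ^ 2) ^ k ≤ Real.exp (-(3 / 2) * L) := by
  have herr := hL.small_error
  have hL1 := hL.one_le
  rw [← hk] at herr
  rw [div_mul_eq_mul_div, div_le_iff₀ (by exact_mod_cast hX)]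
  calc (1024 * (Q : ℝ) ^ 5) ^ k * ((18000 * L) ^ 2) ^ k
      ≤ (1024 * Real.exp (6 * L) ^ 5) ^ k * ((18000 * L) ^ 2) ^ k := by gcongr
    _ = Real.exp (6 * L) ^ (5 * k) * ((1024 * 18000 ^ 2) ^ k * L ^ (2 * k)) := by
      rw [pow_mul, pow_mul]
      simp only [mul_pow]
      ring
    _ ≤ Real.exp (6 * L) ^ (5 * k) * Real.exp (1 * L) := by gcongr
    _ = Real.exp ((30 * k + 1) * L) := by
      rw [← Real.exp_nat_mul, ← Real.exp_add]
      push_cast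
      ring_nf
    _ ≤ Real.exp (-(3 / 2) * L + (30 * k + 9) * L) := Real.exp_le_exp.2 (by linarith)
    _ ≤ Real.exp (-(3 / 2) * L) * X := by
      rw [Real.exp_add]
      gcongr

theorem DyadicConcentration.sum_energy_lt_half (h : DyadicConcentration B 𝒬 X Q L ε ρ)
    (hL : DominatesMoments n L) (hk : k = 12 * n) (hn : 1 ≤ n)
    (hXL : Real.exp ((30 * k + 9) * L) ≤ X) :
    ∑ q ∈ 𝒬 with energy B X q < Real.exp (-(2 * L / k)) * Real.exp (-L) ^ 2, energy B X q <
      (∑ q ∈ 𝒬, energy B X q) / 2 := by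
  have hL1 := hL.one_le
  have := h.L_pos
  have hk1 : 1 ≤ k := by omega
  by_contra! hlarge
  have hs : √Q * ((18000 * L)⁻¹ * Real.exp (-L) ^ 2) ≤
      ∑ q ∈ 𝒬 with energy B X q < Real.exp (-(2 * L / k)) * Real.exp (-L) ^ 2, energy B X q := by
    rw [mul_left_comm, inv_mul_le_iff₀ (by positivity)]
    nlinarith [h.sqrt_mul_le_sum_energy]
  have hmoment := h.classBound.mul_pow_le_of_energy_le (Real.exp_pos _) h.X_pos h.one_le_Q
    h.subset_range ((filter_subset _ _).trans h.subset_Ico) (fun q hq => (mem_filter.1 hq).2.le)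
    (Real.exp_pos _).le (by positivity) hs hk1
  have hlog := h.one_add_mul_log_pow_le hL1 hk1
  have hscaled := mul_le_mul_of_nonneg_right hmoment (by positivity : 0 ≤ ((18000 * L) ^ 2) ^ k)
  rw [mul_assoc, ← mul_pow, ← mul_pow, inv_mul_cancel₀ (by positivity), one_pow, one_pow, mul_one,
    add_mul] at hscaled
  have hmain : (8 * Real.exp (-(2 * L / k))) ^ k * (1 + k * Real.log (2 * Q)) ^ 4 ^ k *
      ((18000 * L) ^ 2) ^ k ≤ Real.exp (-(3 / 2) * L) :=
    le_trans (by gcongr) (hL.small_main_le hk hn)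
  have herr := hL.small_error_le hk h.X_pos h.Q_le_exp hXL
  have hlt : Real.exp (-(3 / 2) * L) < Real.exp (-L) := Real.exp_lt_exp.2 (by linarith)
  linarith

theorem DyadicConcentration.sqrt_le_mul_card {p : ℕ → Prop} [DecidablePred p]
    (h : DyadicConcentration B 𝒬 X Q L ε ρ)
    (hp : ∑ q ∈ 𝒬 with p q, energy B X q < (∑ q ∈ 𝒬, energy B X q) / 2) :
    √Q ≤ 18 * L * #(𝒬.filter (¬ p ·)) := by
  have hρ := h.ρ_pos
  have hL := h.L_pos
  have hε := h.ε_le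
  have hsplit := sum_filter_add_sum_filter_not 𝒬 p (energy B X)
  set 𝒯 := 𝒬.filter (¬ p ·)
  have hcard : ∑ q ∈ 𝒯, energy B X q ≤ #𝒯 * (ρ * Real.exp (-L) ^ 2) := by
    rw [← nsmul_eq_mul]
    exact sum_le_card_nsmul _ _ _ fun q hq => h.energy_le q (mem_filter.1 hq).1
  have hsum : ∑ q ∈ 𝒬, energy B X q ≤ 2 * (#𝒯 * (ρ * Real.exp (-L) ^ 2)) := by linarith
  have : 0 ≤ ∑ q ∈ 𝒬, energy B X q := sum_nonneg fun q _ => energy_nonneg B X q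
  refine le_of_mul_le_mul_left ?_ (by positivity : 0 < ρ * Real.exp (-L) ^ 2)
  calc (ρ * Real.exp (-L) ^ 2) * √Q ≤ 9000 * L * ε * ∑ q ∈ 𝒬, energy B X q := by
        linarith [h.le_sum_energy]
    _ ≤ 9000 * L * (1 / 1000) * (2 * (#𝒯 * (ρ * Real.exp (-L) ^ 2))) := by
        have := h.ε_pos
        gcongr
    _ = _ := by ring

theorem DominatesMoments.exists_card_divisors_le {𝒯 : Finset ℕ} (hL : DominatesMoments n L)
    (hk : k = 12 * n) (h𝒯 : 𝒯.Nonempty) (hQ : 1 ≤ Q) (h𝒯Q : 𝒯 ⊆ Ico Q (2 * Q))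
    (hQL : (Q : ℝ) ≤ Real.exp (6 * L)) :
    ∃ T : ℕ, 1 ≤ T ∧ (∀ q ∈ 𝒯, #q.divisors ≤ T) ∧
      (T : ℝ) ^ ((2 * k) ^ 2 + 2 * k) ≤ Real.exp (2 * L) := by
  obtain ⟨q, hq, hmax⟩ := exists_max_image 𝒯 (fun q => #q.divisors) h𝒯
  have hq1 : 1 ≤ q := hQ.trans (mem_Ico.1 (h𝒯Q hq)).1
  refine ⟨#q.divisors, card_pos.2 (Nat.nonempty_divisors.2 (by omega)), hmax,
    hk ▸ hL.card_divisors q hq1 ?_⟩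
  have hq2 : (q : ℝ) ≤ 2 * Q := by exact_mod_cast (mem_Ico.1 (h𝒯Q hq)).2.le
  calc (q : ℝ) ≤ Real.exp L * Real.exp (6 * L) := hq2.trans (by
        gcongr
        linarith [Real.add_one_le_exp L, hL.one_le])
    _ = Real.exp (7 * L) := by
      rw [← Real.exp_add]
      ring_nf

theorem DominatesMoments.large_main_le {κ T : ℝ} (hL : DominatesMoments n L) (hk : k = 12 * n)
    (hQ : 1 ≤ Q) (hn : 9 ≤ κ * n) (hQκ : Real.exp (κ * L) < Q) (hT : 0 ≤ T)
    (hTL : T ^ ((2 * k) ^ 2 + 2 * k) ≤ Real.exp (2 * L)) :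
    16 ^ k * T ^ (2 * k) * (T ^ (2 * k) ^ 2 * (2 * (18 * L)) ^ (4 * n) / (Q : ℝ) ^ n) ≤
      Real.exp (-6 * L) := by
  have : (0 : ℝ) < Q := by exact_mod_cast hQ
  have hmain := hL.large_main
  have hL1 := hL.one_le
  rw [← hk] at hmain
  rw [mul_div_assoc', div_le_iff₀ (by positivity)]
  calc 16 ^ k * T ^ (2 * k) * (T ^ (2 * k) ^ 2 * (2 * (18 * L)) ^ (4 * n))
      = (16 ^ k * 36 ^ (4 * n) * L ^ (4 * n)) * T ^ ((2 * k) ^ 2 + 2 * k) := by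
        rw [← mul_assoc 2 18 L, mul_pow _ L, pow_add]
        norm_num1
        ring
    _ ≤ Real.exp (1 * L) * Real.exp (2 * L) := by gcongr
    _ ≤ Real.exp (-6 * L) * Real.exp (κ * L) ^ n := by
        rw [← Real.exp_nat_mul, ← Real.exp_add, ← Real.exp_add]
        exact Real.exp_le_exp.2 (by nlinarith)
    _ ≤ _ := by gcongr

theorem DominatesMoments.large_error_le {T : ℝ} (hL : DominatesMoments n L) (hk : k = 12 * n)
    (hX : 0 < X) (hT : 1 ≤ T) (hTL : T ^ ((2 * k) ^ 2 + 2 * k) ≤ Real.exp (2 * L))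
    (hQL : (Q : ℝ) ≤ Real.exp (6 * L)) (hXL : Real.exp ((30 * k + 9) * L) ≤ X) :
    16 ^ k * T ^ (2 * k) * ((2 * (Q : ℝ)) ^ (2 * k) / X) ≤ Real.exp (-6 * L) := by
  have hL1 := hL.one_le
  have hTk : T ^ (2 * k) ≤ Real.exp (2 * L) := (pow_le_pow_right₀ hT (by omega)).trans hTL
  have h16 : (16 : ℝ) ^ k ≤ Real.exp (1 * L) := by
    refine le_trans ?_ hL.large_main
    rw [← hk, mul_assoc, ← mul_pow]
    exact le_mul_of_one_le_right (by positivity) (one_le_pow₀ (by linarith))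
  have h2Q : 2 * (Q : ℝ) ≤ Real.exp L * Real.exp (6 * L) := by
    gcongr
    linarith [Real.add_one_le_exp L]
  rw [mul_div_assoc', div_le_iff₀ (by exact_mod_cast hX)]
  calc 16 ^ k * T ^ (2 * k) * (2 * (Q : ℝ)) ^ (2 * k)
      ≤ Real.exp (1 * L) * Real.exp (2 * L) * (Real.exp L * Real.exp (6 * L)) ^ (2 * k) := by gcongr
    _ = Real.exp ((14 * k + 3) * L) := by
      rw [← Real.exp_add, ← Real.exp_add, ← Real.exp_nat_mul, ← Real.exp_add]
      push_cast
      ring_nf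
    _ ≤ Real.exp (-6 * L + (30 * k + 9) * L) := Real.exp_le_exp.2 (by nlinarith)
    _ ≤ Real.exp (-6 * L) * X := by
      rw [Real.exp_add]
      gcongr

theorem DyadicConcentration.le_exp {κ : ℝ} (h : DyadicConcentration B 𝒬 X Q L ε ρ)
    (hL : DominatesMoments n L) (hk : k = 12 * n) (hn : 1 ≤ n) (hκ : 9 ≤ κ * n)
    (hXL : Real.exp ((30 * k + 9) * L) ≤ X) : (Q : ℝ) ≤ Real.exp (κ * L) := by
  by_contra! hQκ
  have hcard := h.sqrt_le_mul_card (h.sum_energy_lt_half hL hk hn hXL)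
  set 𝒯 := 𝒬.filter (¬ energy B X · < Real.exp (-(2 * L / k)) * Real.exp (-L) ^ 2)
  have h𝒯Q : 𝒯 ⊆ Ico Q (2 * Q) := (filter_subset _ _).trans h.subset_Ico
  have h𝒯 : 𝒯.Nonempty := by
    by_contra! h0
    rw [h0, card_empty, Nat.cast_zero, mul_zero] at hcard
    exact (Real.sqrt_pos.2 (by exact_mod_cast h.one_le_Q)).not_ge hcard
  obtain ⟨T, hT1, hT, hTL⟩ := hL.exists_card_divisors_le hk h𝒯 h.one_le_Q h𝒯Q h.Q_le_exp
  have hmoment := h.classBound.mul_pow_le_of_le_energy (Real.exp_pos _) h.X_pos h.one_le_Q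
    h.subset_range h𝒯Q (Real.exp_pos _).le (fun q hq => not_lt.1 (mem_filter.1 hq).2) hT hcard
    hk hn
  have hlhs : 2 * Real.exp (-L) * (Real.exp (-(2 * L / k)) ^ 2) ^ k = 2 * Real.exp (-5 * L) := by
    rw [pow_right_comm, exp_neg_two_mul_div_pow L (by omega), ← pow_mul, ← Real.exp_nat_mul,
      mul_assoc, ← Real.exp_add]
    push_cast
    ring_nf
  rw [hlhs, mul_add] at hmoment
  have hmain := hL.large_main_le hk h.one_le_Q hκ hQκ (Nat.cast_nonneg T) hTL
  have herr := hL.large_error_le hk h.X_pos (by exact_mod_cast hT1) hTL h.Q_le_exp hXL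
  have hlt : Real.exp (-6 * L) < Real.exp (-5 * L) := Real.exp_lt_exp.2 (by linarith [h.L_pos])
  linarith

theorem exists_forall_dyadicConcentration_le_exp {κ : ℝ} (hκ : 0 < κ) :
    ∃ L₁ P : ℝ, ∀ L ≥ L₁, ∀ (B 𝒬 : Finset ℕ) (X Q : ℕ) (ε ρ : ℝ),
      DyadicConcentration B 𝒬 X Q L ε ρ → Real.exp (P * L) ≤ X → (Q : ℝ) ≤ Real.exp (κ * L) := by
  obtain ⟨n, hn⟩ := exists_nat_ge (9 / κ)
  rw [div_le_iff₀' hκ] at hn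
  have hn1 : 1 ≤ n := Nat.one_le_iff_ne_zero.2 fun h => by
    rw [h, Nat.cast_zero, mul_zero] at hn
    linarith
  obtain ⟨L₁, hL₁⟩ := Filter.eventually_atTop.1 (eventually_dominatesMoments n)
  exact ⟨L₁, 30 * (12 * n : ℕ) + 9, fun L hL B 𝒬 X Q ε ρ h hX => h.le_exp (hL₁ L hL) rfl hn1 hn hX⟩

theorem DyadicConcentration.two_mul_exp_neg_le (h : DyadicConcentration B 𝒬 X Q L ε ρ)
    (hL : 1 ≤ L) (hk : 1 ≤ k) :
    2 * Real.exp (-L) ≤ (648000000 * L ^ 2 * ε) ^ k * (8 * k * L) ^ 4 ^ k +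
      (82944000000 * L ^ 2 * (Q : ℝ) ^ 5) ^ k / X := by
  obtain ⟨hε, hρ⟩ := And.intro h.ε_pos h.ρ_pos
  set s := ρ / (9000 * L * ε) with hs
  have hmoment := h.classBound.mul_pow_le_of_energy_le (s := s) (Real.exp_pos _) h.X_pos h.one_le_Q
    h.subset_range h.subset_Ico h.energy_le hρ.le (by positivity) (by
      rw [hs, div_mul_eq_mul_div, mul_div_assoc', div_le_iff₀' (by positivity)]
      exact h.le_sum_energy) hk
  have hs2 : s ^ 2 * (81000000 * L ^ 2 * ε ^ 2) = ρ ^ 2 := by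
    rw [hs]
    field_simp
    ring
  have hmain : 8 * ρ ≤ s ^ 2 * (648000000 * L ^ 2 * ε) :=
    le_of_mul_le_mul_left (by nlinarith [h.ε_le_ρ]) hε
  have hone : 1 ≤ s ^ 2 * (81000000 * L ^ 2) :=
    le_of_mul_le_mul_left (by nlinarith [h.ε_le_ρ]) (by positivity : 0 < ε ^ 2)
  have herr : 1024 * (Q : ℝ) ^ 5 ≤ s ^ 2 * (82944000000 * L ^ 2 * (Q : ℝ) ^ 5) := by
    linarith [mul_le_mul_of_nonneg_left hone (by positivity : 0 ≤ 1024 * (Q : ℝ) ^ 5)]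
  have hlog := h.one_add_mul_log_pow_le hL hk
  have : 0 ≤ Real.log (2 * Q) := by exact_mod_cast Real.log_natCast_nonneg (2 * Q)
  refine le_of_mul_le_mul_left ?_ (by positivity : 0 < (s ^ 2) ^ k)
  calc (s ^ 2) ^ k * (2 * Real.exp (-L)) = 2 * Real.exp (-L) * (s ^ 2) ^ k := mul_comm _ _
    _ ≤ (s ^ 2 * (648000000 * L ^ 2 * ε)) ^ k * (8 * k * L) ^ 4 ^ k +
        (s ^ 2 * (82944000000 * L ^ 2 * (Q : ℝ) ^ 5)) ^ k / X := hmoment.trans (by gcongr)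
    _ = _ := by
      rw [mul_pow (s ^ 2), mul_pow (s ^ 2)]
      ring

theorem natLog_two_le {K : ℕ} (hK : K ≠ 0) (hKL : (K : ℝ) ≤ Real.exp (6 * L)) :
    (Nat.log 2 K : ℝ) ≤ 9 * L := by
  have hpow : (2 : ℝ) ^ Nat.log 2 K ≤ Real.exp (6 * L) :=
    le_trans (by exact_mod_cast Nat.pow_log_le_self 2 hK) hKL
  have hlog := (Real.log_le_iff_le_exp (by positivity)).2 hpow
  rw [Real.log_pow] at hlog
  nlinarith [Real.log_two_gt_d9, (Nat.cast_nonneg (Nat.log 2 K) : (0 : ℝ) ≤ _)]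

theorem CircleParameters.two_le_K {α : ℝ} {N n₀ M K : ℕ}
    (hp : CircleParameters N n₀ M K X α ε) : 2 ≤ K := by
  have hα : (α / 4) ^ 2 ≤ 1 := pow_le_one₀ (by linarith [hp.α_pos]) (by linarith [hp.α_le_one])
  have hK : (288 : ℝ) ≤ K := hp.le_K.trans (mul_le_of_le_one_right (Nat.cast_nonneg K) hα)
  have : 288 ≤ K := by exact_mod_cast hK
  omega

theorem IncrementFree.exists_dyadicConcentration {A : Finset ℕ} {N n₀ M K : ℕ}
    (hA : IncrementFree A N n₀ (Real.exp (-L)) ε)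
    (hp : CircleParameters N n₀ M K X (Real.exp (-L)) ε) (hKL : (K : ℝ) ≤ Real.exp (6 * L)) :
    ∃ B 𝒬 Q ρ, DyadicConcentration B 𝒬 X Q L ε ρ := by
  obtain ⟨B, hB, hcls, ρ, hερ, hle, hsum⟩ := hA.exists_classBound_gaussEnergy_ge hp
  obtain ⟨Q, hQ1, hQK, hQ⟩ := exists_dyadic_sum_ge (energy_nonneg B X) hp.two_le_K
  have hε := hp.ε_pos
  refine ⟨B, {q ∈ Icc 2 K | q ∈ Ico Q (2 * Q)}, Q, ρ, fun d hd hdQ x => ?_, hp.X_pos, hQ1, hB,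
    fun q hq => (mem_filter.1 hq).2, le_trans (by exact_mod_cast hQK) hKL, hε, hp.ε_le, hερ,
    fun q hq => hle q ?_, ?_⟩
  · refine (hcls d hd (hdQ.trans (by omega)) x).trans ?_
    gcongr
    linarith [hp.ε_le]
  · have := mem_Icc.1 (mem_filter.1 hq).1
    exact mem_Icc.2 ⟨this.1, by omega⟩
  · have hlog := natLog_two_le (by have := hp.K_pos; omega) hKL
    have hS : 0 ≤ ∑ q ∈ Icc 2 K with q ∈ Ico Q (2 * Q), energy B X q :=
      sum_nonneg fun q _ => energy_nonneg B X q
    calc √Q * (ρ * Real.exp (-L) ^ 2)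
        ≤ √Q * (1000 * ε * gaussEnergy B X K) := by gcongr
      _ = 1000 * ε * (√Q * gaussEnergy B X K) := by ring
      _ ≤ 1000 * ε * (9 * L * ∑ q ∈ Icc 2 K with q ∈ Ico Q (2 * Q), energy B X q) := by
        exact mul_le_mul_of_nonneg_left (hQ.trans (by gcongr)) (by positivity)
      _ = _ := by ring

end DyadicConcentration

/-! ### Choice of parameters -/

theorem NoSquareDiff.progBound_of_forall_card_le {A : Finset ℕ} (hA : NoSquareDiff A) {n₀ : ℕ}
    {β : ℝ} (h : ∀ n ≥ n₀, ∀ A' ⊆ Icc 1 n, NoSquareDiff A' → (#A' : ℝ) ≤ β * n) :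
    ProgBound A n₀ β := by
  classical
  intro d hd x n hn
  refine h n hn _ (filter_subset _ _) fun i hi j hj m hm hij => ?_
  obtain ⟨-, a, ha, hax⟩ := mem_filter.1 hi
  obtain ⟨-, b, hb, hbx⟩ := mem_filter.1 hj
  refine hA a ha b hb (d * m) (by positivity) ?_
  have hab : (a : ℤ) = b + (d * m) ^ 2 := by
    rw [hax, hbx, hij]
    push_cast
    ring
  exact_mod_cast hab

theorem le_exp_of_le_pow {a : ℝ} {n : ℕ} (h : a ≤ 2.7 ^ n) : a ≤ Real.exp n := by
  rw [← mul_one (n : ℝ), Real.exp_nat_mul]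
  refine h.trans ?_
  gcongr
  linarith [Real.exp_one_gt_d9]

theorem le_exp_mul_of_le_pow {a b L : ℝ} (n : ℕ) (hb : 0 ≤ b) (hL : 2.7 ≤ L) (h : a ≤ 2.7 ^ n)
    (hn : n ≤ 2.7 * b) : a ≤ Real.exp (b * L) :=
  (le_exp_of_le_pow h).trans (Real.exp_le_exp.2 (by nlinarith))

theorem exp_mul_mul_exp_mul (a b L : ℝ) :
    Real.exp (a * L) * Real.exp (b * L) = Real.exp ((a + b) * L) := by
  rw [← Real.exp_add, add_mul]

theorem exp_mul_pow (a L : ℝ) (n : ℕ) : Real.exp (a * L) ^ n = Real.exp (n * a * L) := by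
  rw [← Real.exp_nat_mul, mul_assoc]

/-- The relative density increment `ν` obtained at density `exp (-L)`. -/
noncomputable def increment (c L : ℝ) : ℝ := Real.exp (-c * L / Real.log L)

/-- The order `k` of the moment of the energies used at density `exp (-L)`: it makes the `k`-th
power of `increment c L` smaller than `exp (-L)` with room to spare. -/
noncomputable def momentOrder (c L : ℝ) : ℕ := ⌈2 * Real.log L / c⌉₊

section Numerics

variable {c L H : ℝ}

theorem one_le_log_of_exp_one_le (hL : Real.exp 1 ≤ L) : 1 ≤ Real.log L :=
  (Real.le_log_iff_exp_le ((Real.exp_pos 1).trans_le hL)).2 hL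

theorem increment_pos : 0 < increment c L := Real.exp_pos _

theorem exp_neg_mul_le_increment_div (hc : 0 ≤ c) (hL : Real.exp 1 ≤ L) :
    Real.exp (-(c + 2) * L) ≤ increment c L / 20 := by
  have hlog := one_le_log_of_exp_one_le hL
  have hL27 : 2.7 ≤ L := by linarith [Real.exp_one_gt_d9]
  rw [le_div_iff₀ (by norm_num)]
  calc Real.exp (-(c + 2) * L) * 20 ≤ Real.exp (-(c + 2) * L) * Real.exp (2 * L) := by
        gcongr
        exact le_exp_mul_of_le_pow 4 (by norm_num) hL27 (by norm_num) (by norm_num)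
    _ = Real.exp (-(c * L)) := by rw [exp_mul_mul_exp_mul]; ring_nf
    _ ≤ increment c L := by
        rw [increment, neg_mul, neg_div]
        gcongr
        exact div_le_self (by positivity) hlog

theorem increment_div_le (hc : 4 ≤ c) (hL : Real.exp 1 ≤ L) : increment c L / 20 ≤ 1 / 1000 := by
  have hlog := one_le_log_of_exp_one_le hL
  have hL0 : 0 < L := (Real.exp_pos 1).trans_le hL
  have hexp : (50 : ℝ) ≤ Real.exp (4 : ℕ) := le_exp_of_le_pow (by norm_num)
  have hexponent : -c * L / Real.log L ≤ -(4 : ℕ) := by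
    rw [div_le_iff₀ (by linarith)]
    push_cast
    nlinarith [Real.log_le_sub_one_of_pos hL0]
  have hle : increment c L ≤ 1 / 50 := calc
    increment c L ≤ Real.exp (-(4 : ℕ)) := Real.exp_le_exp.2 hexponent
    _ ≤ 1 / 50 := by
      rw [Real.exp_neg, ← one_div]
      exact one_div_le_one_div_of_le (by norm_num) hexp
  linarith

theorem one_le_momentOrder (hc : 0 < c) (hL : Real.exp 1 ≤ L) : 1 ≤ momentOrder c L :=
  Nat.one_le_ceil_iff.2 (by have := one_le_log_of_exp_one_le hL; positivity)

theorem momentOrder_le (hc : 0 < c) (hL : Real.exp 1 ≤ L) :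
    (momentOrder c L : ℝ) ≤ 2 * Real.log L / c + 1 :=
  (Nat.ceil_lt_add_one (by have := one_le_log_of_exp_one_le hL; positivity)).le

theorem momentOrder_le_log_div_add_one (hc : 2000 ≤ c) (hL : Real.exp 1 ≤ L) :
    (momentOrder c L : ℝ) ≤ Real.log L / 1000 + 1 := by
  have hl := one_le_log_of_exp_one_le hL
  refine (momentOrder_le (by linarith) hL).trans ?_
  gcongr ?_ + 1
  rw [div_le_div_iff₀ (by positivity) (by norm_num)]
  nlinarith

theorem four_pow_momentOrder_le (hc : 2000 ≤ c) (hL : Real.exp 1 ≤ L) :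
    (4 : ℝ) ^ momentOrder c L ≤ 4 * Real.exp (Real.log L / 4) := by
  have hl := one_le_log_of_exp_one_le hL
  have hk := momentOrder_le_log_div_add_one hc hL
  have hlog4 : Real.log 4 ≤ 2 :=
    (Real.log_le_iff_le_exp (by norm_num)).2
      (by exact_mod_cast le_exp_of_le_pow (a := 4) (n := 2) (by norm_num))
  have hlog0 : 0 ≤ Real.log 4 := Real.log_nonneg (by norm_num)
  calc (4 : ℝ) ^ momentOrder c L = Real.exp (momentOrder c L * Real.log 4) := by
        rw [Real.exp_nat_mul, Real.exp_log (by norm_num)]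
    _ ≤ Real.exp (Real.log 4 + Real.log L / 4) := Real.exp_le_exp.2 (by nlinarith)
    _ = _ := by rw [Real.exp_add, Real.exp_log (by norm_num)]

theorem sq_mul_increment_le (hL : 0 < L) :
    648000000 * L ^ 2 * (increment c L / 20) ≤
      Real.exp (18 + 2 * Real.log L - c * L / Real.log L) := by
  have h18 : (32400000 : ℝ) ≤ Real.exp (18 : ℕ) := le_exp_of_le_pow (by norm_num)
  have hL2 : Real.exp (2 * Real.log L) = L ^ 2 := by
    rw [← Nat.cast_two, Real.exp_nat_mul, Real.exp_log hL]
  calc 648000000 * L ^ 2 * (increment c L / 20) = 32400000 * (L ^ 2 * increment c L) := by ring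
    _ ≤ Real.exp (18 : ℕ) * (L ^ 2 * increment c L) := by
        have := increment_pos (c := c) (L := L)
        gcongr
    _ = _ := by
        rw [← hL2, increment, ← Real.exp_add, ← Real.exp_add]
        push_cast
        ring_nf

theorem eight_mul_mul_le_exp (k : ℕ) (hL : 0 < L) :
    8 * k * L ≤ Real.exp (3 + k + Real.log L) := by
  rw [Real.exp_add, Real.exp_add, Real.exp_log hL]
  gcongr
  · exact_mod_cast le_exp_of_le_pow (a := 8) (n := 3) (by norm_num)
  · linarith [Real.add_one_le_exp (k : ℝ)]

theorem add_mul_exp_div_four_lt (hc : 2000 ≤ c) {l : ℝ} (hl : 1 ≤ l) :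
    18 + 2 * l + 24 * l * Real.exp (l / 4) < c * Real.exp l / (2 * l) := by
  have hsq : l ^ 2 ≤ 16 * Real.exp (l / 2) := by
    nlinarith [Real.quadratic_le_exp_of_nonneg (x := l / 2) (by linarith)]
  have hexp : Real.exp (l / 2) * Real.exp (l / 4) ≤ Real.exp l := by
    rw [← Real.exp_add]
    exact Real.exp_le_exp.2 (by linarith)
  have hone : 1 ≤ Real.exp (l / 4) := Real.one_le_exp (by linarith)
  rw [lt_div_iff₀ (by positivity)]
  calc (18 + 2 * l + 24 * l * Real.exp (l / 4)) * (2 * l)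
      ≤ (44 * l * Real.exp (l / 4)) * (2 * l) := by
        gcongr
        nlinarith
    _ = 88 * Real.exp (l / 4) * l ^ 2 := by ring
    _ ≤ 88 * Real.exp (l / 4) * (16 * Real.exp (l / 2)) := by gcongr
    _ ≤ 1408 * Real.exp l := by linarith
    _ < c * Real.exp l := by nlinarith [Real.exp_pos l]

theorem momentOrder_mul_add_lt (hc : 2000 ≤ c) (hL : Real.exp 1 ≤ L) :
    momentOrder c L * (18 + 2 * Real.log L - c * L / Real.log L) +
      ((4 ^ momentOrder c L : ℕ) : ℝ) * (3 + momentOrder c L + Real.log L) < -L := by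
  have hl := one_le_log_of_exp_one_le hL
  have hL0 : 0 < L := (Real.exp_pos 1).trans_le hL
  have h4 := four_pow_momentOrder_le hc hL
  have hkle := momentOrder_le_log_div_add_one hc hL
  have hk1 : (1 : ℝ) ≤ momentOrder c L := by exact_mod_cast one_le_momentOrder (by linarith) hL
  have hkge : 2 * Real.log L / c ≤ momentOrder c L := Nat.le_ceil _
  have hexponent := add_mul_exp_div_four_lt hc hl
  rw [Real.exp_log hL0] at hexponent
  push_cast
  generalize (momentOrder c L : ℝ) = k, (4 : ℝ) ^ momentOrder c L = F at *
  generalize Real.log L = l at *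
  have hF : F * (3 + k + l) ≤ k * (24 * l * Real.exp (l / 4)) := by
    calc F * (3 + k + l) ≤ 4 * Real.exp (l / 4) * (6 * l) := by
          gcongr
          linarith
      _ = 1 * (24 * l * Real.exp (l / 4)) := by ring
      _ ≤ _ := by gcongr
  have hLk : L ≤ k * (c * L / (2 * l)) := by
    calc L = 2 * l / c * (c * L / (2 * l)) := by field_simp
      _ ≤ _ := by gcongr
  have hlt := mul_lt_mul_of_pos_left hexponent (by linarith : 0 < k)
  have hhalves : c * L / l = 2 * (c * L / (2 * l)) := by field_simp
  rw [hhalves]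
  linarith

theorem moment_main_term_lt (hc : 2000 ≤ c) (hL : Real.exp 1 ≤ L) :
    (648000000 * L ^ 2 * (increment c L / 20)) ^ momentOrder c L *
      (8 * momentOrder c L * L) ^ 4 ^ momentOrder c L < Real.exp (-L) := by
  have hL0 : 0 < L := (Real.exp_pos 1).trans_le hL
  have := increment_pos (c := c) (L := L)
  refine lt_of_le_of_lt ?_ (Real.exp_lt_exp.2 (momentOrder_mul_add_lt hc hL))
  rw [Real.exp_add, Real.exp_nat_mul, Real.exp_nat_mul]
  gcongr
  · exact sq_mul_increment_le hL0
  · exact eight_mul_mul_le_exp _ hL0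

theorem mul_sq_mul_pow_le_exp {b : ℝ} {Q : ℕ} (hL : 0 < L) (hQ : (Q : ℝ) ≤ Real.exp (b * L)) :
    82944000000 * L ^ 2 * (Q : ℝ) ^ 5 ≤ Real.exp (26 + 2 * Real.log L + 5 * b * L) := by
  have h26 : (82944000000 : ℝ) ≤ Real.exp 26 := by
    exact_mod_cast le_exp_of_le_pow (a := 82944000000) (n := 26) (by norm_num)
  have hL2 : Real.exp (2 * Real.log L) = L ^ 2 := by
    rw [← Nat.cast_two, Real.exp_nat_mul, Real.exp_log hL]
  rw [Real.exp_add, Real.exp_add, hL2, ← Nat.cast_ofNat (R := ℝ) (n := 5), ← exp_mul_pow]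
  gcongr

theorem momentOrder_eq_one (hc : 0 < c) (hL : Real.exp 1 ≤ L) (hLc : Real.log L < c / 2) :
    momentOrder c L = 1 := by
  refine le_antisymm (Nat.ceil_le.2 ?_) (one_le_momentOrder hc hL)
  rw [Nat.cast_one, div_le_one hc]
  linarith

theorem moment_error_le_of_le_log {Q : ℕ} (hc : 2000 ≤ c) (hL : Real.exp 1 ≤ L)
    (hLc : c / 2 ≤ Real.log L) (hQ : (Q : ℝ) ≤ Real.exp (1 / 40 * L))
    (hH : L * Real.log L ≤ c * H) :
    (82944000000 * L ^ 2 * (Q : ℝ) ^ 5) ^ momentOrder c L ≤ Real.exp (42 * L + H / 2) := by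
  have hL0 : 0 < L := (Real.exp_pos 1).trans_le hL
  have hl := one_le_log_of_exp_one_le hL
  have hk : (momentOrder c L : ℝ) ≤ 4 * Real.log L / c := by
    have hone : 1 ≤ 2 * Real.log L / c := (one_le_div (by linarith)).2 (by linarith)
    have hdouble : 4 * Real.log L / c = 2 * Real.log L / c + 2 * Real.log L / c := by ring
    linarith [momentOrder_le (c := c) (by linarith) hL]
  have hsq : Real.log L ^ 2 ≤ 2 * L := by
    have := Real.quadratic_le_exp_of_nonneg (by linarith : 0 ≤ Real.log L)
    rw [Real.exp_log hL0] at this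
    linarith
  have hexponent : momentOrder c L * (26 + 2 * Real.log L + 5 * (1 / 40) * L) ≤ 42 * L + H / 2 :=
    calc (momentOrder c L : ℝ) * (26 + 2 * Real.log L + 5 * (1 / 40) * L)
        ≤ 4 * Real.log L / c * (28 * Real.log L + L / 8) := by
          gcongr <;> linarith
      _ = (112 * Real.log L ^ 2 + (L * Real.log L) / 2) / c := by ring
      _ ≤ _ := by
          rw [div_le_iff₀ (by positivity)]
          nlinarith
  refine (pow_le_pow_left₀ (by positivity) (mul_sq_mul_pow_le_exp hL0 hQ) _).trans ?_
  rw [← Real.exp_nat_mul]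
  exact Real.exp_le_exp.2 hexponent

theorem moment_error_le {Q : ℕ} (hc : 2000 ≤ c) (hL : Real.exp 1 ≤ L)
    (hQ : (Q : ℝ) ≤ Real.exp (6 * L)) (hQ' : c / 2 ≤ Real.log L → (Q : ℝ) ≤ Real.exp (1 / 40 * L))
    (hH0 : 0 ≤ H) (hH : L * Real.log L ≤ c * H) :
    (82944000000 * L ^ 2 * (Q : ℝ) ^ 5) ^ momentOrder c L ≤ Real.exp (42 * L + H / 2) := by
  rcases lt_or_ge (Real.log L) (c / 2) with hlog | hlog
  · have hL0 : 0 < L := (Real.exp_pos 1).trans_le hL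
    rw [momentOrder_eq_one (by linarith) hL hlog, pow_one]
    refine (mul_sq_mul_pow_le_exp hL0 hQ).trans (Real.exp_le_exp.2 ?_)
    linarith [Real.exp_one_gt_d9, Real.log_le_sub_one_of_pos hL0]
  · exact moment_error_le_of_le_log hc hL hlog (hQ' hlog) hH

end Numerics

section Parameters

variable {c L ε : ℝ} {N : ℕ}

theorem exists_denominatorBound (hL : 2.7 ≤ L) :
    ∃ K : ℕ, 288 ≤ K * (Real.exp (-L) / 4) ^ 2 ∧ (K : ℝ) ≤ Real.exp (6 * L) := by
  refine ⟨⌈4608 * Real.exp (2 * L)⌉₊, ?_, ?_⟩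
  · calc (288 : ℝ) = 4608 * Real.exp (2 * L) * (Real.exp (-1 * L) / 4) ^ 2 := by
          rw [div_pow, exp_mul_pow, ← mul_div_assoc, mul_assoc, exp_mul_mul_exp_mul]
          norm_num
      _ ≤ _ := by
          rw [neg_one_mul]
          gcongr
          exact Nat.le_ceil _
  · calc (⌈4608 * Real.exp (2 * L)⌉₊ : ℝ) ≤ 4608 * Real.exp (2 * L) + 1 :=
          (Nat.ceil_lt_add_one (by positivity)).le
      _ ≤ 4609 * Real.exp (2 * L) := by
          linarith [Real.one_le_exp (by linarith : 0 ≤ 2 * L)]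
      _ ≤ Real.exp (4 * L) * Real.exp (2 * L) := by
          gcongr
          exact le_exp_mul_of_le_pow 10 (by norm_num) hL (by norm_num) (by norm_num)
      _ = Real.exp (6 * L) := by
          rw [exp_mul_mul_exp_mul]
          norm_num

theorem exists_eight_mul_sq_le (hN : 8 ≤ N) : ∃ M : ℕ, 8 * M ^ 2 ≤ N ∧ N ≤ 32 * M ^ 2 := by
  have hpos : 1 ≤ Nat.sqrt (N / 8) := Nat.sqrt_pos.2 (by omega)
  have hle := Nat.sqrt_le' (N / 8)
  have hlt := Nat.lt_succ_sqrt' (N / 8)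
  have hmod : N < 8 * (N / 8 + 1) := by omega
  exact ⟨Nat.sqrt (N / 8), by omega, by nlinarith⟩

theorem exp_neg_div_four_pow (L : ℝ) : (Real.exp (-L) / 4) ^ 4 = Real.exp (-4 * L) / 256 := by
  rw [div_pow, ← Real.exp_nat_mul]
  norm_num

theorem le_mul_of_le_mul_sq {M : ℕ} (hL : 2.7 ≤ L) (hN : Real.exp (23 * L) ≤ N)
    (hM : (N : ℝ) ≤ 32 * M ^ 2) : 62208 ≤ (Real.exp (-L) / 4) ^ 4 * M := by
  have hconst : (32 * 15925248 ^ 2 : ℝ) ≤ Real.exp (15 * L) :=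
    le_exp_mul_of_le_pow 40 (by norm_num) hL (by norm_num) (by norm_num)
  have hsq : 15925248 * Real.exp (4 * L) ≤ M := by
    refine le_of_sq_le_sq ?_ (by positivity)
    refine le_of_mul_le_mul_left ?_ (by norm_num : (0 : ℝ) < 32)
    calc 32 * (15925248 * Real.exp (4 * L)) ^ 2 = 32 * 15925248 ^ 2 * Real.exp (8 * L) := by
          rw [mul_pow, exp_mul_pow]
          norm_num
          ring
      _ ≤ Real.exp (15 * L) * Real.exp (8 * L) := by gcongr
      _ = Real.exp (23 * L) := by
          rw [exp_mul_mul_exp_mul]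
          norm_num
      _ ≤ 32 * M ^ 2 := hN.trans hM
  calc (62208 : ℝ) = Real.exp (-4 * L) / 256 * (15925248 * Real.exp (4 * L)) := by
        rw [mul_left_comm, div_mul_eq_mul_div, exp_mul_mul_exp_mul]
        norm_num
    _ ≤ _ := by
        rw [exp_neg_div_four_pow]
        gcongr

theorem exp_mul_le_exp_mul_mul {a b e : ℝ} (hN : Real.exp (e * L) ≤ N) (hL : 0 ≤ L)
    (hb : b ≤ a + e) : Real.exp (b * L) ≤ Real.exp (a * L) * N := by
  calc Real.exp (b * L) ≤ Real.exp ((a + e) * L) := by gcongr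
    _ = Real.exp (a * L) * Real.exp (e * L) := (exp_mul_mul_exp_mul a e L).symm
    _ ≤ _ := by gcongr

theorem mul_le_of_le_exp_mul {a b d t x : ℝ} (hx : x ≤ Real.exp (a * L) * N) (ht0 : 0 ≤ t)
    (ht : t ≤ Real.exp (d * L)) (hL : 0 ≤ L) (hd : d + a ≤ b) : t * x ≤ Real.exp (b * L) * N := by
  calc t * x ≤ Real.exp (d * L) * (Real.exp (a * L) * N) :=
        (mul_le_mul_of_nonneg_left hx ht0).trans (by gcongr)
    _ = Real.exp ((d + a) * L) * N := by rw [← mul_assoc, exp_mul_mul_exp_mul]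
    _ ≤ _ := by gcongr

theorem mul_le_mul_sq_of_le_exp_mul {M X : ℕ} (hL : 2.7 ≤ L) (hc : 0 ≤ c)
    (hX : (X : ℝ) ≤ Real.exp (-(c + 10) * L) * N) (hM : (N : ℝ) ≤ 32 * M ^ 2) :
    128 * (X : ℝ) ≤ (Real.exp (-L) / 4) ^ 4 * M ^ 2 := by
  have hXN : 1048576 * (X : ℝ) ≤ Real.exp (-4 * L) * N :=
    mul_le_of_le_exp_mul hX (by norm_num)
      (le_exp_mul_of_le_pow (b := 6) 16 (by norm_num) hL (by norm_num) (by norm_num))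
      (by linarith) (by linarith)
  rw [exp_neg_div_four_pow]
  nlinarith [Real.exp_pos (-4 * L)]

theorem div_two_mul_le_natDiv {X m : ℕ} (hm : 0 < m) (hmX : m ≤ X) :
    (X : ℝ) / (2 * m) ≤ (X / m : ℕ) := by
  have hone : 1 ≤ X / m := (Nat.one_le_div_iff hm).2 hmX
  have hlt : X < m * (X / m + 1) := Nat.lt_mul_div_succ X hm
  rw [div_le_iff₀ (by positivity)]
  have : X ≤ X / m * (2 * m) := by nlinarith
  exact_mod_cast this

theorem exists_windowLength {K : ℕ} (hL : 2.7 ≤ L) (hc : 0 ≤ c) (hε : Real.exp (-(c + 2) * L) ≤ ε)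
    (hN : Real.exp ((2 * c + 120) * L) ≤ N) (hK : (K : ℝ) ≤ Real.exp (6 * L)) :
    ∃ X : ℕ, Real.exp (-(c + 10) * L) * N / 2 ≤ X ∧ (X : ℝ) ≤ Real.exp (-(c + 10) * L) * N ∧
      8 * (K : ℝ) ^ 2 ≤ ε * X := by
  have hone : 1 ≤ Real.exp (-(c + 10) * L) * N :=
    (Real.one_le_exp (by linarith : 0 ≤ 2 * L)).trans
      (exp_mul_le_exp_mul_mul hN (by linarith) (by linarith))
  have hhalf := (Nat.div_two_lt_floor hone).le
  have : 0 ≤ ε := (Real.exp_pos _).le.trans hε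
  refine ⟨⌊Real.exp (-(c + 10) * L) * N⌋₊, hhalf, Nat.floor_le (by positivity), ?_⟩
  calc 8 * (K : ℝ) ^ 2 ≤ 8 * Real.exp (6 * L) ^ 2 := by gcongr
    _ = 16 * Real.exp (12 * L) / 2 := by
        rw [exp_mul_pow]
        ring_nf
    _ ≤ Real.exp (2 * L) * Real.exp (12 * L) / 2 := by
        gcongr
        exact le_exp_mul_of_le_pow 3 (by norm_num) hL (by norm_num) (by norm_num)
    _ = Real.exp (14 * L) / 2 := by
        rw [exp_mul_mul_exp_mul]
        norm_num
    _ ≤ Real.exp ((-(c + 2) + -(c + 10)) * L) * N / 2 := by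
        gcongr
        exact exp_mul_le_exp_mul_mul hN (by linarith) (by linarith)
    _ = Real.exp (-(c + 2) * L) * (Real.exp (-(c + 10) * L) * N / 2) := by
        rw [← exp_mul_mul_exp_mul]
        ring
    _ ≤ _ := by gcongr

theorem exp_mul_le_natDiv {K X : ℕ} (hL : 2.7 ≤ L) (hK0 : 0 < K) (hK : (K : ℝ) ≤ Real.exp (6 * L))
    (hKX : 4 * K ^ 2 ≤ X) (hX : Real.exp (-(c + 10) * L) * N / 2 ≤ X) :
    Real.exp (-(c + 24) * L) * N ≤ (X / (2 * K) ^ 2 : ℕ) := by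
  have hK14 : 16 * (K : ℝ) ^ 2 ≤ Real.exp (14 * L) := calc
    16 * (K : ℝ) ^ 2 ≤ Real.exp (2 * L) * Real.exp (6 * L) ^ 2 := by
        gcongr
        exact le_exp_mul_of_le_pow 3 (by norm_num) hL (by norm_num) (by norm_num)
    _ = Real.exp (14 * L) := by
        rw [exp_mul_pow, exp_mul_mul_exp_mul]
        norm_num
  refine le_trans ?_ (div_two_mul_le_natDiv (by positivity) (by linarith : (2 * K) ^ 2 ≤ X))
  rw [le_div_iff₀ (by positivity)]
  push_cast
  calc Real.exp (-(c + 24) * L) * N * (2 * (2 * (K : ℝ)) ^ 2)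
      = Real.exp (-(c + 24) * L) * N * (16 * (K : ℝ) ^ 2) / 2 := by ring
    _ ≤ Real.exp (-(c + 24) * L) * N * Real.exp (14 * L) / 2 := by gcongr
    _ = Real.exp (-(c + 10) * L) * N / 2 := by
        rw [mul_right_comm, exp_mul_mul_exp_mul]
        ring_nf
    _ ≤ X := hX

theorem exists_circleParameters (hL : 2.7 ≤ L) (hc : 0 ≤ c) (hε : Real.exp (-(c + 2) * L) ≤ ε)
    (hε' : ε ≤ 1 / 1000) (hN : Real.exp ((2 * c + 120) * L) ≤ N) :
    ∃ n₀ M K X : ℕ, CircleParameters N n₀ M K X (Real.exp (-L)) ε ∧ (K : ℝ) ≤ Real.exp (6 * L) ∧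
      Real.exp (-(c + 24) * L) * N ≤ n₀ ∧ Real.exp (-(c + 10) * L) * N / 2 ≤ X := by
  have hL0 : 0 ≤ L := by linarith
  have hε0 : 0 < ε := (Real.exp_pos _).trans_le hε
  obtain ⟨K, hK288, hK⟩ := exists_denominatorBound hL
  obtain ⟨X, hyX, hXy, hKX⟩ := exists_windowLength hL hc hε hN hK
  have hN8 : 8 ≤ N := by
    have : (8 : ℝ) ≤ Real.exp ((2 * c + 120) * L) :=
      le_exp_mul_of_le_pow 3 (by linarith) hL (by norm_num) (by norm_num; linarith)
    exact_mod_cast this.trans hN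
  obtain ⟨M, hM8, hM32⟩ := exists_eight_mul_sq_le hN8
  have hM32' : (N : ℝ) ≤ 32 * M ^ 2 := by exact_mod_cast hM32
  have hK0 : 0 < K :=
    Nat.cast_pos.1 (pos_of_mul_pos_left (lt_of_lt_of_le (by norm_num) hK288) (by positivity))
  have hX8 : 8 * (X : ℝ) ≤ Real.exp (0 * L) * N :=
    mul_le_of_le_exp_mul hXy (by norm_num)
      (le_exp_mul_of_le_pow (b := 2) 3 (by norm_num) hL (by norm_num) (by norm_num)) hL0
      (by linarith)
  have hXε : 1 * (X : ℝ) ≤ Real.exp (-(c + 2) * L) * N :=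
    mul_le_of_le_exp_mul (d := 0) hXy zero_le_one (by simp) hL0 (by linarith)
  have hXN : X ≤ N / 8 := by
    rw [zero_mul, Real.exp_zero, one_mul] at hX8
    have : 8 * X ≤ N := by exact_mod_cast hX8
    omega
  have hKX' : 4 * K ^ 2 ≤ X := by
    have : 4 * (K : ℝ) ^ 2 ≤ X := by nlinarith [(Nat.cast_nonneg X : (0 : ℝ) ≤ X)]
    exact_mod_cast this
  refine ⟨X / (2 * K) ^ 2, M, K, X, ⟨by omega, by nlinarith, Real.exp_pos _,
    Real.exp_le_one_iff.2 (by linarith), hε0, hε', (Nat.div_le_self _ _).trans hXN, hM8,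
    le_mul_of_le_mul_sq hL ((Real.exp_le_exp.2 (by gcongr; linarith)).trans hN) hM32', hK288,
    mul_le_mul_sq_of_le_exp_mul hL hc hXy hM32', ?_, Nat.div_mul_le_self _ _, hKX⟩, hK,
    exp_mul_le_natDiv hL hK0 hK hKX' hyX, hyX⟩
  rw [one_mul] at hXε
  exact hXε.trans (by gcongr)

end Parameters

section Increment

variable {c L H : ℝ}

theorem not_dyadicConcentration {B 𝒬 : Finset ℕ} {X Q : ℕ} {ρ : ℝ} (hc : 2000 ≤ c)
    (hL : Real.exp 1 ≤ L) (hQ : c / 2 ≤ Real.log L → (Q : ℝ) ≤ Real.exp (1 / 40 * L)) (hH0 : 0 ≤ H)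
    (hH : L * Real.log L ≤ c * H) (hX : Real.exp (44 * L + H / 2) ≤ X) :
    ¬ DyadicConcentration B 𝒬 X Q L (increment c L / 20) ρ := by
  intro h
  have hL1 : 1 ≤ L := by linarith [Real.exp_one_gt_d9]
  have hmain := moment_main_term_lt hc hL
  have herr : (82944000000 * L ^ 2 * (Q : ℝ) ^ 5) ^ momentOrder c L / X < Real.exp (-L) := by
    rw [div_lt_iff₀ (by exact_mod_cast h.X_pos)]
    calc (82944000000 * L ^ 2 * (Q : ℝ) ^ 5) ^ momentOrder c L ≤ Real.exp (42 * L + H / 2) :=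
          moment_error_le hc hL h.Q_le_exp hQ hH0 hH
      _ < Real.exp (-L) * Real.exp (44 * L + H / 2) := by
          rw [← Real.exp_add]
          exact Real.exp_lt_exp.2 (by linarith)
      _ ≤ Real.exp (-L) * X := by gcongr
  linarith [h.two_mul_exp_neg_le hL1 (one_le_momentOrder (c := c) (by linarith) hL)]

theorem exp_le_of_exp_mul_div_two_le {a b x : ℝ} {N : ℕ} (hN : 0 < N)
    (ha : a + 1 ≤ b * L + Real.log N) (hx : Real.exp (b * L) * N / 2 ≤ x) : Real.exp a ≤ x := by
  refine le_trans ((le_div_iff₀' two_pos).2 ?_) hx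
  calc 2 * Real.exp a ≤ Real.exp 1 * Real.exp a := by
        gcongr
        linarith [Real.exp_one_gt_d9]
    _ = Real.exp (a + 1) := by rw [add_comm a, Real.exp_add]
    _ ≤ Real.exp (b * L + Real.log N) := Real.exp_le_exp.2 ha
    _ = Real.exp (b * L) * N := by rw [Real.exp_add, Real.exp_log (by exact_mod_cast hN)]

theorem exists_density_increment :
    ∃ c ≥ (2000 : ℝ), ∃ P ≥ (0 : ℝ), ∀ L ≥ Real.exp 1, ∀ N : ℕ, 0 < N →
      (2 * c + P + 120) * L ≤ Real.log N → L * Real.log L ≤ c * Real.log N →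
      ∀ A ⊆ Icc 1 N, NoSquareDiff A → (#A : ℝ) = Real.exp (-L) * N →
      ∃ n : ℕ, Real.exp (-(c + 24) * L) * N ≤ n ∧ ∃ A' ⊆ Icc 1 n, NoSquareDiff A' ∧
        (1 + increment c L / 20) * Real.exp (-L) * n < #A' := by
  obtain ⟨L₁, P, hlarge⟩ :=
    exists_forall_dyadicConcentration_le_exp (κ := 1 / 40) (by norm_num)
  obtain ⟨c, hc, hcL₁⟩ : ∃ c : ℝ, 2000 ≤ c ∧ 2 * L₁ ≤ c :=
    ⟨max 2000 (2 * L₁), le_max_left _ _, le_max_right _ _⟩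
  refine ⟨c, hc, max 0 P, le_max_left _ _, fun L hL N hN hNL hLN A hA hsq hcard => ?_⟩
  have hL27 : 2.7 ≤ L := by linarith [Real.exp_one_gt_d9]
  have hcL : 0 ≤ c * L := by nlinarith
  have hPL : 0 ≤ max 0 P * L := by positivity
  obtain ⟨n₀, M, K, X, hp, hK, hn₀, hX⟩ := exists_circleParameters (c := c) hL27 (by linarith)
    (exp_neg_mul_le_increment_div (by linarith) hL) (increment_div_le (by linarith) hL)
    ((Real.le_log_iff_exp_le (by exact_mod_cast hN)).1 (by linarith))
  by_contra! hcon
  have hfree : IncrementFree A N n₀ (Real.exp (-L)) (increment c L / 20) :=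
    ⟨hA, hsq, hcard, hsq.progBound_of_forall_card_le fun n hn =>
      hcon n (hn₀.trans (by exact_mod_cast hn))⟩
  obtain ⟨B, 𝒬, Q, ρ, h⟩ := hfree.exists_dyadicConcentration hp hK
  refine not_dyadicConcentration hc hL (fun hlog => hlarge L ?_ B 𝒬 X Q _ ρ h ?_) (by linarith) hLN
    (exp_le_of_exp_mul_div_two_le hN (by linarith) hX) h
  · linarith [Real.log_le_sub_one_of_pos (by linarith : 0 < L)]
  · have hPL' : P * L ≤ max 0 P * L := by
      gcongr
      exact le_max_right _ _
    exact exp_le_of_exp_mul_div_two_le hN (by linarith) hX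

theorem exists_forall_le_log_log (T : ℝ) :
    ∃ N₀ : ℕ, ∀ N ≥ N₀, 0 < N ∧ 0 < Real.log N ∧ T ≤ Real.log (Real.log N) := by
  have hlog : Filter.Tendsto (fun N : ℕ => Real.log N) Filter.atTop Filter.atTop :=
    Real.tendsto_log_atTop.comp tendsto_natCast_atTop_atTop
  exact Filter.eventually_atTop.1 ((Filter.eventually_gt_atTop 0).and
    ((hlog.eventually_gt_atTop 0).and
      ((Real.tendsto_log_atTop.comp hlog).eventually_ge_atTop T)))

theorem mul_le_of_lt_mul_div_log {T : ℝ} (hc : 0 < c) (hT : 1 ≤ c * T)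
    (hH : c * T ≤ Real.log H) (hL : 0 ≤ L) (h : L < c * H / Real.log H) : T * L ≤ H := by
  rw [lt_div_iff₀ (by linarith)] at h
  refine le_of_mul_le_mul_left ?_ hc
  nlinarith

theorem mul_log_le_of_lt_mul_div_log (hL : 0 < L) (hLH : L ≤ H) (hH : 0 < Real.log H)
    (h : L < c * H / Real.log H) : L * Real.log L ≤ c * H := by
  rw [lt_div_iff₀ hH] at h
  have hlog : L * Real.log L ≤ L * Real.log H := by gcongr
  linarith

theorem mul_exp_neg_rpow_le (hc : 0 ≤ c) (hL : 1 ≤ L) :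
    c * Real.exp (-L) ^ (2 * c + 24) ≤ Real.exp (-(c + 24) * L) := by
  have hexp : c ≤ Real.exp (c * L) := by nlinarith [Real.add_one_le_exp (c * L)]
  rw [← Real.exp_mul]
  calc c * Real.exp (-L * (2 * c + 24))
      ≤ Real.exp (c * L) * Real.exp (-L * (2 * c + 24)) := by gcongr
    _ = _ := by
        rw [← Real.exp_add]
        ring_nf

end Increment

theorem statement_12 :
    ∃ c > (0 : ℝ), ∃ C > (0 : ℝ), ∃ N₀ : ℕ, ∀ N : ℕ, N₀ ≤ N →
      ∀ A : Finset ℕ, A ⊆ Finset.Icc 1 N → NoSquareDiff A →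
      ∀ α : ℝ, α = (A.card : ℝ) / N → 0 < α → α ≤ Real.exp (-Real.exp 1) →
      ∀ ν : ℝ, ν = Real.exp (-c * Real.log (1 / α) / Real.log (Real.log (1 / α))) →
      -- (1) A is sparse
      (c * Real.log N / Real.log (Real.log N) ≤ Real.log (1 / α)) ∨
      -- (2) there is a density increment
      (∃ N' : ℕ, c * α ^ C * N ≤ (N' : ℝ) ∧
        ∃ A' : Finset ℕ, A' ⊆ Finset.Icc 1 N' ∧ NoSquareDiff A' ∧
          (1 + ν / 20) * α ≤ (A'.card : ℝ) / N') := by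
  obtain ⟨c, hc, P, hP, hincrement⟩ := exists_density_increment
  obtain ⟨N₀, hN₀⟩ := exists_forall_le_log_log (c * (2 * c + P + 120))
  refine ⟨c, by linarith, 2 * c + 24, by linarith, N₀, fun N hN A hA hsq α hα hα0 hαe ν hν =>
    or_iff_not_imp_left.2 fun hdense => ?_⟩
  obtain ⟨hN0, hlog, hloglog⟩ := hN₀ N hN
  obtain ⟨L, rfl⟩ : ∃ L, α = Real.exp (-L) := ⟨-Real.log α, by rw [neg_neg, Real.exp_log hα0]⟩
  rw [one_div, ← Real.exp_neg, neg_neg, Real.log_exp] at hdense hν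
  rw [not_le] at hdense
  have hL : Real.exp 1 ≤ L := neg_le_neg_iff.1 (Real.exp_le_exp.1 hαe)
  have hL1 : 1 ≤ L := by linarith [Real.exp_one_gt_d9]
  have hcT : 1 ≤ c * (2 * c + P + 120) := by nlinarith
  have hNL := mul_le_of_lt_mul_div_log (by linarith) hcT hloglog (by linarith) hdense
  have hLN := mul_log_le_of_lt_mul_div_log (by linarith) (by nlinarith) (by linarith) hdense
  have hcard : (#A : ℝ) = Real.exp (-L) * N := by rw [hα, div_mul_cancel₀ _ (by positivity)]
  obtain ⟨n, hn, A', hA', hsq', hlt⟩ := hincrement L hL N hN0 hNL hLN A hA hsq hcard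
  have hn0 : (0 : ℝ) < n := lt_of_lt_of_le (by positivity) hn
  refine ⟨n, le_trans ?_ hn, A', hA', hsq', ?_⟩
  · gcongr
    exact mul_exp_neg_rpow_le (by linarith) hL1
  · rw [hν, le_div_iff₀ hn0]
    exact hlt.le
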